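/- arXiv:1207.2500 — 2 statements merged into one kernel-verified Lean document; each statement's English description precedes it below -/
import Mathlib

section
/- Let n ≥ 1, α > 0 and 1 < q ≤ 1 + α/n. Suppose the coefficients a_{ij} satisfy condition (8) with this α and some c > 0. If (u,v) is an entire weak solution of the inequality u_t − Lu − |u|^{q−1}u ≥ v_t − Lv − |v|^{q−1}v in S such that u ≥ v everywhere in S, then u = v in S. -/
open MeasureTheory Real

noncomputable section

/-- Euclidean space ℝⁿ. -/
abbrev Xn (n : ℕ) : Type := EuclideanSpace ℝ (Fin n)

/-- Points of the half-space `S = (0,∞) × ℝⁿ`. -/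
abbrev Pt (n : ℕ) : Type := ℝ × Xn n

/-- The half-space `S = (0,∞) × ℝⁿ`. -/
def halfSpace (n : ℕ) : Set (Pt n) := {p | 0 < p.1}

/-- Partial derivative in the time variable. -/
noncomputable def pdT {n : ℕ} (w : Pt n → ℝ) (p : Pt n) : ℝ :=
  fderiv ℝ w p (1, 0)

/-- Partial derivative in the space variable `x_j`. -/
noncomputable def pdX {n : ℕ} (w : Pt n → ℝ) (j : Fin n) (p : Pt n) : ℝ :=
  fderiv ℝ w p (0, EuclideanSpace.single j 1)

/-- The odd power function `x ↦ |x|^{q-1} x`. -/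
noncomputable def oddPow (q x : ℝ) : ℝ := |x| ^ (q - 1) * x

/-- `(u,v)` is an entire weak solution of
`u_t − Lu − |u|^{q−1}u ≥ v_t − Lv − |v|^{q−1}v` in `S`. -/
def WeakSolPair {n : ℕ} (a : Fin n → Fin n → Pt n → ℝ) (q : ℝ)
    (u v : Pt n → ℝ) : Prop :=
  ∀ φ : Pt n → ℝ, ContDiff ℝ (⊤ : ℕ∞) φ → HasCompactSupport φ →
    tsupport φ ⊆ halfSpace n → (∀ p, 0 ≤ φ p) →
    ∫ p in halfSpace n,
        (pdT u p * φ p + ∑ i, ∑ j, a i j p * pdX φ i p * pdX u j p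
          - oddPow q (u p) * φ p) ≥
    ∫ p in halfSpace n,
        (pdT v p * φ p + ∑ i, ∑ j, a i j p * pdX φ i p * pdX v j p
          - oddPow q (v p) * φ p)

/-- Condition (8): `𝒜(R) ≤ c R^{2-α}` for all `R > 1`, expressed as an a.e. bound
on the majorant `A` over the region `{(t,x) : t > 0, R/2 < |x| < R}`. -/
def Cond8 {n : ℕ} (A : Pt n → ℝ) (α c : ℝ) : Prop :=
  ∀ R : ℝ, 1 < R →
    ∀ᵐ p ∂(volume.restrict
        {p : Pt n | 0 < p.1 ∧ R / 2 < ‖p.2‖ ∧ ‖p.2‖ < R}),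
      A p ≤ c * R ^ (2 - α)

lemma oddPow_sub_ge {q : ℝ} (hq : 1 < q) {x y : ℝ} (h : y ≤ x) :
    (2:ℝ) ^ (-q) * (x - y) ^ q ≤ oddPow q x - oddPow q y := by
  have hq0 : 0 < q := by linarith
  have key : ∀ x : ℝ, 0 ≤ x → oddPow q x = x ^ q := by
    intro x hx
    unfold oddPow
    rw [abs_of_nonneg hx]
    rcases hx.eq_or_lt with rfl | hx
    · rw [Real.zero_rpow hq0.ne']; simp
    · rw [← Real.rpow_add_one hx.ne']; congr 1; ring
  have keyn : ∀ x : ℝ, oddPow q (-x) = - oddPow q x := by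
    intro x; unfold oddPow; rw [abs_neg]; ring
  have h2 : (2:ℝ) ^ (-q) ≤ 1 := by
    apply Real.rpow_le_one_of_one_le_of_nonpos <;> linarith
  have pos : ∀ x y : ℝ, 0 ≤ y → y ≤ x → (2:ℝ) ^ (-q) * (x - y) ^ q ≤ oddPow q x - oddPow q y := by
    intro x y hy hxy
    rw [key x (hy.trans hxy), key y hy]
    have := Real.add_rpow_le_rpow_add (sub_nonneg.2 hxy) hy hq.le
    rw [sub_add_cancel] at this
    have h3 : 0 ≤ (x - y) ^ q := Real.rpow_nonneg (sub_nonneg.2 hxy) _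
    nlinarith
  rcases le_total 0 y with hy | hy
  · exact pos x y hy h
  rcases le_total x 0 with hx | hx
  · have := pos (-y) (-x) (by linarith) (by linarith)
    rw [keyn, keyn] at this
    rw [show -y - -x = x - y by ring] at this
    linarith
  · have e1 : oddPow q y = - (-y) ^ q := by
      rw [← key (-y) (by linarith), keyn, neg_neg]
    rw [e1, key x hx]
    have hpx : 0 ≤ x ^ q := Real.rpow_nonneg hx _
    have hpy : 0 ≤ (-y) ^ q := Real.rpow_nonneg (by linarith) _
    have h4 : (2:ℝ) ^ (-q) * (x - y) ^ q = ((x - y) / 2) ^ q := by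
      rw [Real.div_rpow (by linarith) (by norm_num), Real.rpow_neg (by norm_num)]
      ring
    rw [h4]
    rcases le_total x (-y) with h5 | h5
    · have : ((x - y) / 2) ^ q ≤ (-y) ^ q :=
        Real.rpow_le_rpow (by linarith) (by linarith) hq0.le
      linarith
    · have : ((x - y) / 2) ^ q ≤ x ^ q :=
        Real.rpow_le_rpow (by linarith) (by linarith) hq0.le
      linarith

instance volPt_isAddHaar (n : ℕ) : (volume : Measure (Pt n)).IsAddHaarMeasure := by
  rw [Measure.volume_eq_prod]; infer_instance

open Set Filter Topology Convolution in
lemma smooth_approx {n : ℕ} (φ : Pt n → ℝ) (hφ : ContDiff ℝ 1 φ) (hc : HasCompactSupport φ)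
    (hpos : ∀ p, 0 ≤ φ p) {δ : ℝ} (hδ : 0 < δ) :
    ∃ ψ : Pt n → ℝ, ContDiff ℝ (⊤ : ℕ∞) ψ ∧ tsupport ψ ⊆ Metric.cthickening δ (tsupport φ) ∧
      (∀ p, 0 ≤ ψ p) ∧ (∀ p, |ψ p - φ p| ≤ δ) ∧
      (∀ p, ‖fderiv ℝ ψ p - fderiv ℝ φ p‖ ≤ δ) := by
  have huc1 : UniformContinuous φ := hc.uniformContinuous_of_continuous hφ.continuous
  have hcf : Continuous (fderiv ℝ φ) := hφ.continuous_fderiv one_ne_zero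
  have huc2 : UniformContinuous (fderiv ℝ φ) :=
    (hc.fderiv ℝ).uniformContinuous_of_continuous hcf
  obtain ⟨δ1, hδ1, h1⟩ := Metric.uniformContinuous_iff.1 huc1 δ hδ
  obtain ⟨δ2, hδ2, h2⟩ := Metric.uniformContinuous_iff.1 huc2 δ hδ
  set r : ℝ := min δ (min δ1 δ2) with hr
  have hr0 : 0 < r := by positivity
  let b : ContDiffBump (0 : Pt n) := ⟨r/2, r, by positivity, by linarith⟩
  have hbr : b.rOut = r := rfl
  set f : Pt n → ℝ := b.normed volume with hf
  have hfc : HasCompactSupport f := b.hasCompactSupport_normed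
  have hfs : ContDiff ℝ (⊤ : ℕ∞) f := b.contDiff_normed
  have hfl : LocallyIntegrable f volume := hfs.continuous.locallyIntegrable
  refine ⟨f ⋆[ContinuousLinearMap.lsmul ℝ ℝ, volume] φ, ?_, ?_, ?_, ?_, ?_⟩
  · exact hfc.contDiff_convolution_left _ hfs hφ.continuous.locallyIntegrable
  · apply closure_minimal _ Metric.isClosed_cthickening
    intro x hx
    obtain ⟨y, hy, z, hz, rfl⟩ := support_convolution_subset _ hx
    rw [hf, b.support_normed_eq, hbr] at hy
    apply Metric.mem_cthickening_of_dist_le _ z _ _ (subset_tsupport _ hz)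
    simp only [Metric.mem_ball, dist_zero_right] at hy
    rw [dist_eq_norm, add_sub_cancel_right]
    exact hy.le.trans (min_le_left _ _)
  · intro p
    unfold convolution
    apply integral_nonneg
    intro t
    simp only [ContinuousLinearMap.lsmul_apply, smul_eq_mul]
    exact mul_nonneg (b.nonneg_normed _) (hpos _)
  · intro p
    rw [← Real.dist_eq]
    apply b.dist_normed_convolution_le hφ.continuous.aestronglyMeasurable
    intro x hx
    apply (h1 _).le
    rw [hbr] at hx
    exact (Metric.mem_ball.1 hx).trans_le ((min_le_right _ _).trans (min_le_left _ _))
  · intro p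
    rw [(hc.hasFDerivAt_convolution_right (ContinuousLinearMap.lsmul ℝ ℝ) hfl hφ p).fderiv]
    have e : (f ⋆[(ContinuousLinearMap.lsmul ℝ ℝ : ℝ →L[ℝ] ℝ →L[ℝ] ℝ).precompR (Pt n), volume]
        fderiv ℝ φ) p = (f ⋆[ContinuousLinearMap.lsmul ℝ ℝ, volume] fderiv ℝ φ) p := by
      unfold convolution
      congr 1
    rw [e, ← dist_eq_norm]
    apply b.dist_normed_convolution_le hcf.aestronglyMeasurable
    intro x hx
    apply (h2 _).le
    rw [hbr] at hx
    exact (Metric.mem_ball.1 hx).trans_le ((min_le_right _ _).trans (min_le_right _ _))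

lemma isOpen_halfSpace (n : ℕ) : IsOpen (halfSpace n) :=
  isOpen_lt continuous_const continuous_fst

lemma continuous_mul_cutoff {n : ℕ} {g ζ : Pt n → ℝ} (hg : ContinuousOn g (halfSpace n))
    (hζ : Continuous ζ) (hs : tsupport ζ ⊆ halfSpace n) : Continuous (fun p => g p * ζ p) := by
  apply continuous_of_tsupport
  intro p hp
  have hp' : p ∈ halfSpace n := hs (tsupport_mul_subset_right hp)
  exact (hg.continuousAt ((isOpen_halfSpace n).mem_nhds hp')).mul hζ.continuousAt

lemma contDiff_mul_cutoff {n : ℕ} {g ζ : Pt n → ℝ} (hg : ContDiffOn ℝ 1 g (halfSpace n))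
    (hζ : ContDiff ℝ 1 ζ) (hs : tsupport ζ ⊆ halfSpace n) :
    ContDiff ℝ 1 (fun p => g p * ζ p) := by
  rw [contDiff_iff_contDiffAt]
  intro p
  by_cases hp : p ∉ tsupport ζ
  · have : (fun p => g p * ζ p) =ᶠ[nhds p] fun _ => 0 := by
      filter_upwards [notMem_tsupport_iff_eventuallyEq.1 hp] with x hx
      simp [hx]
    exact contDiffAt_const.congr_of_eventuallyEq this
  rw [not_not] at hp
  have hp' : p ∈ halfSpace n := hs hp
  exact (hg.contDiffAt ((isOpen_halfSpace n).mem_nhds hp')).mul hζ.contDiffAt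

lemma pdT_continuousOn {n : ℕ} {g : Pt n → ℝ} (hg : ContDiffOn ℝ 1 g (halfSpace n)) :
    ContinuousOn (pdT g) (halfSpace n) :=
  (hg.continuousOn_fderiv_of_isOpen (isOpen_halfSpace n) le_rfl).clm_apply continuousOn_const

lemma pdX_continuousOn {n : ℕ} {g : Pt n → ℝ} (hg : ContDiffOn ℝ 1 g (halfSpace n)) (j : Fin n) :
    ContinuousOn (pdX g j) (halfSpace n) :=
  (hg.continuousOn_fderiv_of_isOpen (isOpen_halfSpace n) le_rfl).clm_apply continuousOn_const

lemma pdT_continuous {n : ℕ} {g : Pt n → ℝ} (hg : ContDiff ℝ 1 g) :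
    Continuous (pdT g) :=
  (hg.continuous_fderiv one_ne_zero).clm_apply continuous_const

lemma pdX_continuous {n : ℕ} {g : Pt n → ℝ} (hg : ContDiff ℝ 1 g) (j : Fin n) :
    Continuous (pdX g j) :=
  (hg.continuous_fderiv one_ne_zero).clm_apply continuous_const

lemma setIntegral_halfSpace_eq {n : ℕ} {g ζ : Pt n → ℝ} (hs : tsupport ζ ⊆ halfSpace n) :
    ∫ p in halfSpace n, g p * ζ p = ∫ p, g p * ζ p := by
  apply setIntegral_eq_integral_of_forall_compl_eq_zero
  intro p hp
  rw [image_eq_zero_of_notMem_tsupport (fun h => hp (hs h)), mul_zero]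

lemma tsupport_pdT {n : ℕ} (ζ : Pt n → ℝ) : tsupport (pdT ζ) ⊆ tsupport ζ :=
  tsupport_fderiv_apply_subset ℝ _

lemma tsupport_pdX {n : ℕ} (ζ : Pt n → ℝ) (j : Fin n) : tsupport (pdX ζ j) ⊆ tsupport ζ :=
  tsupport_fderiv_apply_subset ℝ _

lemma ibp {n : ℕ} {g ζ : Pt n → ℝ} (hg : ContDiffOn ℝ 1 g (halfSpace n))
    (hζ : ContDiff ℝ 1 ζ) (hc : HasCompactSupport ζ) (hs : tsupport ζ ⊆ halfSpace n) :
    ∫ p in halfSpace n, pdT g p * ζ p = - ∫ p in halfSpace n, g p * pdT ζ p := by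
  rw [setIntegral_halfSpace_eq hs, setIntegral_halfSpace_eq ((tsupport_pdT ζ).trans hs)]
  have hc' : HasCompactSupport (pdT ζ) := hc.mono' (subset_closure.trans (tsupport_pdT ζ))
  have := integral_mul_fderiv_eq_neg_fderiv_mul_of_integrable (μ := (volume : Measure (Pt n)))
    (f := g) (g := ζ) (v := ((1:ℝ), (0 : Xn n))) ?_ ?_ ?_ ?_ ?_
  · unfold pdT
    rw [this, neg_neg]
  · exact (continuous_mul_cutoff (pdT_continuousOn hg) hζ.continuous hs).integrable_of_hasCompactSupport
      hc.mul_left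
  · exact (continuous_mul_cutoff hg.continuousOn (pdT_continuous hζ)
      ((tsupport_pdT ζ).trans hs)).integrable_of_hasCompactSupport hc'.mul_left
  · exact (continuous_mul_cutoff hg.continuousOn hζ.continuous hs).integrable_of_hasCompactSupport
      hc.mul_left
  · intro x hx
    exact ((hg.contDiffAt ((isOpen_halfSpace n).mem_nhds (hs hx))).differentiableAt one_ne_zero)
  · intro x _
    exact (hζ.differentiable one_ne_zero) x

lemma norm_single_pt {n : ℕ} (j : Fin n) :
    ‖((0:ℝ), (EuclideanSpace.single j (1:ℝ) : Xn n))‖ = 1 := by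
  simp [Prod.norm_def]

lemma test_integrableOn_compact {n : ℕ} {g0 : Pt n → ℝ} {b : Fin n → Pt n → ℝ} {K : Set (Pt n)}
    (hK : IsCompact K)
    (hg0 : IntegrableOn g0 K) (hb : ∀ i, IntegrableOn (b i) K)
    {φ : Pt n → ℝ} (hφ : ContDiff ℝ 1 φ) :
    IntegrableOn (fun p => g0 p * φ p + ∑ i, b i p * pdX φ i p) K := by
  refine (hg0.mul_continuousOn hφ.continuous.continuousOn hK).add ?_
  refine integrable_finsetSum _ (fun i _ => ?_)
  exact (hb i).mul_continuousOn (pdX_continuous hφ i).continuousOn hK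

lemma test_eq_zero {n : ℕ} (g0 : Pt n → ℝ) (b : Fin n → Pt n → ℝ)
    {φ : Pt n → ℝ} {p : Pt n} (hp : p ∉ tsupport φ) :
    g0 p * φ p + ∑ i, b i p * pdX φ i p = 0 := by
  rw [image_eq_zero_of_notMem_tsupport hp]
  have : ∀ i, pdX φ i p = 0 := fun i =>
    image_eq_zero_of_notMem_tsupport (fun h => hp (tsupport_pdX φ i h))
  simp [this]

lemma test_integrableOn {n : ℕ} {g0 : Pt n → ℝ} {b : Fin n → Pt n → ℝ}
    (hg0 : ∀ K : Set (Pt n), IsCompact K → K ⊆ halfSpace n → IntegrableOn g0 K)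
    (hb : ∀ i, ∀ K : Set (Pt n), IsCompact K → K ⊆ halfSpace n → IntegrableOn (b i) K)
    {φ : Pt n → ℝ} (hφ : ContDiff ℝ 1 φ) (hc : HasCompactSupport φ)
    (hs : tsupport φ ⊆ halfSpace n) :
    IntegrableOn (fun p => g0 p * φ p + ∑ i, b i p * pdX φ i p) (halfSpace n) := by
  have hK : IsCompact (tsupport φ) := hc
  have := test_integrableOn_compact hK (hg0 _ hK hs) (fun i => hb i _ hK hs) hφ
  refine this.of_forall_sdiff_eq_zero (isOpen_halfSpace n).measurableSet ?_
  intro p hp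
  exact test_eq_zero g0 b hp.2

lemma weak_C1_of_smooth {n : ℕ} {g0 : Pt n → ℝ} {b : Fin n → Pt n → ℝ}
    (hg0 : ∀ K : Set (Pt n), IsCompact K → K ⊆ halfSpace n → IntegrableOn g0 K)
    (hb : ∀ i, ∀ K : Set (Pt n), IsCompact K → K ⊆ halfSpace n → IntegrableOn (b i) K)
    (hsm : ∀ φ : Pt n → ℝ, ContDiff ℝ (⊤ : ℕ∞) φ → HasCompactSupport φ →
      tsupport φ ⊆ halfSpace n → (∀ p, 0 ≤ φ p) →
      0 ≤ ∫ p in halfSpace n, (g0 p * φ p + ∑ i, b i p * pdX φ i p))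
    {φ : Pt n → ℝ} (hφ : ContDiff ℝ 1 φ) (hc : HasCompactSupport φ)
    (hs : tsupport φ ⊆ halfSpace n) (hpos : ∀ p, 0 ≤ φ p) :
    0 ≤ ∫ p in halfSpace n, (g0 p * φ p + ∑ i, b i p * pdX φ i p) := by
  have hKφ : IsCompact (tsupport φ) := hc
  obtain ⟨δ0, hδ0, hsub⟩ := hKφ.exists_cthickening_subset_open (isOpen_halfSpace n) hs
  set K := Metric.cthickening δ0 (tsupport φ) with hKdef
  have hK : IsCompact K := hKφ.cthickening
  have hred : ∀ ψ : Pt n → ℝ, tsupport ψ ⊆ K →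
      ∫ p in halfSpace n, (g0 p * ψ p + ∑ i, b i p * pdX ψ i p)
        = ∫ p in K, (g0 p * ψ p + ∑ i, b i p * pdX ψ i p) := by
    intro ψ hψ
    refine setIntegral_eq_of_subset_of_forall_sdiff_eq_zero
      (isOpen_halfSpace n).measurableSet hsub ?_
    intro p hp
    exact test_eq_zero g0 b (fun h => hp.2 (hψ h))
  set M := ∫ p in K, (|g0 p| + ∑ i, |b i p|) with hM
  have hiM : IntegrableOn (fun p => |g0 p| + ∑ i, |b i p|) K := by
    refine (hg0 K hK hsub).abs.add ?_
    exact integrable_finsetSum _ (fun i _ => (hb i K hK hsub).abs)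
  have hM0 : 0 ≤ M := integral_nonneg (fun p => by positivity)
  rw [hred φ (Metric.self_subset_cthickening _)]
  set I := ∫ p in K, (g0 p * φ p + ∑ i, b i p * pdX φ i p) with hI
  have key : ∀ δ : ℝ, 0 < δ → δ ≤ δ0 → 0 ≤ I + δ * M := by
    intro δ hδ hδ'
    obtain ⟨ψ, h1, h2, h3, h4, h5⟩ := smooth_approx φ hφ hc hpos hδ
    have h2' : tsupport ψ ⊆ K := h2.trans (Metric.cthickening_mono hδ' _)
    have hψ1 : ContDiff ℝ 1 ψ := h1.of_le (by exact_mod_cast le_top)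
    have h6 := hsm ψ h1 (hK.of_isClosed_subset isClosed_closure h2') (h2'.trans hsub) h3
    rw [hred ψ h2'] at h6
    refine h6.trans ?_
    rw [hI, hM, ← integral_const_mul, ← integral_add
      (test_integrableOn_compact hK (hg0 K hK hsub) (fun i => hb i K hK hsub) hφ)
      (hiM.const_mul δ)]
    refine integral_mono
      (test_integrableOn_compact hK (hg0 K hK hsub) (fun i => hb i K hK hsub) hψ1)
      ((test_integrableOn_compact hK (hg0 K hK hsub) (fun i => hb i K hK hsub) hφ).add
        (hiM.const_mul δ)) ?_
    intro p
    have e0 : g0 p * ψ p ≤ g0 p * φ p + δ * |g0 p| := by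
      have := le_abs_self (g0 p * (ψ p - φ p))
      rw [abs_mul] at this
      nlinarith [h4 p, abs_nonneg (g0 p)]
    have e1 : ∀ i, b i p * pdX ψ i p ≤ b i p * pdX φ i p + δ * |b i p| := by
      intro i
      have h7 : |pdX ψ i p - pdX φ i p| ≤ δ := by
        have := (fderiv ℝ ψ p - fderiv ℝ φ p).le_opNorm ((0:ℝ), (EuclideanSpace.single i (1:ℝ) : Xn n))
        rw [norm_single_pt, mul_one] at this
        exact this.trans (h5 p)
      have := le_abs_self (b i p * (pdX ψ i p - pdX φ i p))
      rw [abs_mul] at this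
      nlinarith [abs_nonneg (b i p)]
    have e2 := Finset.sum_le_sum (fun i (_ : i ∈ Finset.univ) => e1 i)
    rw [Finset.sum_add_distrib, ← Finset.mul_sum] at e2
    show g0 p * ψ p + ∑ i, b i p * pdX ψ i p ≤ g0 p * φ p + ∑ i, b i p * pdX φ i p + δ * (|g0 p| + ∑ i, |b i p|)
    linarith
  by_contra hneg
  push Not at hneg
  have hd : 0 < min δ0 (-I / (2 * (M + 1))) := lt_min hδ0 (by apply div_pos <;> linarith)
  have h8 := key _ hd (min_le_left _ _)
  have h9 : min δ0 (-I / (2 * (M + 1))) * M ≤ -I / (2 * (M + 1)) * M :=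
    mul_le_mul_of_nonneg_right (min_le_right _ _) hM0
  have h10 : -I / (2 * (M + 1)) * M ≤ -I / 2 := by
    rw [div_mul_eq_mul_div, div_le_div_iff₀ (by linarith) (by norm_num)]
    nlinarith
  linarith

lemma continuous_oddPow {q : ℝ} (hq : 1 < q) : Continuous (oddPow q) := by
  unfold oddPow
  refine Continuous.mul ?_ continuous_id
  exact continuous_abs.rpow_const (fun x => Or.inr (by linarith))

lemma mul_locInt {n : ℕ} {a g : Pt n → ℝ} (ha : Measurable a)
    (hb : ∀ K : Set (Pt n), IsCompact K → K ⊆ halfSpace n → ∃ M, ∀ p ∈ K, |a p| ≤ M)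
    (hg : ContinuousOn g (halfSpace n)) (K : Set (Pt n)) (hK : IsCompact K)
    (hs : K ⊆ halfSpace n) : IntegrableOn (fun p => a p * g p) K := by
  obtain ⟨M, hM⟩ := hb K hK hs
  refine IntegrableOn.mul_continuousOn ?_ (hg.mono hs) hK
  refine Measure.integrableOn_of_bounded (M := M) hK.measure_lt_top.ne ha.aestronglyMeasurable ?_
  exact (ae_restrict_iff' hK.measurableSet).2 (Filter.Eventually.of_forall hM)

lemma weak_C1 {n : ℕ} {q : ℝ} (hq1 : 1 < q)
    {a : Fin n → Fin n → Pt n → ℝ}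
    (ha_meas : ∀ i j, Measurable (a i j))
    (ha_locbdd : ∀ i j, ∀ K : Set (Pt n), IsCompact K → K ⊆ halfSpace n →
      ∃ M, ∀ p ∈ K, |a i j p| ≤ M)
    {u v : Pt n → ℝ}
    (hu : ContDiffOn ℝ 1 u (halfSpace n)) (hv : ContDiffOn ℝ 1 v (halfSpace n))
    (hsol : WeakSolPair a q u v)
    {φ : Pt n → ℝ} (hφ : ContDiff ℝ 1 φ) (hc : HasCompactSupport φ)
    (hs : tsupport φ ⊆ halfSpace n) (hpos : ∀ p, 0 ≤ φ p) :
    IntegrableOn (fun p => (pdT (u - v) p - (oddPow q (u p) - oddPow q (v p))) * φ p +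
      ∑ i, (∑ j, a i j p * pdX (u - v) j p) * pdX φ i p) (halfSpace n) ∧
    0 ≤ ∫ p in halfSpace n, ((pdT (u - v) p - (oddPow q (u p) - oddPow q (v p))) * φ p +
      ∑ i, (∑ j, a i j p * pdX (u - v) j p) * pdX φ i p) := by
  have hint0 : ∀ w : Pt n → ℝ, ContDiffOn ℝ 1 w (halfSpace n) → ∀ K : Set (Pt n), IsCompact K →
      K ⊆ halfSpace n → IntegrableOn (fun p => pdT w p - oddPow q (w p)) K := by
    intro w hw K hK hKs
    refine ContinuousOn.integrableOn_compact hK ?_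
    exact ((pdT_continuousOn hw).sub ((continuous_oddPow hq1).comp_continuousOn hw.continuousOn)).mono hKs
  have hintb : ∀ w : Pt n → ℝ, ContDiffOn ℝ 1 w (halfSpace n) → ∀ i, ∀ K : Set (Pt n),
      IsCompact K → K ⊆ halfSpace n → IntegrableOn (fun p => ∑ j, a i j p * pdX w j p) K := by
    intro w hw i K hK hKs
    exact integrable_finsetSum _ (fun j _ => mul_locInt (ha_meas i j) (ha_locbdd i j)
      (pdX_continuousOn hw j) K hK hKs)
  have huv : ContDiffOn ℝ 1 (u - v) (halfSpace n) := hu.sub hv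
  have hg0 : ∀ K : Set (Pt n), IsCompact K → K ⊆ halfSpace n →
      IntegrableOn (fun p => pdT (u - v) p - (oddPow q (u p) - oddPow q (v p))) K := by
    intro K hK hKs
    refine ContinuousOn.integrableOn_compact hK ?_
    exact ((pdT_continuousOn huv).sub (((continuous_oddPow hq1).comp_continuousOn
      hu.continuousOn).sub ((continuous_oddPow hq1).comp_continuousOn
      hv.continuousOn))).mono hKs
  refine ⟨test_integrableOn hg0 (hintb _ huv) hφ hc hs,
    weak_C1_of_smooth hg0 (hintb _ huv) ?_ hφ hc hs hpos⟩
  intro φ h1 h2 h3 h4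
  have hφ1 : ContDiff ℝ 1 φ := h1.of_le (by exact_mod_cast le_top)
  have h5 := hsol φ h1 h2 h3 h4
  have hfd : ∀ p ∈ halfSpace n, fderiv ℝ (u - v) p = fderiv ℝ u p - fderiv ℝ v p := by
    intro p hp
    have hn := (isOpen_halfSpace n).mem_nhds hp
    exact fderiv_sub ((hu.contDiffAt hn).differentiableAt one_ne_zero)
      ((hv.contDiffAt hn).differentiableAt one_ne_zero)
  have e : ∀ w : Pt n → ℝ, (fun p => pdT w p * φ p + ∑ i, ∑ j, a i j p * pdX φ i p * pdX w j p
          - oddPow q (w p) * φ p) = fun p => (pdT w p - oddPow q (w p)) * φ p +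
          ∑ i, (∑ j, a i j p * pdX w j p) * pdX φ i p := by
    intro w
    ext p
    have : ∑ i, ∑ j, a i j p * pdX φ i p * pdX w j p =
        ∑ i, (∑ j, a i j p * pdX w j p) * pdX φ i p := by
      refine Finset.sum_congr rfl (fun i _ => ?_)
      rw [Finset.sum_mul]
      exact Finset.sum_congr rfl (fun j _ => by ring)
    rw [this]; ring
  rw [e, e] at h5
  have h6 := sub_nonneg.2 h5
  rw [← integral_sub (test_integrableOn (hint0 u hu) (hintb u hu) hφ1 h2 h3)
    (test_integrableOn (hint0 v hv) (hintb v hv) hφ1 h2 h3)] at h6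
  refine h6.trans (le_of_eq ?_)
  refine setIntegral_congr_fun (isOpen_halfSpace n).measurableSet ?_
  intro p hp
  have e1 : pdT (u - v) p = pdT u p - pdT v p := by
    unfold pdT; rw [hfd p hp]; rfl
  have e2 : ∀ j, pdX (u - v) j p = pdX u j p - pdX v j p := by
    intro j; unfold pdX; rw [hfd p hp]; rfl
  simp only [e1, e2, mul_sub, Finset.sum_sub_distrib, sub_mul]
  ring

lemma quad_young {n : ℕ} (a : Fin n → Fin n → ℝ) (hsym : ∀ i j, a i j = a j i)
    (hpos : ∀ ξ : Xn n, 0 ≤ ∑ i, ∑ j, a i j * ξ i * ξ j)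
    (W X : Fin n → ℝ) (x b m : ℝ) (hm : 0 < m) :
    b * x * ∑ i, (∑ j, a i j * W j) * X i ≤
      m * x ^ 2 * (∑ i, (∑ j, a i j * W j) * W i) +
        b ^ 2 / (4 * m) * ∑ i, ∑ j, a i j * X i * X j := by
  have h := hpos (WithLp.toLp 2 (fun i => x * W i - b / (2 * m) * X i))
  simp only at h
  have e : ∑ i, ∑ j, a i j * (x * W i - b / (2 * m) * X i) * (x * W j - b / (2 * m) * X j)
      = x ^ 2 * (∑ i, (∑ j, a i j * W j) * W i)
        - b / (2 * m) * x * (∑ i, (∑ j, a i j * W j) * X i)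
        - b / (2 * m) * x * (∑ i, ∑ j, a i j * W i * X j)
        + (b / (2 * m)) ^ 2 * ∑ i, ∑ j, a i j * X i * X j := by
    simp only [Finset.mul_sum, Finset.sum_mul, ← Finset.sum_sub_distrib, ← Finset.sum_add_distrib]
    refine Finset.sum_congr rfl (fun i _ => Finset.sum_congr rfl (fun j _ => ?_))
    ring
  have e2 : ∑ i, ∑ j, a i j * W i * X j = ∑ i, (∑ j, a i j * W j) * X i := by
    rw [Finset.sum_comm]
    refine Finset.sum_congr rfl (fun i _ => ?_)
    rw [Finset.sum_mul]
    exact Finset.sum_congr rfl (fun j _ => by rw [hsym j i])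
  rw [e, e2] at h
  have h2 := mul_nonneg hm.le h
  have e3 : m * (x ^ 2 * (∑ i, (∑ j, a i j * W j) * W i)
        - b / (2 * m) * x * (∑ i, (∑ j, a i j * W j) * X i)
        - b / (2 * m) * x * (∑ i, (∑ j, a i j * W j) * X i)
        + (b / (2 * m)) ^ 2 * ∑ i, ∑ j, a i j * X i * X j) =
      m * x ^ 2 * (∑ i, (∑ j, a i j * W j) * W i) +
        b ^ 2 / (4 * m) * (∑ i, ∑ j, a i j * X i * X j) -
        b * x * ∑ i, (∑ j, a i j * W j) * X i := by
    field_simp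
    ring
  rw [e3] at h2
  linarith

lemma fderiv_comp_apply {n : ℕ} {w : Pt n → ℝ} {h : ℝ → ℝ} {h' : ℝ} {p : Pt n}
    (hw : DifferentiableAt ℝ w p) (hh : HasDerivAt h h' (w p)) (e : Pt n) :
    fderiv ℝ (fun p => h (w p)) p e = h' * fderiv ℝ w p e := by
  have := hh.comp_hasFDerivAt p hw.hasFDerivAt
  have h2 := this.fderiv
  change fderiv ℝ (h ∘ w) p e = _
  rw [h2]; simp

lemma fderiv_mul_apply' {n : ℕ} {f g : Pt n → ℝ} {p : Pt n}
    (hf : DifferentiableAt ℝ f p) (hg : DifferentiableAt ℝ g p) (e : Pt n) :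
    fderiv ℝ (fun p => f p * g p) p e = fderiv ℝ f p e * g p + f p * fderiv ℝ g p e := by
  rw [fderiv_fun_mul hf hg]; simp; ring

set_option maxHeartbeats 1600000 in
lemma energy {n : ℕ} {q : ℝ} (hq1 : 1 < q)
    {a : Fin n → Fin n → Pt n → ℝ}
    (ha_symm : ∀ i j, ∀ᵐ p ∂(volume.restrict (halfSpace n)), a i j p = a j i p)
    (hform : ∀ᵐ p ∂(volume.restrict (halfSpace n)), ∀ ξ : Xn n,
      0 ≤ ∑ i, ∑ j, a i j p * ξ i * ξ j)
    {w g : Pt n → ℝ} (hw : ContDiffOn ℝ 1 w (halfSpace n))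
    (hw0 : ∀ p ∈ halfSpace n, 0 ≤ w p)
    (hg : ∀ p ∈ halfSpace n, (2:ℝ) ^ (-q) * (w p) ^ q ≤ g p)
    (hweak : ∀ φ : Pt n → ℝ, ContDiff ℝ 1 φ → HasCompactSupport φ →
      tsupport φ ⊆ halfSpace n → (∀ p, 0 ≤ φ p) →
      IntegrableOn (fun p => (pdT w p - g p) * φ p +
        ∑ i, (∑ j, a i j p * pdX w j p) * pdX φ i p) (halfSpace n) ∧
      0 ≤ ∫ p in halfSpace n, ((pdT w p - g p) * φ p +
        ∑ i, (∑ j, a i j p * pdX w j p) * pdX φ i p))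
    {s : ℝ} (hs0 : 0 < s) (hs1 : s ≤ 1 / 2) (N : ℕ) (hN : 1 ≤ N)
    {T χ : Pt n → ℝ} (hT : ContDiff ℝ 1 T) (hχ : ContDiff ℝ 1 χ)
    (hT0 : ∀ p, 0 ≤ T p) (hTx : ∀ i p, pdX T i p = 0) (hTt : ∀ p, 0 ≤ pdT T p)
    (hχ0 : ∀ p, 0 ≤ χ p) (hχ1 : ∀ p, χ p ≤ 1)
    (hc : HasCompactSupport (fun p => T p * χ p))
    (hs : tsupport (fun p => T p * χ p) ⊆ halfSpace n)
    {L ε : ℝ} (hε : 0 < ε) {D : Set (Pt n)} (hD : MeasurableSet D)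
    (hL : 0 ≤ L)
    (hLt : ∀ p ∈ halfSpace n, |pdT χ p| ≤ D.indicator (fun _ => L) p)
    (hLx : ∀ᵐ p ∂(volume.restrict (halfSpace n)),
      ∑ i, ∑ j, a i j p * pdX χ i p * pdX χ j p ≤ D.indicator (fun _ => L) p) :
    (2:ℝ) ^ (-q) * ∫ p in halfSpace n, (w p) ^ q * (T p * χ p ^ (2 * N + 2)) ≤
      (3 * (2 * N + 2) + (2 * N + 2) ^ 2 / s) * (ε * L) *
        ∫ p in halfSpace n, D.indicator
          (fun p => (1 + w p / ε) ^ (1 + s) * (T p * χ p ^ (2 * N))) p := by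
  have hopen := isOpen_halfSpace n
  have hSm := hopen.measurableSet
  -- supports
  have hsup : ∀ k : ℕ, 1 ≤ k → tsupport (fun p => T p * χ p ^ k) ⊆ tsupport (fun p => T p * χ p) := by
    intro k hk
    apply closure_mono
    intro p hp h
    apply hp
    simp only at h ⊢
    rcases mul_eq_zero.1 h with h | h
    · simp [h]
    · simp only [h]; rw [zero_pow (by omega), mul_zero]
  have hcont : ∀ k : ℕ, ContDiff ℝ 1 (fun p => T p * χ p ^ k) := fun k => hT.mul (hχ.pow k)
  have hcomp : ∀ k : ℕ, 1 ≤ k → HasCompactSupport (fun p => T p * χ p ^ k) := fun k hk =>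
    IsCompact.of_isClosed_subset hc isClosed_closure (hsup k hk)
  have hIntg : ∀ (k : ℕ) (f : Pt n → ℝ), 1 ≤ k → ContinuousOn f (halfSpace n) →
      IntegrableOn (fun p => f p * (T p * χ p ^ k)) (halfSpace n) := by
    intro k f hk hf
    exact ((continuous_mul_cutoff hf (hcont k).continuous
      ((hsup k hk).trans hs)).integrable_of_hasCompactSupport (hcomp k hk).mul_left).integrableOn
  set ζ : Pt n → ℝ := fun p => T p * χ p ^ (2 * N + 2) with hζ
  have hζ1 : ContDiff ℝ 1 ζ := hcont _
  have hζc : HasCompactSupport ζ := hcomp _ (by omega)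
  have hζs : tsupport ζ ⊆ halfSpace n := (hsup _ (by omega)).trans hs
  have hζ0 : ∀ p, 0 ≤ ζ p := fun p => mul_nonneg (hT0 p) (pow_nonneg (hχ0 p) _)
  have hz1 : ∀ p ∈ halfSpace n, 1 ≤ 1 + w p / ε := by
    intro p hp
    have := div_nonneg (hw0 p hp) hε.le
    linarith
  have hz : ContDiffOn ℝ 1 (fun p => 1 + w p / ε) (halfSpace n) :=
    contDiffOn_const.add (hw.div_const ε)
  have hzr : ∀ r : ℝ, ContDiffOn ℝ 1 (fun p => (1 + w p / ε) ^ r) (halfSpace n) := by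
    intro r
    apply hz.rpow_const_of_ne
    intro p hp
    linarith [hz1 p hp]
  set f : Pt n → ℝ := fun p => 1 + (1 + w p / ε) ^ (-s) with hf
  set H : Pt n → ℝ := fun p => w p + ε * ((1 + w p / ε) ^ (1 - s) / (1 - s)) with hH
  have hf1 : ContDiffOn ℝ 1 f (halfSpace n) := contDiffOn_const.add (hzr _)
  have hH1 : ContDiffOn ℝ 1 H (halfSpace n) := hw.add (contDiffOn_const.mul ((hzr _).div_const _))
  set φ : Pt n → ℝ := fun p => f p * ζ p with hφ
  have hφ1 : ContDiff ℝ 1 φ := contDiff_mul_cutoff hf1 hζ1 hζs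
  have hφc : HasCompactSupport φ := hζc.mul_left
  have hφs : tsupport φ ⊆ halfSpace n := (tsupport_mul_subset_right).trans hζs
  have hfb : ∀ p ∈ halfSpace n, 1 ≤ f p ∧ f p ≤ 2 := by
    intro p hp
    have h1 : 0 ≤ (1 + w p / ε) ^ (-s) := Real.rpow_nonneg (by linarith [hz1 p hp]) _
    have h2 : (1 + w p / ε) ^ (-s) ≤ 1 :=
      Real.rpow_le_one_of_one_le_of_nonpos (hz1 p hp) (by linarith)
    simp only [hf]
    constructor <;> linarith
  have hφ0 : ∀ p, 0 ≤ φ p := by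
    intro p
    by_cases hp : p ∈ halfSpace n
    · exact mul_nonneg (by linarith [(hfb p hp).1]) (hζ0 p)
    · have : ζ p = 0 := image_eq_zero_of_notMem_tsupport (fun h => hp (hζs h))
      simp [hφ, this]
  obtain ⟨hI, hI0⟩ := hweak φ hφ1 hφc hφs hφ0
  have hibp := ibp hH1 hζ1 hζc hζs
  have hiH1 : IntegrableOn (fun p => pdT H p * ζ p) (halfSpace n) :=
    hIntg _ _ (by omega) (pdT_continuousOn hH1)
  have hiH2 : IntegrableOn (fun p => H p * pdT ζ p) (halfSpace n) := by
    have hc' : HasCompactSupport (pdT ζ) := hζc.mono' (subset_closure.trans (tsupport_pdT ζ))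
    exact ((continuous_mul_cutoff hH1.continuousOn (pdT_continuous hζ1)
      ((tsupport_pdT ζ).trans hζs)).integrable_of_hasCompactSupport hc'.mul_left).integrableOn
  have hiw : IntegrableOn (fun p => (w p) ^ q * (T p * χ p ^ (2 * N + 2))) (halfSpace n) :=
    hIntg _ _ (by omega) (hw.continuousOn.rpow_const (fun p _ => Or.inr (by linarith)))
  have hir : IntegrableOn (fun p => D.indicator
          (fun p => (1 + w p / ε) ^ (1 + s) * (T p * χ p ^ (2 * N))) p) (halfSpace n) :=
    (hIntg (2 * N) _ (by omega) (hzr _).continuousOn).indicator hD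
  set C : ℝ := (3 * (2 * N + 2) + (2 * N + 2) ^ 2 / s) with hC
  have main : ∫ p in halfSpace n, ((((pdT w p - g p) * φ p +
        ∑ i, (∑ j, a i j p * pdX w j p) * pdX φ i p) - pdT H p * ζ p) - H p * pdT ζ p) ≤
      ∫ p in halfSpace n, (C * (ε * L) * D.indicator
          (fun p => (1 + w p / ε) ^ (1 + s) * (T p * χ p ^ (2 * N))) p -
          (2:ℝ) ^ (-q) * ((w p) ^ q * (T p * χ p ^ (2 * N + 2)))) := by
    refine integral_mono_ae ((hI.sub hiH1).sub hiH2) ((hir.const_mul _).sub (hiw.const_mul _)) ?_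
    have hsym' : ∀ᵐ p ∂(volume.restrict (halfSpace n)), ∀ i j, a i j p = a j i p := by
      rw [ae_all_iff]; intro i; rw [ae_all_iff]; exact ha_symm i
    filter_upwards [hsym', hform, hLx, ae_restrict_mem hSm] with p hsymp hformp hLxp hp
    have hnb := hopen.mem_nhds hp
    have dw : DifferentiableAt ℝ w p := (hw.contDiffAt hnb).differentiableAt one_ne_zero
    have df : DifferentiableAt ℝ f p := (hf1.contDiffAt hnb).differentiableAt one_ne_zero
    have dT : DifferentiableAt ℝ T p := hT.differentiable one_ne_zero p
    have dχ : DifferentiableAt ℝ χ p := hχ.differentiable one_ne_zero p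
    have dζ : DifferentiableAt ℝ ζ p := hζ1.differentiable one_ne_zero p
    set z := 1 + w p / ε with hzdef
    have hzp : 1 ≤ z := hz1 p hp
    have hz0 : 0 < z := by linarith
    have hlin : HasDerivAt (fun y : ℝ => 1 + y / ε) (1 / ε) (w p) :=
      ((hasDerivAt_id _).div_const ε).const_add 1
    have df_e : ∀ e, fderiv ℝ f p e = (-(s / ε * z ^ (-s - 1))) * fderiv ℝ w p e := by
      intro e
      refine fderiv_comp_apply (h := fun y => 1 + (1 + y / ε) ^ (-s)) dw ?_ e
      have := (hlin.rpow_const (p := -s) (Or.inl hz0.ne')).const_add 1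
      refine this.congr_deriv ?_
      rw [hzdef]
      ring
    have dH_e : ∀ e, fderiv ℝ H p e = f p * fderiv ℝ w p e := by
      intro e
      refine fderiv_comp_apply (h := fun y => y + ε * ((1 + y / ε) ^ (1 - s) / (1 - s))) dw ?_ e
      have := (hasDerivAt_id (w p)).add
        (((hlin.rpow_const (p := 1 - s) (Or.inl hz0.ne')).div_const (1 - s)).const_mul ε)
      refine this.congr_deriv ?_
      have h1s : (1 - s) ≠ 0 := by linarith
      rw [show (1 - s - 1) = -s by ring]
      simp only [hf, ← hzdef]
      field_simp
    have dζ_e : ∀ e, fderiv ℝ ζ p e = fderiv ℝ T p e * χ p ^ (2 * N + 2) +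
        T p * ((2 * N + 2) * χ p ^ (2 * N + 1) * fderiv ℝ χ p e) := by
      intro e
      have h1 := fderiv_mul_apply' dT (dχ.pow (2 * N + 2)) e
      have h2 : fderiv ℝ (fun p => χ p ^ (2 * N + 2)) p e =
          (2 * N + 2) * χ p ^ (2 * N + 1) * fderiv ℝ χ p e := by
        refine fderiv_comp_apply (h := fun y => y ^ (2 * N + 2)) dχ ?_ e
        have := hasDerivAt_pow (2 * N + 2) (χ p)
        refine this.congr_deriv ?_
        push_cast
        rfl
      rw [← h2]
      exact h1
    have dφ_e : ∀ e, fderiv ℝ φ p e = (-(s / ε * z ^ (-s - 1))) * fderiv ℝ w p e * ζ p +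
        f p * fderiv ℝ ζ p e := by
      intro e
      rw [← df_e]
      exact fderiv_mul_apply' df dζ e
    have epT : pdT H p = f p * pdT w p := dH_e _
    have eζT : pdT ζ p = pdT T p * χ p ^ (2 * N + 2) +
        T p * ((2 * N + 2) * χ p ^ (2 * N + 1) * pdT χ p) := dζ_e _
    have eφX : ∀ i, pdX φ i p = -(s / ε * z ^ (-s - 1)) * ζ p * pdX w i p +
        f p * T p * (2 * N + 2) * χ p ^ (2 * N + 1) * pdX χ i p := by
      intro i
      have h1 : pdX φ i p = _ := dφ_e _
      have h2 : pdX ζ i p = _ := dζ_e _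
      change pdX φ i p = _ * pdX w i p * ζ p + f p * pdX ζ i p at h1
      change pdX ζ i p = pdX T i p * _ + _ * (_ * pdX χ i p) at h2
      rw [h1, h2, hTx]
      ring
    have hsum : ∑ i, (∑ j, a i j p * pdX w j p) * pdX φ i p =
        -(s / ε * z ^ (-s - 1)) * ζ p * (∑ i, (∑ j, a i j p * pdX w j p) * pdX w i p) +
        f p * T p * (2 * N + 2) * χ p ^ (2 * N + 1) *
          ∑ i, (∑ j, a i j p * pdX w j p) * pdX χ i p := by
      rw [Finset.mul_sum, Finset.mul_sum, ← Finset.sum_add_distrib]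
      refine Finset.sum_congr rfl (fun i _ => ?_)
      rw [eφX]; ring
    set m := s / ε * z ^ (-s - 1) with hm
    have hm0 : 0 < m := mul_pos (div_pos hs0 hε) (Real.rpow_pos_of_pos hz0 _)
    have hy := quad_young (fun i j => a i j p) hsymp hformp (fun i => pdX w i p)
      (fun i => pdX χ i p) (χ p) (f p * (2 * N + 2)) m hm0
    set Qww := ∑ i, (∑ j, a i j p * pdX w j p) * pdX w i p
    set Qwx := ∑ i, (∑ j, a i j p * pdX w j p) * pdX χ i p
    set Qxx := ∑ i, ∑ j, a i j p * pdX χ i p * pdX χ j p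
    set P := T p * χ p ^ (2 * N) with hP
    have hP0 : 0 ≤ P := mul_nonneg (hT0 p) (pow_nonneg (hχ0 p) _)
    have hy2 := mul_le_mul_of_nonneg_left hy hP0
    set i1 := D.indicator (fun _ => L) p with hi1
    have hi10 : 0 ≤ i1 := Set.indicator_nonneg (fun _ _ => hL) p
    have hind : L * D.indicator (fun p => (1 + w p / ε) ^ (1 + s) * (T p * χ p ^ (2 * N))) p =
        i1 * (z ^ (1 + s) * P) := by
      by_cases hpD : p ∈ D
      · simp [hi1, hpD, hP, hzdef]
      · simp [hi1, hpD]
    have hZ0 : 0 < z ^ (1 + s) := Real.rpow_pos_of_pos hz0 _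
    obtain ⟨hfl, hfu⟩ := hfb p hp
    have hkpos : (0:ℝ) ≤ 2 * N + 2 := by positivity
    have hb2 : (f p * (2 * N + 2)) ^ 2 / (4 * m) ≤ (2 * N + 2) ^ 2 / s * (ε * z ^ (1 + s)) := by
      have hm' : m = s / (ε * z ^ (1 + s)) := by
        rw [hm, show -s - 1 = -(1 + s) by ring, Real.rpow_neg hz0.le]
        field_simp
      rw [hm']
      have : (f p * (2 * N + 2)) ^ 2 / (4 * (s / (ε * z ^ (1 + s)))) =
        (f p) ^ 2 / 4 * ((2 * N + 2) ^ 2 / s * (ε * z ^ (1 + s))) := by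
        field_simp
      rw [this]
      have h5 : (f p) ^ 2 / 4 ≤ 1 := by
        have := pow_le_pow_left₀ (by linarith) hfu 2
        linarith
      have h6 : 0 ≤ ((2 * N + 2 : ℝ) ^ 2 / s * (ε * z ^ (1 + s))) := by positivity
      exact mul_le_of_le_one_left h6 h5
    have hQxx0 : 0 ≤ Qxx := hformp (WithLp.toLp 2 (fun i => pdX χ i p))
    have hA1 : P * ((f p * (2 * N + 2)) ^ 2 / (4 * m) * Qxx) ≤
        P * ((2 * N + 2) ^ 2 / s * (ε * z ^ (1 + s)) * i1) := by
      apply mul_le_mul_of_nonneg_left _ hP0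
      have h6 : 0 ≤ ((2 * N + 2 : ℝ) ^ 2 / s * (ε * z ^ (1 + s))) := by positivity
      exact mul_le_mul hb2 hLxp hQxx0 h6
    -- time part
    have hHb : 0 ≤ H p ∧ H p ≤ 3 * (ε * z ^ (1 + s)) := by
      have h1 : 0 ≤ z ^ (1 - s) := Real.rpow_nonneg hz0.le _
      have h2 : z ^ (1 - s) ≤ z ^ (1 + s) := Real.rpow_le_rpow_of_exponent_le hzp (by linarith)
      have h3 : z ≤ z ^ (1 + s) := by
        have := Real.rpow_le_rpow_of_exponent_le hzp (show (1:ℝ) ≤ 1 + s by linarith)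
        rwa [Real.rpow_one] at this
      have h4 : w p ≤ ε * z := by
        rw [hzdef]; field_simp; linarith
      have h5 : z ^ (1 - s) / (1 - s) ≤ 2 * z ^ (1 - s) := by
        rw [div_le_iff₀ (by linarith)]; nlinarith
      have h6 : 0 ≤ z ^ (1 - s) / (1 - s) := div_nonneg h1 (by linarith)
      have h7 := hw0 p hp
      simp only [hH, ← hzdef]
      constructor
      · positivity
      · have h8 := mul_le_mul_of_nonneg_left h3 hε.le
        have h9 := mul_le_mul_of_nonneg_left (h5.trans (mul_le_mul_of_nonneg_left h2 zero_le_two)) hε.le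
        linarith
    have hA2 : -(H p * pdT ζ p) ≤ P * (3 * (2 * N + 2) * (ε * z ^ (1 + s)) * i1) := by
      rw [eζT]
      have h1 : 0 ≤ H p * (pdT T p * χ p ^ (2 * N + 2)) :=
        mul_nonneg hHb.1 (mul_nonneg (hTt p) (pow_nonneg (hχ0 p) _))
      have h2 : -pdT χ p ≤ i1 := (neg_le_abs _).trans (hLt p hp)
      have h3 : χ p * (- pdT χ p) ≤ i1 := by
        exact (mul_le_mul_of_nonneg_left h2 (hχ0 p)).trans (mul_le_of_le_one_left hi10 (hχ1 p))
      have h4 : H p * (χ p * (- pdT χ p)) ≤ 3 * (ε * z ^ (1 + s)) * i1 :=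
        (mul_le_mul_of_nonneg_left h3 hHb.1).trans (mul_le_mul_of_nonneg_right hHb.2 hi10)
      have h5 := mul_le_mul_of_nonneg_left h4 (mul_nonneg hP0 hkpos)
      have h6 : H p * (T p * ((2 * N + 2) * χ p ^ (2 * N + 1) * pdT χ p)) =
        -(P * (2 * N + 2) * (H p * (χ p * (- pdT χ p)))) := by
        rw [hP, pow_succ]; ring
      rw [mul_add, h6]
      linarith
    have hA3 : (2:ℝ) ^ (-q) * (w p ^ q * ζ p) ≤ g p * φ p := by
      have h1 := hg p hp
      have h2 : 0 ≤ (2:ℝ) ^ (-q) * w p ^ q :=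
        mul_nonneg (Real.rpow_nonneg (by norm_num) _) (Real.rpow_nonneg (hw0 p hp) _)
      have h3 : ζ p ≤ φ p := by
        exact le_mul_of_one_le_left (hζ0 p) hfl
      rw [← mul_assoc]
      exact mul_le_mul h1 h3 (hζ0 p) (h2.trans h1)
    have hζP : ζ p = P * χ p ^ 2 := by simp only [hζ, hP]; ring
    have hind' : C * (ε * L) * D.indicator
          (fun p => (1 + w p / ε) ^ (1 + s) * (T p * χ p ^ (2 * N))) p =
          C * ε * (i1 * (z ^ (1 + s) * P)) := by
      rw [← hind]; ring
    show ((pdT w p - g p) * φ p + ∑ i, (∑ j, a i j p * pdX w j p) * pdX φ i p) -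
        pdT H p * ζ p - H p * pdT ζ p ≤ C * (ε * L) * D.indicator
          (fun p => (1 + w p / ε) ^ (1 + s) * (T p * χ p ^ (2 * N))) p -
          (2:ℝ) ^ (-q) * (w p ^ q * ζ p)
    rw [hind', hsum, epT, hC]
    have hφp : φ p = f p * ζ p := rfl
    have e5 : f p * T p * (2 * N + 2) * χ p ^ (2 * N + 1) * Qwx =
        P * (f p * (2 * N + 2) * χ p * Qwx) := by
      rw [hP, pow_succ]; ring
    rw [e5]
    have e6 : -m * ζ p * Qww = - (P * (m * χ p ^ 2 * Qww)) := by rw [hζP]; ring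
    rw [e6]
    replace hy2 := hy2.trans_eq (mul_add P _ _)
    have e7 : (3 * (2 * N + 2 : ℝ) + (2 * N + 2) ^ 2 / s) * ε * (i1 * (z ^ (1 + s) * P)) =
        P * (3 * (2 * N + 2) * (ε * z ^ (1 + s)) * i1) +
        P * ((2 * N + 2) ^ 2 / s * (ε * z ^ (1 + s)) * i1) := by ring
    rw [e7]
    have e8 : pdT w p * φ p = f p * pdT w p * ζ p := by rw [hφp]; ring
    rw [sub_mul, e8]
    linarith
  have hI' : IntegrableOn (fun p => ((pdT w p - g p) * φ p +
        ∑ i, (∑ j, a i j p * pdX w j p) * pdX φ i p) - pdT H p * ζ p) (halfSpace n) := hI.sub hiH1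
  rw [integral_sub hI' hiH2, integral_sub hI hiH1,
    integral_sub (hir.const_mul _) (hiw.const_mul _), integral_const_mul, integral_const_mul,
    hibp] at main
  linarith

lemma smoothTransition_mono' : Monotone Real.smoothTransition := by
  intro x y hxy
  have hmono : ∀ x y : ℝ, x ≤ y → expNegInvGlue x ≤ expNegInvGlue y := by
    intro x y hxy
    rcases le_or_gt x 0 with hx | hx
    · rw [expNegInvGlue.zero_of_nonpos hx]; exact expNegInvGlue.nonneg y
    · have hy : 0 < y := by linarith
      simp only [expNegInvGlue, not_le.2 hx, not_le.2 hy, if_false]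
      apply Real.exp_le_exp.2
      have : y⁻¹ ≤ x⁻¹ := inv_anti₀ hx hxy
      linarith
  have h1 := hmono x y hxy
  have h2 := hmono (1 - y) (1 - x) (by linarith)
  unfold Real.smoothTransition
  rw [div_le_div_iff₀ (Real.smoothTransition.pos_denom x) (Real.smoothTransition.pos_denom y)]
  have h3 := expNegInvGlue.nonneg x
  have h4 := expNegInvGlue.nonneg (1 - y)
  nlinarith

lemma exists_timeCutoff (n : ℕ) {τ : ℝ} (hτ : 0 < τ) :
    ∃ T : Pt n → ℝ, ContDiff ℝ 1 T ∧ (∀ p, 0 ≤ T p) ∧ (∀ p, T p ≤ 1) ∧ (∀ i p, pdX T i p = 0) ∧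
      (∀ p, 0 ≤ pdT T p) ∧ (∀ p, p.1 ≤ τ → T p = 0) ∧ (∀ p, τ < p.1 → 0 < T p) := by
  have hS : ContDiff ℝ 1 Real.smoothTransition := Real.smoothTransition.contDiff
  have hfd : ∀ (p : Pt n) (e : Pt n),
      fderiv ℝ (fun p : Pt n => Real.smoothTransition (p.1 / τ - 1)) p e =
        deriv Real.smoothTransition (p.1 / τ - 1) * (1 / τ) * e.1 := by
    intro p e
    have h1 : HasDerivAt (fun t : ℝ => Real.smoothTransition (t / τ - 1))
        (deriv Real.smoothTransition (p.1 / τ - 1) * (1 / τ)) p.1 :=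
      ((hS.differentiable one_ne_zero) _).hasDerivAt.comp p.1
        (((hasDerivAt_id _).div_const τ).sub_const 1)
    rw [fderiv_comp_apply (w := fun p : Pt n => p.1)
      (h := fun t : ℝ => Real.smoothTransition (t / τ - 1)) differentiableAt_fst h1 e]
    congr 1
    have : fderiv ℝ (fun p : Pt n => p.1) p = ContinuousLinearMap.fst ℝ ℝ (Xn n) := fderiv_fst
    rw [this]; rfl
  refine ⟨fun p => Real.smoothTransition (p.1 / τ - 1), ?_, ?_, ?_, ?_, ?_, ?_, ?_⟩
  · exact hS.comp ((contDiff_fst.div_const τ).sub contDiff_const)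
  · exact fun p => Real.smoothTransition.nonneg _
  · exact fun p => Real.smoothTransition.le_one _
  · intro i p
    unfold pdX; rw [hfd]; simp
  · intro p
    unfold pdT; rw [hfd]
    have := smoothTransition_mono'.deriv_nonneg (x := p.1 / τ - 1)
    simp only [mul_one]
    positivity
  · intro p hp
    apply Real.smoothTransition.zero_of_nonpos
    have := (div_le_one hτ).2 hp
    linarith
  · intro p hp
    apply Real.smoothTransition.pos_of_pos
    have := (one_lt_div hτ).2 hp
    linarith

lemma exists_rho : ∃ (ρ : ℝ → ℝ) (M : ℝ), 0 < M ∧ ContDiff ℝ 1 ρ ∧ (∀ y, 0 ≤ ρ y) ∧ (∀ y, ρ y ≤ 1) ∧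
    (∀ y, y ≤ 1 → ρ y = 1) ∧ (∀ y, 2 ≤ y → ρ y = 0) ∧ (∀ y, y ≤ 1 → deriv ρ y = 0) ∧
    (∀ y, 2 ≤ y → deriv ρ y = 0) ∧ (∀ y, |deriv ρ y| ≤ M) := by
  set ρ : ℝ → ℝ := fun y => Real.smoothTransition (2 - y) with hρ
  have hc : ContDiff ℝ 1 ρ := Real.smoothTransition.contDiff.comp (contDiff_const.sub contDiff_id)
  have h0 : ∀ y, 0 ≤ ρ y := fun y => Real.smoothTransition.nonneg _
  have h1 : ∀ y, ρ y ≤ 1 := fun y => Real.smoothTransition.le_one _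
  have e1 : ∀ y, y ≤ 1 → ρ y = 1 := fun y hy =>
    Real.smoothTransition.one_of_one_le (by linarith)
  have e0 : ∀ y, 2 ≤ y → ρ y = 0 := fun y hy =>
    Real.smoothTransition.zero_of_nonpos (by linarith)
  have d1 : ∀ y, y ≤ 1 → deriv ρ y = 0 := by
    intro y hy
    apply IsLocalMax.deriv_eq_zero
    refine Filter.Eventually.of_forall (fun x => ?_)
    rw [e1 y hy]; exact h1 x
  have d2 : ∀ y, 2 ≤ y → deriv ρ y = 0 := by
    intro y hy
    apply IsLocalMin.deriv_eq_zero
    refine Filter.Eventually.of_forall (fun x => ?_)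
    rw [e0 y hy]; exact h0 x
  have hcs : HasCompactSupport (deriv ρ) := by
    refine HasCompactSupport.intro (K := Set.Icc 1 2) isCompact_Icc ?_
    intro y hy
    by_cases h : y ≤ 1
    · exact d1 y h
    · apply d2
      by_contra h'
      exact hy ⟨by linarith, by linarith⟩
  obtain ⟨M, hM⟩ := (hc.continuous_deriv le_rfl).bounded_above_of_compact_support hcs
  refine ⟨ρ, |M| + 1, by positivity, hc, h0, h1, e1, e0, d1, d2, ?_⟩
  intro y
  have := hM y
  rw [Real.norm_eq_abs] at this
  linarith [le_abs_self M]

/-- The transition region. -/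
def regD (n : ℕ) (α R : ℝ) : Set (Pt n) :=
  {p | p.1 ≤ 2 * R ^ α ∧ ‖p.2‖ ≤ 2 * R ∧ (R ^ α < p.1 ∨ R < ‖p.2‖)}

lemma measurableSet_regD (n : ℕ) (α R : ℝ) : MeasurableSet (regD n α R) := by
  have h1 : Measurable (fun p : Pt n => p.1) := measurable_fst
  have h2 : Measurable (fun p : Pt n => ‖p.2‖) := measurable_snd.norm
  exact (measurableSet_le h1 measurable_const).inter ((measurableSet_le h2 measurable_const).inter
    ((measurableSet_lt measurable_const h1).union (measurableSet_lt measurable_const h2)))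

lemma volume_regD (n : ℕ) {α : ℝ} : ∃ V : ℝ, 0 < V ∧ ∀ R : ℝ, 1 ≤ R →
    volume (halfSpace n ∩ regD n α R) < ⊤ ∧
    volume.real (halfSpace n ∩ regD n α R) ≤ V * R ^ (n + α) := by
  refine ⟨2 * 2 ^ n * (volume.real (Metric.ball (0 : Xn n) 1) + 1), by positivity, ?_⟩
  intro R hR
  have hR0 : 0 < R := by linarith
  have hRa : 0 < R ^ α := Real.rpow_pos_of_pos hR0 _
  have hsub : halfSpace n ∩ regD n α R ⊆
      Set.Icc 0 (2 * R ^ α) ×ˢ Metric.closedBall (0 : Xn n) (2 * R) := by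
    rintro p ⟨hp, hp2, hp3, -⟩
    exact ⟨⟨le_of_lt hp, hp2⟩, by simpa using hp3⟩
  have hcomp : IsCompact (Set.Icc 0 (2 * R ^ α) ×ˢ Metric.closedBall (0 : Xn n) (2 * R)) :=
    isCompact_Icc.prod (isCompact_closedBall _ _)
  refine ⟨(measure_mono hsub).trans_lt hcomp.measure_lt_top, ?_⟩
  refine (measureReal_mono hsub hcomp.measure_lt_top.ne).trans ?_
  rw [Measure.volume_eq_prod, measureReal_prod_prod, Real.volume_real_Icc_of_le (by positivity),
    Measure.addHaar_real_closedBall _ _ (by positivity), finrank_euclideanSpace, Fintype.card_fin,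
    Real.rpow_add hR0, Real.rpow_natCast, mul_pow]
  have : 0 ≤ R ^ n * R ^ α := by positivity
  nlinarith [show (0:ℝ) ≤ 2 * 2 ^ n * (R ^ n * R ^ α) by positivity]

lemma exists_cutoff {n : ℕ} {α c : ℝ} (hc : 0 < c)
    {a : Fin n → Fin n → Pt n → ℝ} {A : Pt n → ℝ}
    (hform : ∀ᵐ p ∂(volume.restrict (halfSpace n)), ∀ ξ : Xn n,
      0 ≤ ∑ i, ∑ j, a i j p * ξ i * ξ j ∧
      ∑ i, ∑ j, a i j p * ξ i * ξ j ≤ A p * ‖ξ‖ ^ 2)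
    (hcond8 : Cond8 A α c) :
    ∃ L0 : ℝ, 0 < L0 ∧ ∀ R : ℝ, 1 ≤ R → ∃ χ : Pt n → ℝ, ContDiff ℝ 1 χ ∧
      (∀ p, 0 ≤ χ p) ∧ (∀ p, χ p ≤ 1) ∧
      (∀ p, p.1 ≤ R ^ α → ‖p.2‖ ≤ R → χ p = 1) ∧
      (∀ p, χ p ≠ 0 → p.1 ≤ 2 * R ^ α ∧ ‖p.2‖ ≤ 2 * R) ∧
      (∀ p ∈ halfSpace n, |pdT χ p| ≤ (regD n α R).indicator (fun _ => L0 * R ^ (-α)) p) ∧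
      (∀ᵐ p ∂(volume.restrict (halfSpace n)),
        ∑ i, ∑ j, a i j p * pdX χ i p * pdX χ j p ≤
          (regD n α R).indicator (fun _ => L0 * R ^ (-α)) p) := by
  obtain ⟨ρ, M, hM, hρc, h0, h1, e1, e0, d1, d2, hb⟩ := exists_rho
  have h2p : (0:ℝ) < 2 ^ (2 - α) := Real.rpow_pos_of_pos (by norm_num) _
  refine ⟨M + 16 * c * M ^ 2 * 2 ^ (2 - α), by positivity, ?_⟩
  intro R hR
  have hR0 : 0 < R := by linarith
  have hRa : 0 < R ^ α := Real.rpow_pos_of_pos hR0 _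
  have hRna : 0 < R ^ (-α) := Real.rpow_pos_of_pos hR0 _
  set L := (M + 16 * c * M ^ 2 * 2 ^ (2 - α)) * R ^ (-α) with hL
  have hL0 : 0 ≤ L := by positivity
  set f : Pt n → ℝ := fun p => ρ (p.1 / R ^ α) with hf
  set g : Pt n → ℝ := fun p => ρ (‖p.2‖ ^ 2 / R ^ 2) with hg
  have hfc : ContDiff ℝ 1 f := hρc.comp (contDiff_fst.div_const _)
  have hgc : ContDiff ℝ 1 g := hρc.comp ((contDiff_snd.norm_sq ℝ).div_const _)
  have hfd : ∀ p e : Pt n, fderiv ℝ f p e = deriv ρ (p.1 / R ^ α) * (1 / R ^ α) * e.1 := by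
    intro p e
    have h1 : HasDerivAt (fun t : ℝ => ρ (t / R ^ α))
        (deriv ρ (p.1 / R ^ α) * (1 / R ^ α)) p.1 :=
      ((hρc.differentiable one_ne_zero) _).hasDerivAt.comp p.1
        ((hasDerivAt_id _).div_const (R ^ α))
    have h2 := fderiv_comp_apply (w := fun p : Pt n => p.1)
      (h := fun t : ℝ => ρ (t / R ^ α)) differentiableAt_fst h1 e
    have h3 : fderiv ℝ (fun p : Pt n => p.1) p = ContinuousLinearMap.fst ℝ ℝ (Xn n) := fderiv_fst
    rw [h3] at h2
    exact h2
  have hgd : ∀ p e : Pt n, fderiv ℝ g p e =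
      deriv ρ (‖p.2‖ ^ 2 / R ^ 2) * (1 / R ^ 2) * (2 * inner ℝ p.2 e.2) := by
    intro p e
    have h1 : HasDerivAt (fun t : ℝ => ρ (t / R ^ 2))
        (deriv ρ (‖p.2‖ ^ 2 / R ^ 2) * (1 / R ^ 2)) (‖p.2‖ ^ 2) :=
      ((hρc.differentiable one_ne_zero) _).hasDerivAt.comp (‖p.2‖ ^ 2)
        ((hasDerivAt_id _).div_const (R ^ 2))
    have h3 : HasFDerivAt (fun p : Pt n => ‖p.2‖ ^ 2)
        (2 • (innerSL ℝ p.2).comp (ContinuousLinearMap.snd ℝ ℝ (Xn n))) p :=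
      HasFDerivAt.norm_sq hasFDerivAt_snd
    have h2 := fderiv_comp_apply (w := fun p : Pt n => ‖p.2‖ ^ 2)
      (h := fun t : ℝ => ρ (t / R ^ 2)) h3.differentiableAt h1 e
    rw [h3.fderiv] at h2
    refine h2.trans ?_
    simp
  have hχd : ∀ p e : Pt n, fderiv ℝ (fun p => f p * g p) p e =
      fderiv ℝ f p e * g p + f p * fderiv ℝ g p e := fun p e =>
    fderiv_mul_apply' (hfc.differentiable one_ne_zero p) (hgc.differentiable one_ne_zero p) e
  have hf0 : ∀ p : Pt n, 2 * R ^ α < p.1 → f p = 0 := by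
    intro p hp
    apply e0
    rw [le_div_iff₀ hRa]; exact hp.le
  have hglarge : ∀ p : Pt n, 2 * R ≤ ‖p.2‖ → 2 ≤ ‖p.2‖ ^ 2 / R ^ 2 := by
    intro p hp
    rw [le_div_iff₀ (by positivity)]
    nlinarith
  have hg0 : ∀ p : Pt n, 2 * R ≤ ‖p.2‖ → g p = 0 := fun p hp => e0 _ (hglarge p hp)
  refine ⟨fun p => f p * g p, hfc.mul hgc, fun p => mul_nonneg (h0 _) (h0 _),
    fun p => mul_le_one₀ (h1 _) (h0 _) (h1 _), ?_, ?_, ?_, ?_⟩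
  · intro p hp1 hp2
    have e2 : f p = 1 := e1 _ ((div_le_one hRa).2 hp1)
    have e3 : g p = 1 := e1 _ ((div_le_one (by positivity)).2
      (pow_le_pow_left₀ (norm_nonneg _) hp2 2))
    simp only [e2, e3, mul_one]
  · intro p hp
    constructor
    · by_contra h
      exact hp (by simp only [hf0 p (not_le.1 h), zero_mul])
    · by_contra h
      exact hp (by simp only [hg0 p (not_le.1 h).le, mul_zero])
  · intro p hp
    have e4 : pdT (fun p => f p * g p) p = deriv ρ (p.1 / R ^ α) * (1 / R ^ α) * g p := by
      unfold pdT
      rw [hχd, hfd, hgd]; simp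
    rw [e4]
    by_cases hD : p ∈ regD n α R
    · rw [Set.indicator_of_mem hD, abs_mul, abs_mul, abs_of_nonneg (h0 _ : 0 ≤ g p),
        abs_of_nonneg (by positivity : 0 ≤ 1 / R ^ α)]
      have e5 : 1 / R ^ α = R ^ (-α) := by rw [Real.rpow_neg hR0.le, one_div]
      rw [e5]
      have i1 : |deriv ρ (p.1 / R ^ α)| * R ^ (-α) * g p ≤ |deriv ρ (p.1 / R ^ α)| * R ^ (-α) :=
        mul_le_of_le_one_right (by positivity) (h1 _)
      have i2 : |deriv ρ (p.1 / R ^ α)| * R ^ (-α) ≤ M * R ^ (-α) :=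
        mul_le_mul_of_nonneg_right (hb _) hRna.le
      have i3 : M * R ^ (-α) ≤ L := by
        rw [hL]
        apply mul_le_mul_of_nonneg_right _ hRna.le
        have : 0 ≤ 16 * c * M ^ 2 * 2 ^ (2 - α) := by positivity
        linarith
      linarith
    · rw [Set.indicator_of_notMem hD]
      apply le_of_eq
      rw [abs_eq_zero]
      by_cases c1 : p.1 ≤ 2 * R ^ α
      · by_cases c2 : ‖p.2‖ ≤ 2 * R
        · have c3 : ¬ (R ^ α < p.1 ∨ R < ‖p.2‖) := fun h => hD ⟨c1, c2, h⟩
          push Not at c3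
          rw [d1 _ ((div_le_one hRa).2 c3.1)]; ring
        · rw [hg0 p (not_le.1 c2).le]; ring
      · rw [d2 _ ((le_div_iff₀ hRa).2 (not_le.1 c1).le)]; ring
  · have hc8 := hcond8 (2 * R) (by linarith)
    have hmeas : MeasurableSet {p : Pt n | 0 < p.1 ∧ 2 * R / 2 < ‖p.2‖ ∧ ‖p.2‖ < 2 * R} := by
      have m1 : Measurable (fun p : Pt n => p.1) := measurable_fst
      have m2 : Measurable (fun p : Pt n => ‖p.2‖) := measurable_snd.norm
      exact (measurableSet_lt measurable_const m1).inter
        ((measurableSet_lt measurable_const m2).inter (measurableSet_lt m2 measurable_const))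
    rw [ae_restrict_iff' hmeas] at hc8
    filter_upwards [hform, ae_restrict_of_ae hc8, ae_restrict_mem (isOpen_halfSpace n).measurableSet]
      with p hfp hAp hp
    set k := f p * (deriv ρ (‖p.2‖ ^ 2 / R ^ 2) * (2 / R ^ 2)) with hk
    have e4 : ∀ i, pdX (fun p => f p * g p) i p = (k • p.2) i := by
      intro i
      unfold pdX
      have hin : inner ℝ p.2 (EuclideanSpace.single i (1 : ℝ)) = p.2 i := by
        rw [EuclideanSpace.inner_single_right]; simp
      rw [hχd, hfd, hgd]
      simp [hk, hin]
      ring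
    simp only [e4]
    refine ((hfp (k • p.2)).2).trans ?_
    have hind0 : 0 ≤ (regD n α R).indicator (fun _ => L) p :=
      Set.indicator_nonneg (fun _ _ => hL0) p
    by_cases c1 : p.1 ≤ 2 * R ^ α
    swap
    · have : k = 0 := by rw [hk, hf0 p (not_le.1 c1), zero_mul]
      rw [this]; simpa using hind0
    by_cases c2 : ‖p.2‖ < 2 * R
    swap
    · have : k = 0 := by rw [hk, d2 _ (hglarge p (not_lt.1 c2))]; ring
      rw [this]; simpa using hind0
    by_cases c3 : R < ‖p.2‖
    swap
    · have : k = 0 := by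
        rw [hk, d1 _ ((div_le_one (by positivity)).2
          (pow_le_pow_left₀ (norm_nonneg _) (not_lt.1 c3) 2))]; ring
      rw [this]; simpa using hind0
    have hD : p ∈ regD n α R := ⟨c1, c2.le, Or.inr c3⟩
    rw [Set.indicator_of_mem hD]
    have hA := hAp ⟨hp, by linarith, c2⟩
    have hkb : |k| ≤ M * (2 / R ^ 2) := by
      rw [hk, abs_mul, abs_mul, abs_of_nonneg (h0 _ : 0 ≤ f p),
        abs_of_nonneg (by positivity : 0 ≤ 2 / R ^ 2)]
      have i1 : |deriv ρ (‖p.2‖ ^ 2 / R ^ 2)| * (2 / R ^ 2) ≤ M * (2 / R ^ 2) :=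
        mul_le_mul_of_nonneg_right (hb _) (by positivity)
      exact (mul_le_of_le_one_left (by positivity) (h1 _)).trans i1
    have hnorm : ‖k • p.2‖ ^ 2 ≤ (4 * M / R) ^ 2 := by
      apply pow_le_pow_left₀ (norm_nonneg _)
      rw [norm_smul, Real.norm_eq_abs]
      refine (mul_le_mul hkb c2.le (norm_nonneg _) (by positivity)).trans (le_of_eq ?_)
      field_simp
      ring
    have hcR : 0 ≤ c * (2 * R) ^ (2 - α) := mul_nonneg hc.le (Real.rpow_nonneg (by positivity) _)
    refine (mul_le_mul hA hnorm (by positivity) hcR).trans ?_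
    have e6 : c * (2 * R) ^ (2 - α) * (4 * M / R) ^ 2 = 16 * c * M ^ 2 * 2 ^ (2 - α) * R ^ (-α) := by
      rw [Real.mul_rpow (by norm_num) hR0.le, show (2 - α) = -α + (2:ℕ) by push_cast; ring,
        Real.rpow_add hR0, Real.rpow_natCast]
      field_simp
      ring
    rw [e6, hL]
    apply mul_le_mul_of_nonneg_right _ hRna.le
    linarith


lemma young_pt {s q δ χ z : ℝ} (hsq : 1 + 2 * s ≤ q) (hz : 0 ≤ z) (hδ : 0 < δ)
    (hχ0 : 0 ≤ χ) {N : ℕ} (hN : 1 + s ≤ s * N) :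
    (1 + z) ^ (1 + s) * χ ^ (2 * N) ≤ δ * ((1 + z) ^ q * χ ^ (2 * N + 2)) + δ⁻¹ ^ N := by
  have h1 : (1:ℝ) ≤ 1 + z := by linarith
  have h0 : (0:ℝ) < 1 + z := by linarith
  set P := (1 + z) ^ s with hP
  have hP0 : 0 < P := Real.rpow_pos_of_pos h0 _
  have hi : 0 < δ⁻¹ ^ N := by positivity
  have hY : 0 ≤ δ * ((1 + z) ^ q * χ ^ (2 * N + 2)) := by positivity
  by_cases hcase : 1 ≤ δ * P * χ ^ 2
  · have e1 : (1 + z) ^ (1 + s) * χ ^ (2 * N) ≤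
        (1 + z) ^ (1 + s) * χ ^ (2 * N) * (δ * P * χ ^ 2) :=
      le_mul_of_one_le_right (by positivity) hcase
    have e2 : (1 + z) ^ (1 + s) * P = (1 + z) ^ (1 + 2 * s) := by
      rw [hP, ← Real.rpow_add h0]; congr 1; ring
    have e3 : (1 + z) ^ (1 + 2 * s) ≤ (1 + z) ^ q := Real.rpow_le_rpow_of_exponent_le h1 hsq
    have e4 : (1 + z) ^ (1 + s) * χ ^ (2 * N) * (δ * P * χ ^ 2) =
        δ * ((1 + z) ^ (1 + 2 * s) * χ ^ (2 * N + 2)) := by rw [← e2]; ring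
    have e5 : δ * ((1 + z) ^ (1 + 2 * s) * χ ^ (2 * N + 2)) ≤
        δ * ((1 + z) ^ q * χ ^ (2 * N + 2)) := by gcongr
    linarith
  · have e1 : (1 + z) ^ (1 + s) ≤ P ^ N := by
      rw [hP, ← Real.rpow_natCast, ← Real.rpow_mul h0.le]
      exact Real.rpow_le_rpow_of_exponent_le h1 hN
    have e2 : P * χ ^ 2 ≤ δ⁻¹ := by
      rw [← one_div, le_div_iff₀ hδ]; nlinarith
    have e3 : (P * χ ^ 2) ^ N ≤ δ⁻¹ ^ N := pow_le_pow_left₀ (by positivity) e2 N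
    have e4 : (1 + z) ^ (1 + s) * χ ^ (2 * N) ≤ P ^ N * χ ^ (2 * N) := by gcongr
    have e5 : (P * χ ^ 2) ^ N = P ^ N * χ ^ (2 * N) := by rw [mul_pow, ← pow_mul]
    linarith

lemma pow_pt {q z : ℝ} (hq : 0 ≤ q) (hz : 0 ≤ z) : (1 + z) ^ q ≤ 2 ^ q * (z ^ q + 1) := by
  have h2 : (0:ℝ) < 2 ^ q := by positivity
  have hzq : 0 ≤ z ^ q := by positivity
  rcases le_total z 1 with h | h
  · have : (1 + z) ^ q ≤ 2 ^ q := Real.rpow_le_rpow (by linarith) (by linarith) hq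
    nlinarith
  · have : (1 + z) ^ q ≤ (2 * z) ^ q := Real.rpow_le_rpow (by linarith) (by linarith) hq
    rw [Real.mul_rpow (by norm_num) hz] at this
    nlinarith

def boxB (n : ℕ) (α R : ℝ) : Set (Pt n) := {p | p.1 ≤ R ^ α ∧ ‖p.2‖ ≤ R}

lemma measurableSet_boxB (n : ℕ) (α R : ℝ) : MeasurableSet (boxB n α R) := by
  have h1 : Measurable (fun p : Pt n => p.1) := measurable_fst
  have h2 : Measurable (fun p : Pt n => ‖p.2‖) := measurable_snd.norm
  exact (measurableSet_le h1 measurable_const).inter (measurableSet_le h2 measurable_const)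

lemma aecover_boxB (n : ℕ) {α : ℝ} (hα : 0 < α) (μ : Measure (Pt n)) :
    AECover μ Filter.atTop (fun m : ℕ => boxB n α ((m : ℝ) + 1)) := by
  refine ⟨?_, fun m => measurableSet_boxB n α _⟩
  refine Filter.Eventually.of_forall fun p => ?_
  have h1 : Filter.Tendsto (fun m : ℕ => (m : ℝ) + 1) Filter.atTop Filter.atTop :=
    Filter.tendsto_atTop_add_const_right _ _ tendsto_natCast_atTop_atTop
  have h2 : Filter.Tendsto (fun m : ℕ => ((m : ℝ) + 1) ^ α) Filter.atTop Filter.atTop :=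
    (tendsto_rpow_atTop hα).comp h1
  filter_upwards [h1.eventually_ge_atTop ‖p.2‖, h2.eventually_ge_atTop p.1] with m e1 e2
  exact ⟨e2, e1⟩

/-- The real-variable core: energy inequalities on all scales force the integral to vanish. -/
lemma core_vanish {n : ℕ} {α q s C V : ℝ} (hα : 0 < α) (hq1 : 1 < q)
    (he : (n : ℝ) ≤ α / (q - 1)) (hs0 : 0 < s) (hsq : 1 + 2 * s ≤ q) {N : ℕ}
    (hN : 1 + s ≤ s * N) (hC : 0 < C) (hV : 0 < V)
    (hvol : ∀ R : ℝ, 1 ≤ R → volume (halfSpace n ∩ regD n α R) < ⊤ ∧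
      volume.real (halfSpace n ∩ regD n α R) ≤ V * R ^ (n + α))
    {w T : Pt n → ℝ} (hw0 : ∀ p ∈ halfSpace n, 0 ≤ w p)
    (hT0 : ∀ p, 0 ≤ T p) (hT1 : ∀ p, T p ≤ 1)
    (hen : ∀ R : ℝ, 1 ≤ R → ∃ χ : Pt n → ℝ, (∀ p, 0 ≤ χ p) ∧ (∀ p, χ p ≤ 1) ∧
      (∀ p ∈ boxB n α R, χ p = 1) ∧
      IntegrableOn (fun p => (w p) ^ q * (T p * χ p ^ (2 * N + 2))) (halfSpace n) ∧
      ∀ ε : ℝ, 0 < ε →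
        (2:ℝ) ^ (-q) * ∫ p in halfSpace n, (w p) ^ q * (T p * χ p ^ (2 * N + 2)) ≤
        C * (ε * R ^ (-α)) * ∫ p in halfSpace n, (regD n α R).indicator
          (fun p => (1 + w p / ε) ^ (1 + s) * (T p * χ p ^ (2 * N))) p) :
    IntegrableOn (fun p => (w p) ^ q * T p) (halfSpace n) ∧
      ∫ p in halfSpace n, (w p) ^ q * T p = 0 := by
  have hSm := (isOpen_halfSpace n).measurableSet
  have hq0 : 0 < q := by linarith
  have hq1' : 0 < q - 1 := by linarith
  have h2q : (0:ℝ) < 2 ^ q := by positivity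
  have h2nq : (0:ℝ) < 2 ^ (-q) := by positivity
  set e := α / (q - 1) with hedef
  have heq : e * (q - 1) = α := by rw [hedef]; field_simp
  set f0 : Pt n → ℝ := fun p => (w p) ^ q * T p with hf0
  have hf00 : ∀ p ∈ halfSpace n, 0 ≤ f0 p := fun p hp =>
    mul_nonneg (Real.rpow_nonneg (hw0 p hp) _) (hT0 p)
  set μ := (volume : Measure (Pt n)).restrict (halfSpace n) with hμ
  have hf0ae : ∀ᵐ p ∂μ, 0 ≤ f0 p := by
    filter_upwards [ae_restrict_mem hSm] with p hp using hf00 p hp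
  have hDi : ∀ R : ℝ, 1 ≤ R → ∀ k : ℝ, 0 ≤ k →
      Integrable ((regD n α R).indicator (fun _ => k)) μ ∧
      ∫ p, (regD n α R).indicator (fun _ => k) p ∂μ ≤ k * (V * R ^ (n + α)) := by
    intro R hR k hk
    have hm := measurableSet_regD n α R
    have hr : μ (regD n α R) = volume (halfSpace n ∩ regD n α R) := by
      rw [hμ, Measure.restrict_apply hm, Set.inter_comm]
    constructor
    · rw [integrable_indicator_iff hm]
      exact integrableOn_const (by rw [hr]; exact (hvol R hR).1.ne)
    · rw [integral_indicator hm, setIntegral_const, smul_eq_mul, mul_comm, measureReal_def, hr]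
      exact mul_le_mul_of_nonneg_left (hvol R hR).2 hk
  -- exponents
  have hexp : ∀ R : ℝ, 1 ≤ R → ∀ κ : ℝ, 0 < κ →
      (κ * R ^ (-e)) * R ^ (-α) * ((κ * R ^ (-e)) ^ (-q)) = κ ^ (1 - q) := by
    intro R hR κ hκ
    have hR0 : 0 < R := by linarith
    rw [Real.mul_rpow hκ.le (by positivity), ← Real.rpow_mul hR0.le]
    have e1 : κ * R ^ (-e) * R ^ (-α) * (κ ^ (-q) * R ^ (-e * -q)) =
        (κ ^ (1:ℝ) * κ ^ (-q)) * (R ^ (-e) * R ^ (-α) * R ^ (-e * -q)) := by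
      rw [Real.rpow_one]; ring
    rw [e1, ← Real.rpow_add hκ, ← Real.rpow_add hR0, ← Real.rpow_add hR0]
    have e2 : -e + -α + -e * -q = 0 := by rw [← heq]; ring
    rw [e2, Real.rpow_zero, mul_one]; rfl
  have hexp2 : ∀ R : ℝ, 1 ≤ R → ∀ κ : ℝ, 0 < κ →
      (κ * R ^ (-e)) * R ^ (-α) * R ^ (n + α) ≤ κ := by
    intro R hR κ hκ
    have hR0 : 0 < R := by linarith
    have e1 : κ * R ^ (-e) * R ^ (-α) * R ^ (n + α) = κ * R ^ (n - e) := by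
      rw [mul_assoc, mul_assoc, ← Real.rpow_add hR0, ← Real.rpow_add hR0]
      congr 2; ring
    rw [e1]
    exact mul_le_of_le_one_right hκ.le (Real.rpow_le_one_of_one_le_of_nonpos hR (by linarith))
  -- J R ≤ X
  have hJX : ∀ R : ℝ, 1 ≤ R → ∀ χ : Pt n → ℝ, (∀ p, 0 ≤ χ p) →
      (∀ p ∈ boxB n α R, χ p = 1) →
      IntegrableOn (fun p => (w p) ^ q * (T p * χ p ^ (2 * N + 2))) (halfSpace n) →
      IntegrableOn f0 (boxB n α R) μ ∧
      ∫ p in boxB n α R, f0 p ∂μ ≤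
        ∫ p in halfSpace n, (w p) ^ q * (T p * χ p ^ (2 * N + 2)) := by
    intro R hR χ hχ0 hχb hIntg
    have hB := measurableSet_boxB n α R
    have hEq : Set.EqOn (fun p => (w p) ^ q * (T p * χ p ^ (2 * N + 2))) f0 (boxB n α R) := by
      intro p hp
      simp [hf0, hχb p hp]
    have hi1 : IntegrableOn (fun p => (w p) ^ q * (T p * χ p ^ (2 * N + 2))) (boxB n α R) μ :=
      Integrable.integrableOn hIntg
    refine ⟨hi1.congr_fun hEq hB, ?_⟩
    rw [← setIntegral_congr_fun hB hEq]
    refine setIntegral_le_integral hIntg ?_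
    filter_upwards [ae_restrict_mem hSm] with p hp
    have := Real.rpow_nonneg (hw0 p hp) q
    have := hT0 p
    have := hχ0 p
    show 0 ≤ (w p) ^ q * (T p * χ p ^ (2 * N + 2))
    positivity
  -- Step A
  have hA : ∃ K : ℝ, ∀ R : ℝ, 1 ≤ R → IntegrableOn f0 (boxB n α R) μ ∧
      ∫ p in boxB n α R, f0 p ∂μ ≤ K := by
    set δ := 2 ^ (-q) / (2 * C * 2 ^ q) with hδ
    have hδ0 : 0 < δ := by positivity
    set k := δ * 2 ^ q + δ⁻¹ ^ N with hk
    have hk0 : 0 ≤ k := by positivity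
    refine ⟨2 * 2 ^ q * (C * k * V), fun R hR => ?_⟩
    obtain ⟨χ, hχ0, hχ1, hχb, hIntg, hE⟩ := hen R hR
    obtain ⟨hb1, hb2⟩ := hJX R hR χ hχ0 hχb hIntg
    refine ⟨hb1, hb2.trans ?_⟩
    have hR0 : 0 < R := by linarith
    set ε := 1 * R ^ (-e) with hε
    have hε0 : 0 < ε := by positivity
    have h1 := hE ε hε0
    set X := ∫ p in halfSpace n, (w p) ^ q * (T p * χ p ^ (2 * N + 2)) with hX
    have hpt : ∫ p in halfSpace n, (regD n α R).indicator
          (fun p => (1 + w p / ε) ^ (1 + s) * (T p * χ p ^ (2 * N))) p ≤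
        ∫ p in halfSpace n, (δ * 2 ^ q * ε ^ (-q) * ((w p) ^ q * (T p * χ p ^ (2 * N + 2))) +
          (regD n α R).indicator (fun _ => k) p) := by
      apply integral_mono_of_nonneg
      · filter_upwards [ae_restrict_mem hSm] with p hp
        have hwp := hw0 p hp
        have hTp := hT0 p
        have hχp := hχ0 p
        show 0 ≤ (regD n α R).indicator
          (fun p => (1 + w p / ε) ^ (1 + s) * (T p * χ p ^ (2 * N))) p
        by_cases hD : p ∈ regD n α R
        · rw [Set.indicator_of_mem hD]
          positivity
        · rw [Set.indicator_of_notMem hD]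
      · exact (hIntg.const_mul _).add (hDi R hR k hk0).1
      · filter_upwards [ae_restrict_mem hSm] with p hp
        have hwp := hw0 p hp
        have hTp := hT0 p
        have hχp := hχ0 p
        have hnn : 0 ≤ δ * 2 ^ q * ε ^ (-q) * ((w p) ^ q * (T p * χ p ^ (2 * N + 2))) := by
          positivity
        by_cases hD : p ∈ regD n α R
        · rw [Set.indicator_of_mem hD, Set.indicator_of_mem hD]
          have hz : 0 ≤ w p / ε := by positivity
          have y1 := young_pt hsq hz hδ0 hχp hN
          have y2 := pow_pt hq0.le hz
          have y3 : (w p / ε) ^ q = ε ^ (-q) * (w p) ^ q := by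
            rw [Real.div_rpow hwp hε0.le, Real.rpow_neg hε0.le]; ring
          have y4 : χ p ^ (2 * N + 2) ≤ 1 := pow_le_one₀ hχp (hχ1 p)
          rw [y3] at y2
          have hc0 : 0 ≤ χ p ^ (2 * N + 2) := by positivity
          calc (1 + w p / ε) ^ (1 + s) * (T p * χ p ^ (2 * N))
              = T p * ((1 + w p / ε) ^ (1 + s) * χ p ^ (2 * N)) := by ring
            _ ≤ T p * (δ * ((1 + w p / ε) ^ q * χ p ^ (2 * N + 2)) + δ⁻¹ ^ N) := by gcongr
            _ ≤ T p * (δ * ((2 ^ q * (ε ^ (-q) * w p ^ q + 1)) * χ p ^ (2 * N + 2)) + δ⁻¹ ^ N) := by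
                gcongr
            _ = δ * 2 ^ q * ε ^ (-q) * ((w p) ^ q * (T p * χ p ^ (2 * N + 2))) +
                T p * (δ * 2 ^ q * χ p ^ (2 * N + 2) + δ⁻¹ ^ N) := by ring
            _ ≤ δ * 2 ^ q * ε ^ (-q) * ((w p) ^ q * (T p * χ p ^ (2 * N + 2))) +
                1 * (δ * 2 ^ q * 1 + δ⁻¹ ^ N) := by
                gcongr
                exact hT1 p
            _ = _ := by rw [hk]; ring
        · rw [Set.indicator_of_notMem hD, Set.indicator_of_notMem hD]
          linarith
    rw [integral_add (hIntg.const_mul _) (hDi R hR k hk0).1, integral_const_mul, ← hX] at hpt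
    have hd := (hDi R hR k hk0).2
    have hx1 := hexp R hR 1 one_pos
    have hx2 := hexp2 R hR 1 one_pos
    rw [← hε] at hx1 hx2
    rw [Real.one_rpow] at hx1
    have hco : 0 ≤ C * (ε * R ^ (-α)) := by positivity
    have h2 : 2 ^ (-q) * X ≤ C * (ε * R ^ (-α)) *
        (δ * 2 ^ q * ε ^ (-q) * X + k * (V * R ^ (n + α))) :=
      h1.trans (mul_le_mul_of_nonneg_left (by linarith) hco)
    have h3 : C * (ε * R ^ (-α)) * (δ * 2 ^ q * ε ^ (-q) * X + k * (V * R ^ (n + α))) =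
        C * δ * 2 ^ q * (ε * R ^ (-α) * ε ^ (-q)) * X +
          C * k * V * (ε * R ^ (-α) * R ^ (n + α)) := by ring
    have h4 : C * δ * 2 ^ q = 2 ^ (-q) / 2 := by rw [hδ]; field_simp
    have h5 : C * k * V * (ε * R ^ (-α) * R ^ (n + α)) ≤ C * k * V * 1 :=
      mul_le_mul_of_nonneg_left hx2 (by positivity)
    rw [h3, hx1, h4] at h2
    have h6 : 2 ^ (-q) * X ≤ 2 * (C * k * V) := by linarith
    have h7 : (2:ℝ) ^ q * 2 ^ (-q) = 1 := by
      rw [← Real.rpow_add (by norm_num)]; simp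
    calc X = 2 ^ q * (2 ^ (-q) * X) := by rw [← mul_assoc, h7, one_mul]
      _ ≤ 2 ^ q * (2 * (C * k * V)) := by gcongr
      _ = _ := by ring
  obtain ⟨K, hK⟩ := hA
  have hcov := aecover_boxB n hα μ
  have hR1 : ∀ m : ℕ, (1:ℝ) ≤ (m : ℝ) + 1 := fun m => by
    have : (0:ℝ) ≤ m := Nat.cast_nonneg m
    linarith
  have hf0i : Integrable f0 μ := hcov.integrable_of_integral_bounded_of_nonneg_ae K
    (fun m => (hK _ (hR1 m)).1) hf0ae (Filter.Eventually.of_forall fun m => (hK _ (hR1 m)).2)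
  have hlim := hcov.integral_tendsto_of_countably_generated hf0i
  refine ⟨hf0i, ?_⟩
  set I := ∫ p, f0 p ∂μ with hI
  have hI0 : 0 ≤ I := integral_nonneg_of_ae hf0ae
  -- Step B
  have hB : ∀ κ : ℝ, 0 < κ → ∀ R : ℝ, 1 ≤ R →
      2 ^ (-q) * ∫ p in boxB n α R, f0 p ∂μ ≤
        C * 2 ^ q * κ ^ (1 - q) * (I - ∫ p in boxB n α R, f0 p ∂μ) + C * 2 ^ q * V * κ := by
    intro κ hκ R hR
    obtain ⟨χ, hχ0, hχ1, hχb, hIntg, hE⟩ := hen R hR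
    obtain ⟨hb1, hb2⟩ := hJX R hR χ hχ0 hχb hIntg
    have hBm := measurableSet_boxB n α R
    have hR0 : 0 < R := by linarith
    set ε := κ * R ^ (-e) with hε
    have hε0 : 0 < ε := by positivity
    have h1 := hE ε hε0
    set X := ∫ p in halfSpace n, (w p) ^ q * (T p * χ p ^ (2 * N + 2)) with hX
    set J := ∫ p in boxB n α R, f0 p ∂μ with hJ
    have hfi2 : Integrable ((boxB n α R)ᶜ.indicator f0) μ := hf0i.indicator hBm.compl
    have hcompl : ∫ p, (boxB n α R)ᶜ.indicator f0 p ∂μ = I - J := by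
      rw [integral_indicator hBm.compl, setIntegral_compl hBm hf0i]
    have hpt : ∫ p in halfSpace n, (regD n α R).indicator
          (fun p => (1 + w p / ε) ^ (1 + s) * (T p * χ p ^ (2 * N))) p ≤
        ∫ p in halfSpace n, (2 ^ q * ε ^ (-q) * (boxB n α R)ᶜ.indicator f0 p +
          (regD n α R).indicator (fun _ => 2 ^ q) p) := by
      apply integral_mono_of_nonneg
      · filter_upwards [ae_restrict_mem hSm] with p hp
        have hwp := hw0 p hp
        have hTp := hT0 p
        have hχp := hχ0 p
        show 0 ≤ (regD n α R).indicator
          (fun p => (1 + w p / ε) ^ (1 + s) * (T p * χ p ^ (2 * N))) p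
        by_cases hD : p ∈ regD n α R
        · rw [Set.indicator_of_mem hD]
          positivity
        · rw [Set.indicator_of_notMem hD]
      · exact (hfi2.const_mul _).add (hDi R hR _ h2q.le).1
      · filter_upwards [ae_restrict_mem hSm] with p hp
        have hwp := hw0 p hp
        have hTp := hT0 p
        have hχp := hχ0 p
        by_cases hD : p ∈ regD n α R
        · have hnb : p ∈ (boxB n α R)ᶜ := by
            intro hb
            rcases hD.2.2 with h | h
            · exact absurd hb.1 (not_le.2 h)
            · exact absurd hb.2 (not_le.2 h)
          rw [Set.indicator_of_mem hD, Set.indicator_of_mem hD, Set.indicator_of_mem hnb]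
          have hz : 0 ≤ w p / ε := by positivity
          have y1 : (1 + w p / ε) ^ (1 + s) ≤ (1 + w p / ε) ^ q :=
            Real.rpow_le_rpow_of_exponent_le (by linarith) (by linarith)
          have y2 := pow_pt hq0.le hz
          have y3 : (w p / ε) ^ q = ε ^ (-q) * (w p) ^ q := by
            rw [Real.div_rpow hwp hε0.le, Real.rpow_neg hε0.le]; ring
          have y4 : χ p ^ (2 * N) ≤ 1 := pow_le_one₀ hχp (hχ1 p)
          rw [y3] at y2
          calc (1 + w p / ε) ^ (1 + s) * (T p * χ p ^ (2 * N))
              ≤ (2 ^ q * (ε ^ (-q) * w p ^ q + 1)) * (T p * 1) := by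
                gcongr
                exact y1.trans y2
            _ = 2 ^ q * ε ^ (-q) * (w p ^ q * T p) + 2 ^ q * T p := by ring
            _ ≤ 2 ^ q * ε ^ (-q) * (w p ^ q * T p) + 2 ^ q * 1 := by
                gcongr
                exact hT1 p
            _ = _ := by rw [mul_one]
        · rw [Set.indicator_of_notMem hD, Set.indicator_of_notMem hD, add_zero]
          have : 0 ≤ (boxB n α R)ᶜ.indicator f0 p := by
            by_cases hpb : p ∈ (boxB n α R)ᶜ
            · rw [Set.indicator_of_mem hpb]; exact hf00 p hp
            · rw [Set.indicator_of_notMem hpb]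
          positivity
    rw [integral_add (hfi2.const_mul _) (hDi R hR _ h2q.le).1, integral_const_mul, hcompl] at hpt
    have hd := (hDi R hR _ h2q.le).2
    have hx1 := hexp R hR κ hκ
    have hx2 := hexp2 R hR κ hκ
    rw [← hε] at hx1 hx2
    have hco : 0 ≤ C * (ε * R ^ (-α)) := by positivity
    have h2 : 2 ^ (-q) * X ≤ C * (ε * R ^ (-α)) *
        (2 ^ q * ε ^ (-q) * (I - J) + 2 ^ q * (V * R ^ (n + α))) :=
      h1.trans (mul_le_mul_of_nonneg_left (by linarith) hco)
    have h3 : C * (ε * R ^ (-α)) * (2 ^ q * ε ^ (-q) * (I - J) + 2 ^ q * (V * R ^ (n + α))) =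
        C * 2 ^ q * (ε * R ^ (-α) * ε ^ (-q)) * (I - J) +
          C * 2 ^ q * V * (ε * R ^ (-α) * R ^ (n + α)) := by ring
    have h5 : C * 2 ^ q * V * (ε * R ^ (-α) * R ^ (n + α)) ≤ C * 2 ^ q * V * κ :=
      mul_le_mul_of_nonneg_left hx2 (by positivity)
    rw [h3, hx1] at h2
    have h6 : 2 ^ (-q) * J ≤ 2 ^ (-q) * X := mul_le_mul_of_nonneg_left hb2 h2nq.le
    linarith
  have hBlim : ∀ κ : ℝ, 0 < κ → 2 ^ (-q) * I ≤ C * 2 ^ q * V * κ := by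
    intro κ hκ
    have l1 := hlim.const_mul ((2:ℝ) ^ (-q))
    have l2 : Filter.Tendsto (fun m : ℕ => C * 2 ^ q * κ ^ (1 - q) *
        (I - ∫ p in boxB n α ((m:ℝ) + 1), f0 p ∂μ) + C * 2 ^ q * V * κ) Filter.atTop
        (nhds (C * 2 ^ q * κ ^ (1 - q) * (I - I) + C * 2 ^ q * V * κ)) :=
      ((hlim.const_sub I).const_mul _).add_const _
    have := le_of_tendsto_of_tendsto' l1 l2 (fun m => hB κ hκ _ (hR1 m))
    simpa using this
  have hle : 2 ^ (-q) * I ≤ 0 := by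
    apply le_of_forall_pos_le_add
    intro η hη
    have := hBlim (η / (C * 2 ^ q * V)) (by positivity)
    rw [mul_div_cancel₀ _ (by positivity)] at this
    linarith
  nlinarith

/-- the Liouville comparison principle (Theorem 1). -/
theorem liouville_comparison_principle
    (n : ℕ) (hn : 1 ≤ n) (α c q : ℝ) (hα : 0 < α) (hc : 0 < c)
    (hq1 : 1 < q) (hq2 : q ≤ 1 + α / n)
    (a : Fin n → Fin n → Pt n → ℝ) (A : Pt n → ℝ)
    (ha_meas : ∀ i j, Measurable (a i j))
    (ha_locbdd : ∀ i j, ∀ K : Set (Pt n), IsCompact K → K ⊆ halfSpace n →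
      ∃ M, ∀ p ∈ K, |a i j p| ≤ M)
    (ha_symm : ∀ i j, ∀ᵐ p ∂(volume.restrict (halfSpace n)), a i j p = a j i p)
    (hA_meas : Measurable A)
    (hA_nonneg : ∀ p, 0 ≤ A p)
    (hA_locbdd : ∀ K : Set (Pt n), IsCompact K → K ⊆ halfSpace n →
      ∃ M, ∀ p ∈ K, A p ≤ M)
    (hform : ∀ᵐ p ∂(volume.restrict (halfSpace n)), ∀ ξ : Xn n,
      0 ≤ ∑ i, ∑ j, a i j p * ξ i * ξ j ∧
      ∑ i, ∑ j, a i j p * ξ i * ξ j ≤ A p * ‖ξ‖ ^ 2)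
    (hcond8 : Cond8 A α c)
    (u v : Pt n → ℝ)
    (hu : ContDiffOn ℝ 1 u (halfSpace n)) (hv : ContDiffOn ℝ 1 v (halfSpace n))
    (hu_int : LocallyIntegrableOn (fun p => |u p| ^ q) (halfSpace n) volume)
    (hv_int : LocallyIntegrableOn (fun p => |v p| ^ q) (halfSpace n) volume)
    (hsol : WeakSolPair a q u v)
    (huv : ∀ p ∈ halfSpace n, v p ≤ u p) :
    ∀ p ∈ halfSpace n, u p = v p := by
  have hSo := isOpen_halfSpace n
  intro p0 hp0
  have hp00 : 0 < p0.1 := hp0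
  have hn0 : (0:ℝ) < n := by exact_mod_cast hn
  have hq1' : 0 < q - 1 := by linarith
  have he : (n : ℝ) ≤ α / (q - 1) := by
    rw [le_div_iff₀ hq1']
    have h : q - 1 ≤ α / n := by linarith
    rw [le_div_iff₀ hn0] at h
    linarith
  obtain ⟨s, hs0, hs1, hsq⟩ : ∃ s : ℝ, 0 < s ∧ s ≤ 1 / 2 ∧ 1 + 2 * s ≤ q := by
    refine ⟨min ((q - 1) / 2) (1 / 2), lt_min (by linarith) (by norm_num), min_le_right _ _, ?_⟩
    have := min_le_left ((q - 1) / 2) (1 / 2)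
    linarith
  obtain ⟨N, hNlt⟩ := exists_nat_gt ((1 + s) / s)
  have hN : 1 + s ≤ s * N := by
    rw [div_lt_iff₀ hs0] at hNlt
    linarith
  have hN1 : 1 ≤ N := by
    have h : (0:ℝ) < N := lt_of_le_of_lt (by positivity) hNlt
    exact_mod_cast h
  set w : Pt n → ℝ := u - v with hwdef
  have hw : ContDiffOn ℝ 1 w (halfSpace n) := hu.sub hv
  have hw0 : ∀ p ∈ halfSpace n, 0 ≤ w p := fun p hp => sub_nonneg.2 (huv p hp)
  have hτ : 0 < p0.1 / 2 := by linarith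
  obtain ⟨T, hT, hT0, hT1, hTx, hTt, hTz, hTpos⟩ := exists_timeCutoff n hτ
  obtain ⟨V, hV, hvol⟩ := volume_regD n (α := α)
  obtain ⟨L0, hL0, hcut⟩ := exists_cutoff hc hform hcond8
  have hTsupp : tsupport T ⊆ {p | p0.1 / 2 ≤ p.1} := by
    apply closure_minimal _ (isClosed_le continuous_const continuous_fst)
    intro p hp
    by_contra h
    exact hp (hTz p (not_le.1 h).le)
  have hTS : tsupport T ⊆ halfSpace n := fun p hp => lt_of_lt_of_le hτ (hTsupp hp)
  have hwq : ContinuousOn (fun p => (w p) ^ q) (halfSpace n) :=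
    hw.continuousOn.rpow_const (fun p _ => Or.inr (by linarith))
  have hf0c : Continuous (fun p => (w p) ^ q * T p) := continuous_mul_cutoff hwq hT.continuous hTS
  have hweak := fun φ hφ1 hφ2 hφ3 hφ4 =>
    weak_C1 (φ := φ) hq1 ha_meas ha_locbdd hu hv hsol hφ1 hφ2 hφ3 hφ4
  set C := (3 * (2 * (N:ℝ) + 2) + (2 * N + 2) ^ 2 / s) with hC
  have hC0 : 0 < C := by positivity
  have hmain := core_vanish (C := C * L0) hα hq1 he hs0 hsq hN (by positivity) hV hvol hw0 hT0 hT1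
    (by
      intro R hR
      obtain ⟨χ, hχ, hχ0, hχ1, hχb, hχs, hLt, hLx⟩ := hcut R hR
      have hR0 : 0 < R := by linarith
      have hsub : tsupport (fun p => T p * χ p) ⊆
          Set.Icc (p0.1 / 2) (2 * R ^ α) ×ˢ Metric.closedBall (0 : Xn n) (2 * R) := by
        apply closure_minimal _ (isClosed_Icc.prod Metric.isClosed_closedBall)
        intro p hp
        have hT' : T p ≠ 0 := fun h => hp (by simp [h])
        have hχ' : χ p ≠ 0 := fun h => hp (by simp [h])
        refine ⟨⟨hTsupp (subset_tsupport _ hT'), (hχs p hχ').1⟩, ?_⟩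
        rw [mem_closedBall_zero_iff]
        exact (hχs p hχ').2
      have hcs : HasCompactSupport (fun p => T p * χ p) :=
        (isCompact_Icc.prod (isCompact_closedBall _ _)).of_isClosed_subset isClosed_closure hsub
      have hss : tsupport (fun p => T p * χ p) ⊆ halfSpace n :=
        fun p hp => lt_of_lt_of_le hτ (hsub hp).1.1
      refine ⟨χ, hχ0, hχ1, fun p hp => hχb p hp.1 hp.2, ?_, ?_⟩
      · have hcts : Continuous (fun p => (w p) ^ q * T p * χ p ^ (2 * N + 2)) :=
          hf0c.mul (hχ.continuous.pow _)
        have hcs2 : HasCompactSupport (fun p => (w p) ^ q * T p * χ p ^ (2 * N + 2)) := by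
          apply IsCompact.of_isClosed_subset hcs isClosed_closure
          apply closure_mono
          intro p hp h
          apply hp
          rcases mul_eq_zero.1 h with h | h
          · simp [h]
          · simp [h]
        have := (hcts.integrable_of_hasCompactSupport hcs2 (μ := volume)).integrableOn
          (s := halfSpace n)
        simpa only [mul_assoc] using this
      · intro ε hε
        have h := energy hq1 ha_symm (hform.mono fun p hp ξ => (hp ξ).1) hw hw0
          (fun p hp => oddPow_sub_ge hq1 (huv p hp)) hweak hs0 hs1 N hN1 hT hχ hT0 hTx hTt hχ0 hχ1
          hcs hss hε (measurableSet_regD n α R) (by positivity) hLt hLx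
        refine h.trans (le_of_eq ?_)
        rw [hC]; ring)
  obtain ⟨hfi, hI⟩ := hmain
  have hae : (fun p => (w p) ^ q * T p) =ᵐ[volume.restrict (halfSpace n)] 0 := by
    refine (setIntegral_eq_zero_iff_of_nonneg_ae ?_ hfi).1 hI
    filter_upwards [ae_restrict_mem hSo.measurableSet] with p hp
    exact mul_nonneg (Real.rpow_nonneg (hw0 p hp) _) (hT0 p)
  have hz := Measure.eqOn_open_of_ae_eq hae hSo hf0c.continuousOn continuousOn_const hp0
  have hTp : T p0 ≠ 0 := (hTpos p0 (by linarith)).ne'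
  have h0 : (w p0) ^ q = 0 := by
    rcases mul_eq_zero.1 hz with h | h
    · exact h
    · exact absurd h hTp
  have h1 : w p0 = 0 := by
    by_contra hne
    have : 0 < w p0 := lt_of_le_of_ne (hw0 p0 hp0) (Ne.symm hne)
    exact absurd h0 (Real.rpow_pos_of_pos this q).ne'
  exact sub_eq_zero.1 h1
end
end

section
/- Let n ≥ 1 and 1 < q ≤ 1 + 2/n. If u : (0,∞) × ℝⁿ → ℝ is a non-negative function which is C¹ in t and C² in x and satisfies the pointwise differential inequality ∂u/∂t ≥ Δu + u^q at every point of (0,∞) × ℝⁿ (where Δ is the Laplacian in the x-variables), then u is identically zero on (0,∞) × ℝⁿ. In particular, there is no non-trivial non-negative entire classical solution of u_t = Δu + u^q on (0,∞) × ℝⁿ for 1 < q ≤ 1 + 2/n (Fujita's theorem). -/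
open Real

noncomputable section

/-- Second partial derivative `∂²w/∂x_i²` of `w : ℝⁿ → ℝ` at `x`. -/
noncomputable def secondPartial {n : ℕ} (w : Xn n → ℝ) (i : Fin n) (x : Xn n) : ℝ :=
  fderiv ℝ (fun y => fderiv ℝ w y (EuclideanSpace.single i 1)) x
    (EuclideanSpace.single i 1)

/-- The spatial Laplacian `Δw = Σ_i ∂²w/∂x_i²`. -/
noncomputable def laplacian {n : ℕ} (w : Xn n → ℝ) (x : Xn n) : ℝ :=
  ∑ i, secondPartial w i x

open Set Filter Topology MeasureTheory

/-- Unit coordinate vector. -/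
def ee {n : ℕ} (i : Fin n) : Xn n := EuclideanSpace.single i 1

/-- `w` has two directional derivatives along every coordinate line at `x`, with Laplacian `L`. -/
def HasLap {n : ℕ} (w : Xn n → ℝ) (x : Xn n) (L : ℝ) : Prop :=
  ∃ f1 : Fin n → ℝ → ℝ, ∃ f2 : Fin n → ℝ,
    (∀ i, ∀ᶠ r in 𝓝 (0:ℝ), HasDerivAt (fun r : ℝ => w (x + r • ee i)) (f1 i r) r) ∧
    (∀ i, HasDerivAt (f1 i) (f2 i) 0) ∧ L = ∑ i, f2 i

/-- The hypotheses on `u`. -/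
structure Sol (n : ℕ) (q : ℝ) (u : ℝ → Xn n → ℝ) : Prop where
  q1 : 1 < q
  nonneg : ∀ t, 0 < t → ∀ x, 0 ≤ u t x
  dt : ∀ t, 0 < t → ∀ x, DifferentiableAt ℝ (fun s => u s x) t
  c2 : ∀ t, 0 < t → ContDiff ℝ 2 (u t)
  ineq : ∀ t, 0 < t → ∀ x : Xn n,
      deriv (fun s => u s x) t ≥ laplacian (u t) x + u t x ^ q

/-- Lower semicontinuity from the right in time, uniformly on `K`. -/
def RL {n : ℕ} (u : ℝ → Xn n → ℝ) (K : Set (Xn n)) (t : ℝ) : Prop :=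
  ∀ ε > 0, ∃ δ > 0, ∀ t' ∈ Icc t (t + δ), ∀ x ∈ K, u t x - ε ≤ u t' x

lemma second_test (φ φ1 : ℝ → ℝ) (φ2 : ℝ) (hmin : IsLocalMin φ 0)
    (h1 : ∀ᶠ r in 𝓝 (0:ℝ), HasDerivAt φ (φ1 r) r) (h2 : HasDerivAt φ1 φ2 0) : 0 ≤ φ2 := by
  by_contra hneg
  push Not at hneg
  have hd : deriv φ =ᶠ[𝓝 0] φ1 := h1.mono fun r hr => hr.deriv
  have hdd : deriv (deriv φ) 0 = φ2 := by rw [hd.deriv_eq, h2.deriv]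
  have h0 : deriv φ 0 = 0 := hmin.deriv_eq_zero
  have hc : ContinuousAt φ 0 := h1.self_of_nhds.continuousAt
  have hmax : IsLocalMax φ 0 := isLocalMax_of_deriv_deriv_neg (by rw [hdd]; exact hneg) h0 hc
  have hconst : φ =ᶠ[𝓝 0] fun _ => φ 0 := by
    filter_upwards [hmin, hmax] with r h h' using le_antisymm h' h
  have : deriv φ =ᶠ[𝓝 0] fun _ => 0 := by
    have := hconst.deriv
    simpa using this
  rw [this.deriv_eq] at hdd
  simp at hdd
  linarith

lemma hasLap_c2 {n : ℕ} (w : Xn n → ℝ) (hw : ContDiff ℝ 2 w) (x : Xn n) :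
    HasLap w x (laplacian w x) := by
  refine ⟨fun i r => fderiv ℝ w (x + r • ee i) (ee i), fun i => secondPartial w i x, ?_, ?_, rfl⟩
  · intro i
    refine Eventually.of_forall fun r => ?_
    have hl : HasDerivAt (fun r : ℝ => x + r • (ee i : Xn n)) (ee i) r := by
      simpa using ((hasDerivAt_id r).smul_const (ee i : Xn n)).const_add x
    have hd : HasFDerivAt w (fderiv ℝ w (x + r • ee i)) (x + r • ee i) :=
      (hw.differentiable (by norm_num) _).hasFDerivAt
    exact hd.comp_hasDerivAt r hl
  · intro i
    have hl : HasDerivAt (fun r : ℝ => x + r • (ee i : Xn n)) (ee i) 0 := by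
      simpa using ((hasDerivAt_id (0:ℝ)).smul_const (ee i : Xn n)).const_add x
    have hdf : Differentiable ℝ (fun y => fderiv ℝ w y (ee i)) := by
      have : ContDiff ℝ 1 (fderiv ℝ w) := hw.fderiv_right (by norm_num)
      exact (this.differentiable (by norm_num)).clm_apply (differentiable_const _)
    have hd : HasFDerivAt (fun y => fderiv ℝ w y (ee i))
      (fderiv ℝ (fun y => fderiv ℝ w y (ee i)) x) (x + (0:ℝ) • ee i) := by
      simpa using (hdf x).hasFDerivAt
    exact hd.comp_hasDerivAt 0 hl

lemma lap_le_of_min {n : ℕ} (w v : Xn n → ℝ) (x : Xn n) (a b : ℝ) (hw : HasLap w x a)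
    (hv : HasLap v x b) (hmin : IsLocalMin (fun y => w y - v y) x) : b ≤ a := by
  obtain ⟨f1, f2, h1, h2, rfl⟩ := hw
  obtain ⟨g1, g2, k1, k2, rfl⟩ := hv
  refine Finset.sum_le_sum fun i _ => ?_
  have := second_test (fun r : ℝ => w (x + r • ee i) - v (x + r • ee i)) (fun r => f1 i r - g1 i r)
    (f2 i - g2 i) ?_ ?_ ((h2 i).sub (k2 i))
  · linarith
  · have hc : Tendsto (fun r : ℝ => x + r • (ee i : Xn n)) (𝓝 0) (𝓝 x) := by
      have : Continuous (fun r : ℝ => x + r • (ee i : Xn n)) := by fun_prop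
      simpa using this.tendsto 0
    have := hc.eventually hmin
    simpa [IsLocalMin, IsMinFilter] using this
  · filter_upwards [h1 i, k1 i] with r a b using a.sub b

lemma HasLap.add {n : ℕ} {w v : Xn n → ℝ} {x : Xn n} {a b : ℝ} (hw : HasLap w x a)
    (hv : HasLap v x b) : HasLap (fun y => w y + v y) x (a + b) := by
  obtain ⟨f1, f2, h1, h2, rfl⟩ := hw
  obtain ⟨g1, g2, k1, k2, rfl⟩ := hv
  refine ⟨fun i r => f1 i r + g1 i r, fun i => f2 i + g2 i, ?_, fun i => (h2 i).add (k2 i), ?_⟩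
  · intro i
    filter_upwards [h1 i, k1 i] with r a b using a.add b
  · rw [Finset.sum_add_distrib]

lemma HasLap.const_mul {n : ℕ} {w : Xn n → ℝ} {x : Xn n} {a : ℝ} (c : ℝ) (hw : HasLap w x a) :
    HasLap (fun y => c * w y) x (c * a) := by
  obtain ⟨f1, f2, h1, h2, rfl⟩ := hw
  refine ⟨fun i r => c * f1 i r, fun i => c * f2 i, ?_, fun i => (h2 i).const_mul c, ?_⟩
  · intro i
    filter_upwards [h1 i] with r a using a.const_mul c
  · rw [Finset.mul_sum]

lemma HasLap.sub_const {n : ℕ} {w : Xn n → ℝ} {x : Xn n} {a : ℝ} (hw : HasLap w x a) (c : ℝ) :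
    HasLap (fun y => w y - c) x a := by
  obtain ⟨f1, f2, h1, h2, rfl⟩ := hw
  refine ⟨f1, f2, ?_, h2, rfl⟩
  intro i
  filter_upwards [h1 i] with r a using a.sub_const c

lemma HasLap.congr {n : ℕ} {w v : Xn n → ℝ} {x : Xn n} {a : ℝ} (hw : HasLap w x a)
    (h : w =ᶠ[𝓝 x] v) : HasLap v x a := by
  obtain ⟨f1, f2, h1, h2, rfl⟩ := hw
  refine ⟨f1, f2, ?_, h2, rfl⟩
  intro i
  have hc : Tendsto (fun r : ℝ => x + r • (ee i : Xn n)) (𝓝 0) (𝓝 x) := by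
    have : Continuous (fun r : ℝ => x + r • (ee i : Xn n)) := by fun_prop
    simpa using this.tendsto 0
  have := (hc.eventually h).eventually_nhds
  filter_upwards [h1 i, this] with r a hr
  exact a.congr_of_eventuallyEq (hr.mono fun _ h => h.symm)

/-- Right-closed, left-open induction downwards on `[s,t2]`. -/
lemma down_induction (P : ℝ → Prop) (s t2 : ℝ) (hst : s ≤ t2) (h2 : P t2)
    (hright : ∀ a ∈ Ico s t2, (∀ t ∈ Ioc a t2, P t) → P a)
    (hleft : ∀ a ∈ Ioc s t2, P a → ∃ δ > 0, ∀ t ∈ Ioo (a - δ) a, s ≤ t → P t) : P s := by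
  set A : Set ℝ := {t | t ∈ Icc s t2 ∧ ∀ t' ∈ Icc t t2, P t'} with hA
  have h2A : t2 ∈ A := ⟨⟨hst, le_rfl⟩, fun t' ht' => by
    rw [le_antisymm ht'.2 ht'.1]; exact h2⟩
  have hbd : BddBelow A := ⟨s, fun t ht => ht.1.1⟩
  set a := sInf A with ha
  have hsa : s ≤ a := le_csInf ⟨t2, h2A⟩ fun t ht => ht.1.1
  have hat : a ≤ t2 := csInf_le hbd h2A
  have hgt : ∀ t ∈ Ioc a t2, P t := by
    intro t ht
    obtain ⟨b, hb, hbt⟩ := exists_lt_of_csInf_lt ⟨t2, h2A⟩ ht.1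
    exact hb.2 t ⟨hbt.le, ht.2⟩
  have hPa : P a := by
    rcases hat.eq_or_lt with h | h
    · rw [h]; exact h2
    · exact hright a ⟨hsa, h⟩ hgt
  rcases hsa.eq_or_lt with h | h
  · rw [h]; exact hPa
  exfalso
  obtain ⟨δ, hδ, hl⟩ := hleft a ⟨h, hat⟩ hPa
  set b := max s (a - δ/2) with hb
  have hba : b < a := max_lt h (by linarith)
  have : b ∈ A := by
    refine ⟨⟨le_max_left _ _, hba.le.trans hat⟩, fun t ht => ?_⟩
    rcases lt_trichotomy t a with hta | hta | hta
    · refine hl t ⟨?_, hta⟩ ((le_max_left _ _).trans ht.1)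
      have := (le_max_right s (a - δ/2)).trans ht.1
      linarith
    · rw [hta]; exact hPa
    · exact hgt t ⟨hta, ht.2⟩
  have := csInf_le hbd this
  linarith

lemma left_lt_of_deriv_pos (g : ℝ → ℝ) (g' t : ℝ) (h : HasDerivAt g g' t) (hp : 0 < g') :
    ∃ δ > 0, ∀ t' ∈ Ioo (t - δ) t, g t' < g t := by
  have := (hasDerivAt_iff_tendsto_slope.1 h).eventually (lt_mem_nhds hp)
  rw [eventually_nhdsWithin_iff, Metric.eventually_nhds_iff] at this
  obtain ⟨δ, hδ, hh⟩ := this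
  refine ⟨δ, hδ, fun t' ht' => ?_⟩
  have h1 := hh (y := t') (by rw [Real.dist_eq, abs_lt]; constructor <;> linarith [ht'.1, ht'.2])
    (by simpa using ht'.2.ne)
  rw [slope_def_field] at h1
  have h3 : t' - t < 0 := by linarith [ht'.2]
  by_contra hcon
  push Not at hcon
  have := div_nonpos_of_nonneg_of_nonpos (sub_nonneg.2 hcon) h3.le
  linarith

theorem comparison {n : ℕ} {q : ℝ} {u : ℝ → Xn n → ℝ} (hu : Sol n q u) (K : Set (Xn n))
    (hK : IsCompact K) (s T : ℝ) (hs : 0 < s)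
    (hRL : ∀ t ∈ Ico s T, RL u K t) (w : ℝ → Xn n → ℝ)
    (hwc : ContinuousOn (Function.uncurry w) (Icc s T ×ˢ K)) (L : ℝ)
    (h0 : ∀ x ∈ K, w s x ≤ u s x)
    (hbd : ∀ t ∈ Icc s T, ∀ x ∈ K, x ∉ interior K → w t x ≤ 0)
    (hsub : ∀ t ∈ Ioc s T, ∀ x ∈ interior K, u t x < w t x → ∃ wt D,
      HasDerivAt (fun t => w t x) wt t ∧ HasLap (w t) x D ∧
        wt ≤ D + u t x ^ q + L * (w t x - u t x)) :
    ∀ t ∈ Icc s T, ∀ x ∈ K, w t x ≤ u t x := by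
  intro t2 ht2 x2 hx2
  by_contra hcon
  push Not at hcon
  set lam := L + 1 with hlam
  set c := (w t2 x2 - u t2 x2) * exp (-(lam * t2)) with hc
  have hcpos : 0 < c := mul_pos (sub_pos.2 hcon) (exp_pos _)
  -- work with the increments in the variable time, decreasing weight
  have hcu : ∀ t, 0 < t → Continuous (u t) := fun t ht => (hu.c2 t ht).continuous
  have hcw : ∀ t ∈ Icc s T, ContinuousOn (w t) K := by
    intro t ht
    have : ContinuousOn (fun x => (t, x)) K := by fun_prop
    exact hwc.comp this (fun x hx => ⟨ht, hx⟩)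
  have hminex : ∀ t ∈ Icc s T, ∃ x ∈ K, ∀ y ∈ K, u t x - w t x ≤ u t y - w t y := by
    intro t ht
    have hco : ContinuousOn (fun x => u t x - w t x) K :=
      (hcu t (lt_of_lt_of_le hs ht.1)).continuousOn.sub (hcw t ht)
    obtain ⟨x, hx, hm⟩ := hK.exists_isMinOn ⟨x2, hx2⟩ hco
    exact ⟨x, hx, fun y hy => hm hy⟩
  have hP := down_induction (fun t => ∃ x ∈ K, exp (-(lam * t)) * (u t x - w t x) ≤ -c) s t2 ht2.1
    ⟨x2, hx2, by rw [hc]; apply le_of_eq; ring⟩ ?_ ?_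
  · obtain ⟨x, hx, hle⟩ := hP
    have : 0 ≤ exp (-(lam * s)) * (u s x - w s x) :=
      mul_nonneg (exp_pos _).le (sub_nonneg.2 (h0 x hx))
    linarith
  · intro a ha hPa
    have haT : a ∈ Icc s T := ⟨ha.1, ha.2.le.trans ht2.2⟩
    obtain ⟨x, hx, hm⟩ := hminex a haT
    refine ⟨x, hx, ?_⟩
    set m := u a x - w a x with hmdef
    -- limit from the right
    have key : ∀ ε > 0, ∃ δ > 0, ∀ t ∈ Ioc a t2, t < a + δ → exp (-(lam * t)) * (m - ε) ≤ -c := by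
      intro ε hε
      obtain ⟨δ1, hδ1, h1⟩ := hRL a ⟨ha.1, lt_of_lt_of_le ha.2 ht2.2⟩ (ε/2) (half_pos hε)
      have huc := (isCompact_Icc.prod hK).uniformContinuousOn_of_continuous hwc
      rw [Metric.uniformContinuousOn_iff] at huc
      obtain ⟨δ2, hδ2, h2⟩ := huc (ε/2) (half_pos hε)
      refine ⟨min δ1 δ2, lt_min hδ1 hδ2, fun t ht htd => ?_⟩
      obtain ⟨y, hy, hyle⟩ := hPa t ht
      refine le_trans (mul_le_mul_of_nonneg_left ?_ (exp_pos _).le) hyle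
      have e1 := h1 t ⟨ht.1.le, by linarith [min_le_left δ1 δ2]⟩ y hy
      have e2 := h2 (t, y) ⟨⟨ha.1.trans ht.1.le, ht.2.trans ht2.2⟩, hy⟩ (a, y) ⟨haT, hy⟩ (by
        rw [Prod.dist_eq]
        simp only [dist_self, Real.dist_eq]
        rw [abs_of_pos (sub_pos.2 ht.1)]
        apply max_lt _ hδ2
        linarith [min_le_right δ1 δ2])
      rw [Real.dist_eq, abs_lt] at e2
      simp only [Function.uncurry] at e2
      have e3 := hm y hy
      linarith [e2.1, e2.2]
    refine le_of_forall_pos_le_add fun η hη => ?_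
    -- choose ε with exp(-lam a) ε = η
    set ε := η * exp (lam * a) with hεdef
    have hε : 0 < ε := mul_pos hη (exp_pos _)
    obtain ⟨δ, hδ, hh⟩ := key ε hε
    have hT : Tendsto (fun t => exp (-(lam * t)) * (m - ε)) (𝓝[>] a)
        (𝓝 (exp (-(lam * a)) * (m - ε))) := by
      have : Continuous (fun t => exp (-(lam * t)) * (m - ε)) := by fun_prop
      exact (this.tendsto a).mono_left nhdsWithin_le_nhds
    have hev : ∀ᶠ t in 𝓝[>] a, exp (-(lam * t)) * (m - ε) ≤ -c := by
      have : Ioo a (min t2 (a + δ)) ∈ 𝓝[>] a :=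
        Ioo_mem_nhdsGT (lt_min ha.2 (by linarith))
      filter_upwards [this] with t ht
      have := ht.2
      rw [lt_min_iff] at this
      exact hh t ⟨ht.1, this.1.le⟩ this.2
    have := le_of_tendsto hT hev
    have e : exp (-(lam * a)) * ε = η := by
      rw [hεdef, mul_comm, mul_assoc, ← Real.exp_add]; simp
    linarith [mul_sub (exp (-(lam * a))) m ε]
  · intro t ht ⟨y, hy, hyle⟩
    have htT : t ∈ Icc s T := ⟨ht.1.le, ht.2.trans ht2.2⟩
    have ht0 : 0 < t := hs.trans ht.1
    obtain ⟨x, hx, hm⟩ := hminex t htT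
    have hxle : exp (-(lam * t)) * (u t x - w t x) ≤ -c :=
      le_trans (mul_le_mul_of_nonneg_left (hm y hy) (exp_pos _).le) hyle
    have hneg : u t x - w t x < 0 := by
      by_contra h
      push Not at h
      have := mul_nonneg (exp_pos (-(lam * t))).le h
      linarith
    have hxi : x ∈ interior K := by
      by_contra h
      have := hbd t htT x hx h
      have := hu.nonneg t ht0 x
      linarith
    obtain ⟨wt, D, hwt, hD, hle⟩ := hsub t ⟨ht.1, htT.2⟩ x hxi (by linarith)
    have hlap : D ≤ laplacian (u t) x := by
      refine lap_le_of_min (u t) (w t) x _ _ (hasLap_c2 _ (hu.c2 t ht0) x) hD ?_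
      filter_upwards [mem_interior_iff_mem_nhds.1 hxi] with z hz using hm z hz
    have hut := (hu.dt t ht0 x).hasDerivAt
    have hine := hu.ineq t ht0 x
    have hexp : HasDerivAt (fun t => exp (-(lam * t))) (exp (-(lam * t)) * (-lam)) t := by
      have : HasDerivAt (fun t => -(lam * t)) (-lam) t := by
        simpa using ((hasDerivAt_id t).const_mul lam).fun_neg
      exact this.exp
    have hder := hexp.mul (hut.sub hwt)
    obtain ⟨δ, hδ, hlt⟩ := left_lt_of_deriv_pos _ _ t hder (by
      have : exp (-(lam * t)) * (-lam) * (u t x - w t x) +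
        exp (-(lam * t)) * (deriv (fun s => u s x) t - wt) = exp (-(lam * t)) *
          (deriv (fun s => u s x) t - wt - lam * (u t x - w t x)) := by ring
      simp only [Pi.sub_apply]
      rw [this]
      apply mul_pos (exp_pos _)
      rw [hlam]
      nlinarith)
    refine ⟨δ, hδ, fun t' ht' hst' => ⟨x, hx, ?_⟩⟩
    have := hlt t' ht'
    simp only [Pi.mul_apply, Pi.sub_apply] at this
    linarith

/-- Unnormalised heat kernel. -/
def gam {n : ℕ} (t : ℝ) (x : Xn n) : ℝ := t ^ (-(n:ℝ)/2) * exp (-‖x‖^2 / (4*t))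

lemma gam_pos {n : ℕ} {t : ℝ} (ht : 0 < t) (x : Xn n) : 0 < gam t x :=
  mul_pos (rpow_pos_of_pos ht _) (exp_pos _)

lemma gam_continuousOn {n : ℕ} :
    ContinuousOn (fun p : ℝ × Xn n => gam p.1 p.2) (Ioi 0 ×ˢ univ) := by
  unfold gam
  apply ContinuousOn.mul
  · apply ContinuousOn.rpow_const (by fun_prop)
    intro p hp
    exact Or.inl (ne_of_gt hp.1)
  · apply Continuous.comp_continuousOn continuous_exp
    apply ContinuousOn.div (by fun_prop) (by fun_prop)
    intro p hp
    have : 0 < p.1 := hp.1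
    positivity

lemma gam_continuous {n : ℕ} (t : ℝ) : Continuous (gam t : Xn n → ℝ) := by
  unfold gam
  fun_prop

lemma gam_dt {n : ℕ} {t : ℝ} (ht : 0 < t) (x : Xn n) :
    HasDerivAt (fun t => gam t x) (gam t x * (‖x‖^2/(4*t^2) - n/(2*t))) t := by
  unfold gam
  have h1 : HasDerivAt (fun t : ℝ => t ^ (-(n:ℝ)/2)) (-(n:ℝ)/2 * t ^ (-(n:ℝ)/2 - 1)) t :=
    hasDerivAt_rpow_const (Or.inl ht.ne')
  have h2 : HasDerivAt (fun t : ℝ => -‖x‖^2 / (4*t)) (‖x‖^2/(4*t^2)) t := by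
    have h4 : HasDerivAt (fun t : ℝ => 4 * t) 4 t := by
      simpa using (hasDerivAt_id t).const_mul (4:ℝ)
    have := (hasDerivAt_const t (-‖x‖^2)).div h4 (by positivity)
    refine HasDerivAt.congr_deriv this ?_
    field_simp
    ring
  refine HasDerivAt.congr_deriv (h1.mul h2.exp) ?_
  rw [rpow_sub_one ht.ne']
  field_simp
  ring

lemma norm_line {n : ℕ} (x : Xn n) (i : Fin n) (r : ℝ) :
    ‖x + r • (ee i : Xn n)‖^2 = ‖x‖^2 + 2 * r * x i + r^2 := by
  rw [norm_add_sq_real, norm_smul, inner_smul_right]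
  have : inner ℝ x (ee i : Xn n) = x i := by simp [ee, EuclideanSpace.inner_single_right]
  rw [this]
  have h2 : ‖(ee i : Xn n)‖ = 1 := by simp [ee]
  rw [h2, mul_one, norm_eq_abs, sq_abs]
  ring

lemma gam_dir1 {n : ℕ} {t : ℝ} (x : Xn n) (i : Fin n) (r : ℝ) :
    HasDerivAt (fun r : ℝ => gam t (x + r • ee i))
      (gam t (x + r • ee i) * (-(x i + r)/(2*t))) r := by
  unfold gam
  simp only [norm_line]
  have h2 : HasDerivAt (fun r : ℝ => -(‖x‖^2 + 2 * r * x i + r^2) / (4*t))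
      (-(x i + r)/(2*t)) r := by
    have : HasDerivAt (fun r : ℝ => ‖x‖^2 + 2 * r * x i + r^2) (2 * x i + 2 * r) r := by
      have h1 := ((((hasDerivAt_id r).const_mul 2).mul_const (x i)).const_add (‖x‖^2)).fun_add
        ((hasDerivAt_id r).fun_pow 2)
      simpa using h1
    refine HasDerivAt.congr_deriv (this.fun_neg.div_const (4*t)) ?_
    by_cases h : t = 0
    · simp [h]
    field_simp
    ring
  refine HasDerivAt.congr_deriv (h2.exp.const_mul (t ^ (-(n:ℝ)/2))) ?_
  ring

lemma gam_dir2 {n : ℕ} {t : ℝ} (ht : 0 < t) (x : Xn n) (i : Fin n) (r : ℝ) :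
    HasDerivAt (fun r : ℝ => gam t (x + r • ee i) * (-(x i + r)/(2*t)))
      (gam t (x + r • ee i) * ((x i + r)^2/(4*t^2) - 1/(2*t))) r := by
  have h1 : HasDerivAt (fun r : ℝ => -(x i + r)/(2*t)) (-1/(2*t)) r :=
    (((hasDerivAt_id r).const_add (x i)).fun_neg).div_const (2*t)
  refine HasDerivAt.congr_deriv ((gam_dir1 x i r).mul h1) ?_
  field_simp
  ring

lemma norm_sq_sum {n : ℕ} (x : Xn n) : ‖x‖^2 = ∑ i, (x i)^2 := by
  rw [EuclideanSpace.norm_sq_eq]; simp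

lemma gam_lap {n : ℕ} {t : ℝ} (ht : 0 < t) (x : Xn n) :
    HasLap (gam t) x (gam t x * (‖x‖^2/(4*t^2) - n/(2*t))) := by
  refine ⟨_, fun i => gam t x * ((x i)^2/(4*t^2) - 1/(2*t)),
    fun i => Eventually.of_forall fun r => gam_dir1 x i r, fun i => ?_, ?_⟩
  · simpa using gam_dir2 ht x i 0
  · rw [← Finset.mul_sum, Finset.sum_sub_distrib, ← Finset.sum_div, ← norm_sq_sum]
    simp
    left
    field_simp

lemma exp_integrable {n : ℕ} {b : ℝ} (hb : 0 < b) :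
    Integrable (fun x : Xn n => exp (-b * ‖x‖^2)) := by
  have h := GaussianFourier.integral_rexp_neg_mul_sq_norm (V := Xn n) hb
  by_contra hc
  rw [integral_undef hc] at h
  have : 0 < (π / b) ^ ((Module.finrank ℝ (Xn n) : ℝ) / 2) := rpow_pos_of_pos (by positivity) _
  linarith

lemma gam_one {n : ℕ} (x : Xn n) : gam 1 x = exp (-(1/4) * ‖x‖^2) := by
  unfold gam; simp; ring

lemma gam1_integrable {n : ℕ} : Integrable (gam 1 : Xn n → ℝ) := by
  have := exp_integrable (n := n) (b := 1/4) (by norm_num)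
  refine this.congr (Eventually.of_forall fun x => (gam_one x).symm)

lemma gam1_mom {n : ℕ} : Integrable (fun x : Xn n => gam 1 x * ‖x‖) := by
  have := (exp_integrable (n := n) (b := 1/8) (by norm_num)).const_mul (exp 2)
  refine this.mono' ((gam_continuous 1).mul continuous_norm).aestronglyMeasurable
    (Eventually.of_forall fun x => ?_)
  rw [norm_of_nonneg (mul_nonneg (gam_pos one_pos x).le (norm_nonneg x)), gam_one, ← Real.exp_add]
  have h1 : ‖x‖ ≤ exp (2 + (1/8) * ‖x‖^2) := by
    refine le_trans ?_ (add_one_le_exp _)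
    nlinarith [sq_nonneg (‖x‖ - 4)]
  calc exp (-(1/4) * ‖x‖^2) * ‖x‖ ≤ exp (-(1/4) * ‖x‖^2) * exp (2 + (1/8) * ‖x‖^2) := by gcongr
    _ = _ := by rw [← Real.exp_add]; congr 1; ring

/-- Normalising constant. -/
def Zc (n : ℕ) : ℝ := ∫ x : Xn n, gam 1 x
/-- First absolute moment. -/
def mom (n : ℕ) : ℝ := (Zc n)⁻¹ * ∫ x : Xn n, gam 1 x * ‖x‖

lemma Zc_pos (n : ℕ) : 0 < Zc n := by
  unfold Zc
  have h := GaussianFourier.integral_rexp_neg_mul_sq_norm (V := Xn n) (b := 1/4) (by norm_num)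
  simp only [gam_one]
  rw [h]
  positivity

lemma mom_nonneg (n : ℕ) : 0 ≤ mom n :=
  mul_nonneg (inv_nonneg.2 (Zc_pos n).le)
    (integral_nonneg fun x => mul_nonneg (gam_pos one_pos x).le (norm_nonneg x))

/-- Heat evolution of `g`. -/
def heat {n : ℕ} (g : Xn n → ℝ) (τ : ℝ) (x : Xn n) : ℝ :=
  (Zc n)⁻¹ * ∫ z, gam 1 z * g (x - √τ • z)

lemma heat_zero {n : ℕ} (g : Xn n → ℝ) (x : Xn n) : heat g 0 x = g x := by
  unfold heat
  simp only [sqrt_zero, zero_smul, sub_zero]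
  rw [integral_mul_const]
  change (Zc n)⁻¹ * (Zc n * g x) = g x
  rw [inv_mul_cancel_left₀ (Zc_pos n).ne']

lemma heat_kernel {n : ℕ} (g : Xn n → ℝ) {τ : ℝ} (hτ : 0 < τ) (x : Xn n) :
    heat g τ x = (Zc n)⁻¹ * ∫ y, gam τ (x - y) * g y := by
  unfold heat
  congr 1
  have h1 : ∫ y, gam τ (x - y) * g y = ∫ y, gam τ y * g (x - y) := by
    rw [← integral_sub_left_eq_self (fun y => gam τ y * g (x - y)) volume x]
    simp
  rw [h1]
  have h2 := Measure.integral_comp_smul_of_nonneg (volume : Measure (Xn n))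
    (fun y => gam τ y * g (x - y)) (√τ) (hR := sqrt_nonneg τ)
  have h3 : ∀ z : Xn n, gam 1 z = (√τ)^n * gam τ (√τ • z) := by
    intro z
    unfold gam
    rw [norm_smul, norm_of_nonneg (sqrt_nonneg τ), mul_pow, sq_sqrt hτ.le]
    rw [← mul_assoc]
    have e1 : (√τ)^n * τ ^ (-(n:ℝ)/2) = 1 := by
      rw [sqrt_eq_rpow, ← rpow_natCast, ← rpow_mul hτ.le, ← rpow_add hτ]
      ring_nf
      exact rpow_zero τ
    rw [e1, one_rpow]
    congr 2
    field_simp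
  have h4 : ∫ z, gam 1 z * g (x - √τ • z)
      = (√τ)^n * ∫ z, gam τ (√τ • z) * g (x - √τ • z) := by
    rw [← integral_const_mul]
    congr 1
    ext z
    rw [h3 z]; ring
  rw [h4, h2]
  simp only [finrank_euclideanSpace, Fintype.card_fin, smul_eq_mul]
  rw [mul_inv_cancel_left₀]
  have := sqrt_pos.2 hτ
  positivity

lemma param_deriv {n : ℕ} (F F' : ℝ → Xn n → ℝ) (g : Xn n → ℝ) (hg : Continuous g)
    (hgs : HasCompactSupport g) (r0 ρ : ℝ) (hρ : 0 < ρ)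
    (hF : ∀ r ∈ Metric.closedBall r0 ρ, ∀ y, HasDerivAt (fun r => F r y) (F' r y) r)
    (hFc : ∀ r ∈ Metric.closedBall r0 ρ, Continuous (F r))
    (hF'c : ContinuousOn (fun p : ℝ × Xn n => F' p.1 p.2) (Metric.closedBall r0 ρ ×ˢ univ)) :
    HasDerivAt (fun r => ∫ y, F r y * g y) (∫ y, F' r0 y * g y) r0 := by
  have hcpt : IsCompact (Metric.closedBall r0 ρ ×ˢ tsupport g) :=
    (isCompact_closedBall r0 ρ).prod hgs
  obtain ⟨C, hC⟩ := hcpt.exists_bound_of_continuousOn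
    (hF'c.mono (prod_mono_right (subset_univ _)))
  have hr0 : r0 ∈ Metric.closedBall r0 ρ := Metric.mem_closedBall_self hρ.le
  have hF'0 : Continuous (F' r0) := by
    rw [← continuousOn_univ]
    exact hF'c.comp (by fun_prop : ContinuousOn (fun y : Xn n => (r0, y)) univ)
      (fun y hy => ⟨hr0, hy⟩)
  refine (hasDerivAt_integral_of_dominated_loc_of_deriv_le (F := fun r y => F r y * g y)
    (F' := fun r y => F' r y * g y) (bound := fun y => C * |g y|)
    (Metric.closedBall_mem_nhds r0 hρ) ?_ ?_ ?_ ?_ ?_ ?_).2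
  · filter_upwards [Metric.closedBall_mem_nhds r0 hρ] with r hr
    exact ((hFc r hr).mul hg).aestronglyMeasurable
  · exact ((hFc r0 hr0).mul hg).integrable_of_hasCompactSupport hgs.mul_left
  · exact (hF'0.mul hg).aestronglyMeasurable
  · refine Eventually.of_forall fun y r hr => ?_
    by_cases hy : y ∈ tsupport g
    · have := hC (r, y) ⟨hr, hy⟩
      rw [norm_mul, norm_eq_abs (g y)]
      gcongr
    · rw [image_eq_zero_of_notMem_tsupport hy]; simp
  · exact (hg.abs.integrable_of_hasCompactSupport hgs.abs).const_mul C
  · exact Eventually.of_forall fun y r hr => (hF r hr y).mul_const _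

/-- Space-time derivative value of the heat evolution. -/
def heatD {n : ℕ} (g : Xn n → ℝ) (τ : ℝ) (x : Xn n) : ℝ :=
  (Zc n)⁻¹ * ∫ y, gam τ (x - y) * (‖x - y‖^2/(4*τ^2) - n/(2*τ)) * g y

lemma heat_dt {n : ℕ} (g : Xn n → ℝ) (hg : Continuous g) (hgs : HasCompactSupport g)
    {τ : ℝ} (hτ : 0 < τ) (x : Xn n) :
    HasDerivAt (fun τ => heat g τ x) (heatD g τ x) τ := by
  have hpos : ∀ r ∈ Metric.closedBall τ (τ/2), 0 < r := by
    intro r hr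
    rw [Metric.mem_closedBall, Real.dist_eq, abs_le] at hr
    linarith [hr.1]
  have h := param_deriv (fun τ y => gam τ (x - y))
    (fun τ y => gam τ (x - y) * (‖x - y‖^2/(4*τ^2) - n/(2*τ))) g hg hgs τ (τ/2) (half_pos hτ)
    (fun r hr y => gam_dt (hpos r hr) (x - y))
    (fun r hr => (gam_continuous r).comp (by fun_prop)) ?_
  · have h2 := h.const_mul (Zc n)⁻¹
    refine h2.congr_of_eventuallyEq ?_
    filter_upwards [lt_mem_nhds hτ] with r hr using heat_kernel g hr x
  · apply ContinuousOn.mul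
    · exact gam_continuousOn.comp (f := fun p : ℝ × Xn n => (p.1, x - p.2))
        (by fun_prop) (fun p hp => ⟨hpos _ hp.1, mem_univ _⟩)
    · apply ContinuousOn.sub
      · apply ContinuousOn.div (by fun_prop) (by fun_prop)
        intro p hp
        have := hpos _ hp.1
        positivity
      · apply ContinuousOn.div (by fun_prop) (by fun_prop)
        intro p hp
        have := hpos _ hp.1
        positivity

lemma heat_lap {n : ℕ} (g : Xn n → ℝ) (hg : Continuous g) (hgs : HasCompactSupport g)
    {τ : ℝ} (hτ : 0 < τ) (x : Xn n) : HasLap (heat g τ) x (heatD g τ x) := by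
  have hc1 : Continuous (gam τ : Xn n → ℝ) := gam_continuous τ
  refine ⟨fun i r => (Zc n)⁻¹ * ∫ y, gam τ ((x - y) + r • ee i) * (-((x - y) i + r)/(2*τ)) * g y,
    fun i => (Zc n)⁻¹ * ∫ y, gam τ (x - y) * (((x - y) i)^2/(4*τ^2) - 1/(2*τ)) * g y, ?_, ?_, ?_⟩
  · intro i
    refine Eventually.of_forall fun r => ?_
    have h := param_deriv (fun r y => gam τ ((x - y) + r • ee i))
      (fun r y => gam τ ((x - y) + r • ee i) * (-((x - y) i + r)/(2*τ))) g hg hgs r 1 one_pos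
      (fun r _ y => gam_dir1 (x - y) i r) (fun r _ => hc1.comp (by fun_prop)) (by
        apply Continuous.continuousOn
        have : Continuous fun p : ℝ × Xn n => gam τ ((x - p.2) + p.1 • ee i) :=
          hc1.comp (by fun_prop)
        apply this.mul
        fun_prop)
    have h2 := h.const_mul (Zc n)⁻¹
    refine h2.congr_of_eventuallyEq (Eventually.of_forall fun r => ?_)
    simp only
    rw [heat_kernel g hτ]
    congr 2
    ext y
    congr 2
    abel
  · intro i
    have h := param_deriv (fun r y => gam τ ((x - y) + r • ee i) * (-((x - y) i + r)/(2*τ)))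
      (fun r y => gam τ ((x - y) + r • ee i) * (((x - y) i + r)^2/(4*τ^2) - 1/(2*τ)))
      g hg hgs 0 1 one_pos
      (fun r _ y => gam_dir2 hτ (x - y) i r) (fun r _ => by
        have : Continuous fun p : Xn n => gam τ ((x - p) + r • ee i) :=
          hc1.comp (by fun_prop)
        apply this.mul
        fun_prop) (by
        apply Continuous.continuousOn
        have : Continuous fun p : ℝ × Xn n => gam τ ((x - p.2) + p.1 • ee i) :=
          hc1.comp (by fun_prop)
        apply this.mul
        fun_prop)
    have h2 := h.const_mul (Zc n)⁻¹
    simpa using h2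
  · unfold heatD
    rw [← Finset.mul_sum, ← integral_finsetSum]
    · congr 2
      ext y
      rw [← Finset.sum_mul, ← Finset.mul_sum, Finset.sum_sub_distrib, ← Finset.sum_div,
        ← norm_sq_sum]
      congr 3
      simp
      field_simp
    · intro i _
      refine Continuous.integrable_of_hasCompactSupport ?_ hgs.mul_left
      have : Continuous fun p : Xn n => gam τ (x - p) := hc1.comp (by fun_prop)
      have h2 : Continuous fun p : Xn n => (((x - p) i)^2/(4*τ^2) - 1/(2*τ)) := by fun_prop
      exact (this.mul h2).mul hg

lemma heat_int {n : ℕ} (g : Xn n → ℝ) (hg : Continuous g) (M : ℝ) (hM : ∀ x, |g x| ≤ M)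
    (τ : ℝ) (x : Xn n) : Integrable (fun z => gam 1 z * g (x - √τ • z)) := by
  refine (gam1_integrable.mul_const M).mono' ?_ (Eventually.of_forall fun z => ?_)
  · apply Continuous.aestronglyMeasurable
    exact (gam_continuous 1).mul (hg.comp (by fun_prop))
  · rw [norm_mul, norm_of_nonneg (gam_pos one_pos z).le]
    exact mul_le_mul_of_nonneg_left (hM _) (gam_pos one_pos z).le

lemma heat_cont {n : ℕ} (g : Xn n → ℝ) (hg : Continuous g) (M : ℝ) (hM : ∀ x, |g x| ≤ M) :
    Continuous (fun p : ℝ × Xn n => heat g p.1 p.2) := by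
  unfold heat
  apply Continuous.mul continuous_const
  refine continuous_of_dominated (bound := fun z => gam 1 z * M) ?_ ?_
    (gam1_integrable.mul_const M) ?_
  · intro p
    exact (heat_int g hg M hM p.1 p.2).aestronglyMeasurable
  · intro p
    refine Eventually.of_forall fun z => ?_
    rw [norm_mul, norm_of_nonneg (gam_pos one_pos z).le]
    exact mul_le_mul_of_nonneg_left (hM _) (gam_pos one_pos z).le
  · refine Eventually.of_forall fun z => ?_
    have := continuous_sqrt
    exact continuous_const.mul (hg.comp (by fun_prop))

/-- If `g ≤ C + A |y - x|` then `heat g τ x ≤ C + A √τ mom`. -/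
lemma heat_upper {n : ℕ} (g : Xn n → ℝ) (hg : Continuous g) (M : ℝ) (hM : ∀ x, |g x| ≤ M)
    (τ : ℝ) (x : Xn n) (C A : ℝ) (h : ∀ y, g y ≤ C + A * ‖y - x‖) :
    heat g τ x ≤ C + A * √τ * mom n := by
  have hZ := Zc_pos n
  have h1 : ∫ z, gam 1 z * g (x - √τ • z) ≤ ∫ z : Xn n, (gam 1 z * C + (gam 1 z * ‖z‖) * (A * √τ)) := by
    refine integral_mono (heat_int g hg M hM τ x)
      ((gam1_integrable.mul_const C).add (gam1_mom.mul_const _)) fun z => ?_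
    have h2 := h (x - √τ • z)
    have h3 : ‖x - √τ • z - x‖ = √τ * ‖z‖ := by
      rw [sub_sub_cancel_left, norm_neg, norm_smul, norm_of_nonneg (sqrt_nonneg τ)]
    rw [h3] at h2
    have := mul_le_mul_of_nonneg_left h2 (gam_pos one_pos z).le
    simp only
    linarith
  rw [integral_add (gam1_integrable.mul_const C) (gam1_mom.mul_const _), integral_mul_const,
    integral_mul_const] at h1
  unfold heat mom
  have h2 := mul_le_mul_of_nonneg_left h1 (inv_pos.2 hZ).le
  refine h2.trans (le_of_eq ?_)
  change (Zc n)⁻¹ * (Zc n * C + _) = _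
  field_simp

lemma heat_neg {n : ℕ} (g : Xn n → ℝ) (τ : ℝ) (x : Xn n) :
    heat (fun y => - g y) τ x = - heat g τ x := by
  unfold heat
  simp only [mul_neg, integral_neg]

lemma heat_lower {n : ℕ} (g : Xn n → ℝ) (hg : Continuous g) (M : ℝ) (hM : ∀ x, |g x| ≤ M)
    (τ : ℝ) (x : Xn n) (C A : ℝ) (h : ∀ y, C - A * ‖y - x‖ ≤ g y) :
    C - A * √τ * mom n ≤ heat g τ x := by
  have := heat_upper (fun y => - g y) hg.neg M (by simpa using hM) τ x (-C) A
    (fun y => by linarith [h y])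
  rw [heat_neg] at this
  linarith

lemma RL.mono {n : ℕ} {u : ℝ → Xn n → ℝ} {K K' : Set (Xn n)} {t : ℝ} (h : RL u K t)
    (hK : K' ⊆ K) : RL u K' t := by
  intro ε hε
  obtain ⟨δ, hδ, hh⟩ := h ε hε
  exact ⟨δ, hδ, fun t' ht' x hx => hh t' ht' x (hK hx)⟩

lemma closedBall_bd {n : ℕ} (x0 : Xn n) (ρ : ℝ) (x : Xn n)
    (h : x ∉ interior (Metric.closedBall x0 ρ)) : ρ ≤ ‖x - x0‖ := by
  by_contra hc
  push Not at hc
  exact h (Metric.ball_subset_interior_closedBall (by rwa [Metric.mem_ball, dist_eq_norm]))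

lemma heat_compare {n : ℕ} {q : ℝ} {u : ℝ → Xn n → ℝ} (hu : Sol n q u) (x0 : Xn n) (ρ : ℝ)
    (s T : ℝ) (hs : 0 < s) (hsT : s ≤ T)
    (hRL : ∀ t ∈ Ico s T, RL u (Metric.closedBall x0 ρ) t)
    (g : Xn n → ℝ) (hg : Continuous g) (hgs : HasCompactSupport g) (M : ℝ)
    (hM : ∀ x, |g x| ≤ M) (hgu : ∀ x, g x ≤ u s x) (η : ℝ) (hη : 0 ≤ η)
    (hbd : ∀ t ∈ Icc s T, ∀ x, ρ ≤ ‖x - x0‖ → heat g (t - s) x ≤ η) :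
    ∀ x ∈ Metric.closedBall x0 ρ, heat g (T - s) x - η ≤ u T x := by
  have := comparison hu (Metric.closedBall x0 ρ) (isCompact_closedBall _ _) s T hs hRL
    (fun t x => heat g (t - s) x - η) ?_ 0 ?_ ?_ ?_
  · exact this T ⟨hsT, le_rfl⟩
  · apply Continuous.continuousOn
    have h1 := (heat_cont g hg M hM).comp
      (by fun_prop : Continuous (fun p : ℝ × Xn n => (p.1 - s, p.2)))
    exact h1.sub continuous_const
  · intro x _
    simp only [sub_self, heat_zero]
    linarith [hgu x]
  · intro t ht x _ hx
    have := hbd t ht x (closedBall_bd x0 ρ x hx)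
    linarith
  · intro t ht x _ _
    have hτ : 0 < t - s := sub_pos.2 ht.1
    refine ⟨heatD g (t - s) x, heatD g (t - s) x, ?_, (heat_lap g hg hgs hτ x).sub_const η, ?_⟩
    · have := (heat_dt g hg hgs hτ x).comp_sub_const t s
      exact this.sub_const η
    · have : 0 ≤ u t x ^ q := rpow_nonneg (hu.nonneg t (hs.trans ht.1) x) q
      linarith

lemma heat_far {n : ℕ} (g : Xn n → ℝ) (hg : Continuous g) (N : ℝ)
    (hM : ∀ x, |g x| ≤ N) (x0 : Xn n) (r ρ : ℝ) (hr : r < ρ)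
    (hsupp : ∀ y, r ≤ ‖y - x0‖ → g y = 0) (τ : ℝ) (x : Xn n) (hx : ρ ≤ ‖x - x0‖) :
    heat g τ x ≤ N / (ρ - r) * √τ * mom n := by
  have hN : 0 ≤ N := (abs_nonneg _).trans (hM 0)
  have h := heat_upper g hg N hM τ x 0 (N / (ρ - r)) ?_
  · linarith
  · intro y
    by_cases hy : r ≤ ‖y - x0‖
    · rw [hsupp y hy]
      have : 0 < ρ - r := sub_pos.2 hr
      positivity
    · push Not at hy
      have h1 : ρ - r ≤ ‖y - x‖ := by
        have : ‖x - x0‖ ≤ ‖x - y‖ + ‖y - x0‖ := by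
          have := norm_add_le (x - y) (y - x0)
          simpa using this
        rw [norm_sub_rev x y] at this
        linarith
      have h2 : N ≤ N / (ρ - r) * ‖y - x‖ := by
        rw [div_mul_eq_mul_div, le_div_iff₀ (sub_pos.2 hr)]
        exact mul_le_mul_of_nonneg_left h1 hN
      linarith [le_abs_self (g y), hM y]

/-- Cone function. -/
def cone {n : ℕ} (N r : ℝ) (x0 y : Xn n) : ℝ := max 0 (N * (1 - ‖y - x0‖ / r))

lemma cone_zero {n : ℕ} {N r : ℝ} (hN : 0 ≤ N) (hr : 0 < r) (x0 y : Xn n) (h : r ≤ ‖y - x0‖) :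
    cone N r x0 y = 0 := by
  unfold cone
  apply max_eq_left
  have : 1 ≤ ‖y - x0‖ / r := by rwa [le_div_iff₀ hr, one_mul]
  nlinarith

lemma cone_le {n : ℕ} {N r : ℝ} (hN : 0 ≤ N) (hr : 0 < r) (x0 y : Xn n) :
    cone N r x0 y ≤ N := by
  unfold cone
  apply max_le hN
  have : 0 ≤ ‖y - x0‖ / r := by positivity
  nlinarith

lemma cone_nonneg {n : ℕ} (N r : ℝ) (x0 y : Xn n) : 0 ≤ cone N r x0 y := le_max_left _ _

lemma cone_cont {n : ℕ} (N r : ℝ) (x0 : Xn n) : Continuous (cone N r x0) := by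
  unfold cone
  fun_prop

lemma supp_compact {n : ℕ} (g : Xn n → ℝ) (x0 : Xn n) (r : ℝ)
    (h : ∀ y, r ≤ ‖y - x0‖ → g y = 0) : HasCompactSupport g := by
  refine HasCompactSupport.intro (isCompact_closedBall x0 r) fun y hy => h y ?_
  rw [Metric.mem_closedBall, dist_eq_norm] at hy
  linarith

lemma gam_le {n : ℕ} {a t : ℝ} (ha : 0 < a) (hat : a ≤ t) (x : Xn n) :
    gam t x ≤ a ^ (-(n:ℝ)/2) := by
  unfold gam
  have ht := ha.trans_le hat
  have h1 : t ^ (-(n:ℝ)/2) ≤ a ^ (-(n:ℝ)/2) := by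
    apply rpow_le_rpow_of_nonpos ha hat
    have : (0:ℝ) ≤ n := Nat.cast_nonneg n
    linarith
  have h2 : exp (-‖x‖^2 / (4*t)) ≤ 1 := by
    rw [exp_le_one_iff]
    apply div_nonpos_of_nonpos_of_nonneg
    · have := sq_nonneg ‖x‖
      linarith
    · positivity
  calc _ ≤ t ^ (-(n:ℝ)/2) * 1 := by gcongr
    _ ≤ _ := by linarith

lemma gap {n : ℕ} {q : ℝ} {u : ℝ → Xn n → ℝ} (hu : Sol n q u) (R' R N ε : ℝ) (hR : R' < R)
    (hN : 0 ≤ N) (hε : 0 < ε) : ∃ δ > 0, ∀ α T, 0 < α → α < T → T ≤ α + δ →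
      (∀ t ∈ Ioo α T, ∀ R'' < R, RL u (Metric.closedBall 0 R'') t) →
      (∀ x ∈ Metric.closedBall (0 : Xn n) R, u α x ≤ N) →
      (∀ x ∈ Metric.closedBall (0 : Xn n) R, ∀ y ∈ Metric.closedBall (0 : Xn n) R,
        |u α x - u α y| ≤ N * ‖x - y‖) →
      ∀ x0 ∈ Metric.closedBall (0 : Xn n) R', u α x0 - ε ≤ u T x0 := by
  set r := (R - R') / 4 with hr
  have hrpos : 0 < r := by rw [hr]; linarith
  set A := N + N / r with hA
  have hA0 : 0 ≤ A := by positivity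
  have hm := mom_nonneg n
  set κ := ε / (2 * (A * mom n + 1)) with hκ
  have hκpos : 0 < κ := by positivity
  have hκA : ∀ B ≤ A, ∀ τ, τ ≤ κ^2 → 0 ≤ B → B * √τ * mom n ≤ ε / 2 := by
    intro B hB τ hτ hB0
    have h1 : √τ ≤ κ := by
      rw [← sqrt_sq hκpos.le]; exact sqrt_le_sqrt hτ
    calc B * √τ * mom n ≤ A * κ * mom n := by gcongr
      _ = (A * mom n) * κ := by ring
      _ ≤ (A * mom n + 1) * κ := by gcongr; linarith
      _ = ε / 2 := by rw [hκ]; field_simp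
  refine ⟨κ^2, by positivity, fun α T hα hαT hTδ hRL hbN hLip x0 hx0 => ?_⟩
  have hx0' : ‖x0‖ ≤ R' := by simpa using hx0
  set ψ := cone N r x0 with hψ
  set g : ℝ → Xn n → ℝ := fun s y => min (u s y) (ψ y) with hgdef
  have hg0 : ∀ s, 0 < s → ∀ y, 0 ≤ g s y := fun s hs y =>
    le_min (hu.nonneg s hs y) (cone_nonneg _ _ _ _)
  have hgψ : ∀ s y, g s y ≤ ψ y := fun s y => min_le_right _ _
  have hgM : ∀ s, 0 < s → ∀ y, |g s y| ≤ N := fun s hs y => by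
    rw [abs_of_nonneg (hg0 s hs y)]
    exact (hgψ s y).trans (cone_le hN hrpos _ _)
  have hgc : ∀ s, 0 < s → Continuous (g s) := fun s hs =>
    (hu.c2 s hs).continuous.min (cone_cont _ _ _)
  have hgsupp : ∀ s, 0 < s → ∀ y, r ≤ ‖y - x0‖ → g s y = 0 := fun s hs y hy =>
    le_antisymm ((hgψ s y).trans (cone_zero hN hrpos x0 y hy).le) (hg0 s hs y)
  -- comparison for s in (α, T)
  have hcomp : ∀ s ∈ Ioo α T, heat (g s) (T - s) x0 - ε/2 ≤ u T x0 := by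
    intro s hs
    have hs0 : 0 < s := hα.trans hs.1
    refine heat_compare hu x0 (2*r) s T hs0 hs.2.le ?_ (g s) (hgc s hs0)
      (supp_compact _ x0 r (hgsupp s hs0)) N (hgM s hs0) (fun x => min_le_left _ _) (ε/2)
      (half_pos hε).le ?_ x0 (Metric.mem_closedBall_self (by linarith))
    · intro t ht
      refine (hRL t ⟨hs.1.trans_le ht.1, ht.2⟩ ((R + R')/2) (by linarith)).mono ?_
      intro y hy
      rw [Metric.mem_closedBall, dist_eq_norm] at hy ⊢
      have : ‖y - 0‖ ≤ ‖y - x0‖ + ‖x0‖ := by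
        have := norm_add_le (y - x0) x0
        simpa using this
      rw [hr] at hy
      linarith
    · intro t ht x hx
      have h1 := heat_far (g s) (hgc s hs0) N (hgM s hs0) x0 r (2*r) (by linarith)
        (hgsupp s hs0) (t - s) x hx
      refine h1.trans (hκA _ ?_ _ ?_ ?_)
      · have : 2 * r - r = r := by ring
        rw [this, hA]; linarith
      · linarith [hs.1, ht.2]
      · have : 2 * r - r = r := by ring
        rw [this]; positivity
  -- limit s → α+
  have hlim : Tendsto (fun s => heat (g s) (T - s) x0) (𝓝[>] α) (𝓝 (heat (g α) (T - α) x0)) := by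
    have hev : ∀ᶠ s in 𝓝[>] α, s ∈ Ioo α ((α + T)/2) :=
      Ioo_mem_nhdsGT (by linarith)
    rw [heat_kernel _ (sub_pos.2 hαT)]
    have : Tendsto (fun s => (Zc n)⁻¹ * ∫ y, gam (T - s) (x0 - y) * g s y) (𝓝[>] α)
        (𝓝 ((Zc n)⁻¹ * ∫ y, gam (T - α) (x0 - y) * g α y)) := by
      apply Tendsto.const_mul
      refine tendsto_integral_filter_of_dominated_convergence
        (fun y => ((T - α)/2) ^ (-(n:ℝ)/2) * ψ y) ?_ ?_ ?_ ?_
      · filter_upwards [hev] with s hs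
        apply Continuous.aestronglyMeasurable
        exact ((gam_continuous _).comp (by fun_prop)).mul (hgc s (hα.trans hs.1))
      · filter_upwards [hev] with s hs
        refine Eventually.of_forall fun y => ?_
        have hs0 := hα.trans hs.1
        have hTs : 0 < T - s := by linarith [hs.2]
        rw [norm_mul, norm_of_nonneg (gam_pos hTs _).le, norm_of_nonneg (hg0 s hs0 y)]
        have h1 := gam_le (n := n) (a := (T - α)/2) (t := T - s) (by linarith)
          (by linarith [hs.2]) (x0 - y)
        exact mul_le_mul h1 (hgψ s y) (hg0 s hs0 y)
          (rpow_nonneg (by linarith) _)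
      · exact ((cone_cont N r x0).integrable_of_hasCompactSupport
          (supp_compact _ x0 r (cone_zero hN hrpos x0))).const_mul _
      · refine Eventually.of_forall fun y => ?_
        apply Tendsto.mul
        · have hd := (gam_dt (sub_pos.2 hαT) (x0 - y)).continuousAt
          have h2 : Tendsto (fun s => T - s) (𝓝[>] α) (𝓝 (T - α)) := by
            have : Continuous (fun s : ℝ => T - s) := by fun_prop
            exact (this.tendsto α).mono_left nhdsWithin_le_nhds
          exact hd.tendsto.comp h2
        · have hd := (hu.dt α hα y).continuousAt.tendsto.mono_left
            (nhdsWithin_le_nhds (s := Ioi α))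
          exact hd.min tendsto_const_nhds
    refine this.congr' ?_
    filter_upwards [hev] with s hs
    rw [heat_kernel _ (by linarith [hs.2])]
  have hle : heat (g α) (T - α) x0 - ε/2 ≤ u T x0 := by
    refine le_of_tendsto (hlim.sub_const (ε/2)) ?_
    filter_upwards [Ioo_mem_nhdsGT hαT] with s hs using hcomp s hs
  have hlow : u α x0 - A * √(T - α) * mom n ≤ heat (g α) (T - α) x0 := by
    refine heat_lower (g α) (hgc α hα) N (hgM α hα) _ x0 _ A fun y => ?_
    have hx0R : x0 ∈ Metric.closedBall (0 : Xn n) R := by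
      rw [mem_closedBall_zero_iff]; linarith
    have hu0 := hbN x0 hx0R
    have hd : 0 ≤ ‖y - x0‖ := norm_nonneg _
    have hNr : 0 ≤ N / r := by positivity
    have hc : u α x0 - A * ‖y - x0‖ ≤ N * (1 - ‖y - x0‖ / r) := by
      have : N * (1 - ‖y - x0‖ / r) = N - (N / r) * ‖y - x0‖ := by ring
      rw [this, hA]
      nlinarith
    refine le_min ?_ (hc.trans (le_max_right _ _))
    by_cases hy : r ≤ ‖y - x0‖
    · refine le_trans hc (le_trans ?_ (hu.nonneg α hα y))
      have : 1 ≤ ‖y - x0‖ / r := by rwa [le_div_iff₀ hrpos, one_mul]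
      nlinarith
    · push Not at hy
      have hyR : y ∈ Metric.closedBall (0 : Xn n) R := by
        rw [mem_closedBall_zero_iff]
        have : ‖y‖ ≤ ‖y - x0‖ + ‖x0‖ := by
          have := norm_add_le (y - x0) x0
          simpa using this
        rw [hr] at hy
        linarith
      have := (abs_le.1 (hLip y hyR x0 hx0R)).1
      rw [hA]
      nlinarith
  have := hκA A le_rfl (T - α) (by linarith) hA0
  linarith

/-- Bounded and Lipschitz on the ball of radius `R`. -/
def BL {n : ℕ} (u : ℝ → Xn n → ℝ) (R : ℝ) (N : ℝ) (t : ℝ) : Prop :=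
  (∀ x ∈ Metric.closedBall (0 : Xn n) R, u t x ≤ N) ∧
    ∀ x ∈ Metric.closedBall (0 : Xn n) R, ∀ y ∈ Metric.closedBall (0 : Xn n) R,
      |u t x - u t y| ≤ N * ‖x - y‖

lemma BL_exists {n : ℕ} {q : ℝ} {u : ℝ → Xn n → ℝ} (hu : Sol n q u) (R t : ℝ) (ht : 0 < t) :
    ∃ N : ℕ, BL u R N t := by
  have hK : IsCompact (Metric.closedBall (0 : Xn n) R) := isCompact_closedBall _ _
  have hc : ContDiff ℝ 1 (u t) := (hu.c2 t ht).of_le (by norm_num)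
  obtain ⟨K, hKl⟩ := hc.locallyLipschitz.locallyLipschitzOn.exists_lipschitzOnWith_of_compact hK
  obtain ⟨C, hC⟩ := hK.exists_bound_of_continuousOn hc.continuous.continuousOn
  obtain ⟨N, hN⟩ := exists_nat_ge (max (K : ℝ) C)
  refine ⟨N, fun x hx => ?_, fun x hx y hy => ?_⟩
  · exact ((le_abs_self _).trans (hC x hx)).trans ((le_max_right _ _).trans hN)
  · have := hKl.dist_le_mul x hx y hy
    rw [Real.dist_eq, dist_eq_norm] at this
    refine this.trans ?_
    gcongr
    exact (le_max_left _ _).trans hN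

lemma BL_equi {n : ℕ} {q : ℝ} {u : ℝ → Xn n → ℝ} (hu : Sol n q u) (R N t' : ℝ) (hN : 0 ≤ N)
    (ht' : 0 < t') (hb : BL u R N t') (ε : ℝ) (hε : 0 < ε) :
    ∃ δ > 0, ∀ t, |t - t'| < δ → BL u R N t →
      ∀ x ∈ Metric.closedBall (0 : Xn n) R, |u t x - u t' x| ≤ ε := by
  have hK : IsCompact (Metric.closedBall (0 : Xn n) R) := isCompact_closedBall _ _
  have := hK.eventually_forall_of_forall_eventually (x₀ := t')
    (P := fun t x => BL u R N t → x ∈ Metric.closedBall (0 : Xn n) R → |u t x - u t' x| ≤ ε) ?_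
  · obtain ⟨δ, hδ, h⟩ := Metric.eventually_nhds_iff.1 this
    refine ⟨δ, hδ, fun t ht hbt x hx => h (by rwa [Real.dist_eq]) x hx hbt hx⟩
  · intro y hy
    have h1 : ∀ᶠ t in 𝓝 t', |u t y - u t' y| < ε / 2 := by
      have := (hu.dt t' ht' y).continuousAt
      have := Metric.continuousAt_iff'.1 this (ε/2) (half_pos hε)
      simpa [Real.dist_eq] using this
    have h2 : ∀ᶠ x in 𝓝 y, N * ‖x - y‖ < ε / 4 := by
      have hc : Continuous fun x : Xn n => N * ‖x - y‖ := by fun_prop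
      have := hc.tendsto y
      simp only [sub_self, norm_zero, mul_zero] at this
      exact this.eventually (gt_mem_nhds (by positivity))
    rw [nhds_prod_eq]
    filter_upwards [h1.prod_mk h2] with z hz hbt hx
    have e1 := hbt.2 z.2 hx y hy
    have e2 := hb.2 z.2 hx y hy
    have e3 := hz.1
    have e4 := hz.2
    rw [abs_le] at *
    rw [abs_lt] at e3
    constructor <;> linarith [e1.1, e1.2, e2.1, e2.2, e3.1, e3.2]

lemma BL_closed {n : ℕ} {q : ℝ} {u : ℝ → Xn n → ℝ} (hu : Sol n q u) (R N : ℝ) (S : Set ℝ)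
    (hS : ∀ t ∈ S, 0 < t) : IsClosed {t : S | BL u R N t} := by
  have hc : ∀ x, Continuous fun t : S => u t x := by
    intro x
    rw [continuous_iff_continuousAt]
    intro t
    exact ContinuousAt.comp (g := fun s => u s x) (hu.dt t (hS t t.2) x).continuousAt
      continuous_subtype_val.continuousAt
  have : {t : S | BL u R N t} = (⋂ x ∈ Metric.closedBall (0 : Xn n) R, {t : S | u t x ≤ N}) ∩
      ⋂ x ∈ Metric.closedBall (0 : Xn n) R, ⋂ y ∈ Metric.closedBall (0 : Xn n) R,
        {t : S | |u t x - u t y| ≤ N * ‖x - y‖} := by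
    ext t
    simp only [BL, mem_ofPred_eq, mem_inter_iff, mem_iInter]
  rw [this]
  refine IsClosed.inter ?_ ?_
  · exact isClosed_biInter fun x _ => isClosed_le (hc x) continuous_const
  · exact isClosed_biInter fun x _ => isClosed_biInter fun y _ =>
      isClosed_le ((hc x).sub (hc y)).abs continuous_const

lemma rl_all {n : ℕ} {q : ℝ} {u : ℝ → Xn n → ℝ} (hu : Sol n q u) (R τ0 : ℝ) (hτ0 : 0 < τ0) :
    ∀ t, τ0 ≤ t → ∀ R' < R, RL u (Metric.closedBall 0 R') t := by
  set W : ℝ → Prop := fun t => ∀ R' < R, RL u (Metric.closedBall 0 R') t with hW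
  set G : Set ℝ := {t | ∃ ρ > 0, ∀ t' ∈ Metric.ball t ρ, τ0 ≤ t' → W t'} with hG
  have hGo : IsOpen G := by
    rw [Metric.isOpen_iff]
    rintro t ⟨ρ, hρ, h⟩
    refine ⟨ρ, hρ, fun s hs => ?_⟩
    obtain ⟨ρ', hρ', hb⟩ := Metric.isOpen_iff.1 Metric.isOpen_ball s hs
    exact ⟨ρ', hρ', fun t' ht' => h t' (hb ht')⟩
  set S : Set ℝ := Ici τ0 \ G with hS
  have hSc : IsClosed S := isClosed_Ici.inter hGo.isClosed_compl
  have hGW : ∀ t, τ0 ≤ t → t ∉ S → W t := by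
    intro t ht hnt
    have : t ∈ G := by
      by_contra h
      exact hnt ⟨ht, h⟩
    obtain ⟨ρ, hρ, h⟩ := this
    exact h t (Metric.mem_ball_self hρ) ht
  have hSpos : ∀ t ∈ S, 0 < t := fun t ht => hτ0.trans_le ht.1
  suffices hSe : S = ∅ by
    intro t ht
    exact hGW t ht (by rw [hSe]; exact notMem_empty _)
  by_contra hne
  have hne := nonempty_iff_ne_empty.2 hne
  have : Nonempty S := hne.to_subtype
  have : CompleteSpace S := hSc.completeSpace_coe
  obtain ⟨N, ⟨t0, ht0⟩, hntr⟩ := nonempty_interior_of_iUnion_of_closed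
    (f := fun N : ℕ => {t : S | BL u R N t}) (fun N => BL_closed hu R N S hSpos) (by
      rw [eq_univ_iff_forall]
      intro t
      obtain ⟨N, hN⟩ := BL_exists hu R t (hSpos t t.2)
      exact mem_iUnion.2 ⟨N, hN⟩)
  rw [mem_interior_iff_mem_nhds, Metric.mem_nhds_iff] at hntr
  obtain ⟨ρ, hρ, hball⟩ := hntr
  have hBL : ∀ t ∈ S, |t - t0| < ρ → BL u R N t := by
    intro t ht htt
    have : (⟨t, ht⟩ : S) ∈ Metric.ball (⟨t0, ht0⟩ : S) ρ := by
      rw [Metric.mem_ball, Subtype.dist_eq, Real.dist_eq]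
      exact htt
    exact hball this
  refine ht0.2 ⟨ρ, hρ, fun t' ht' hτt' => ?_⟩
  rw [Metric.mem_ball, Real.dist_eq] at ht'
  by_cases htS : t' ∈ S
  swap
  · exact hGW t' hτt' htS
  intro R' hR' ε hε
  have ht'0 := hSpos t' htS
  obtain ⟨δ1, hδ1, hgap⟩ := gap hu R' R N (ε/2) hR' (Nat.cast_nonneg N) (half_pos hε)
  obtain ⟨δ2, hδ2, hequi⟩ := BL_equi hu R N t' (Nat.cast_nonneg N) ht'0 (hBL t' htS ht') (ε/2)
    (half_pos hε)
  have hsl : 0 < ρ - |t' - t0| := by linarith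
  set δ := min δ1 (min (δ2/2) ((ρ - |t' - t0|)/2)) with hδ
  have d1 : δ ≤ δ1 := min_le_left _ _
  have d2 : δ ≤ δ2/2 := (min_le_right _ _).trans (min_le_left _ _)
  have d3 : δ ≤ (ρ - |t' - t0|)/2 := (min_le_right _ _).trans (min_le_right _ _)
  have hδ0 : 0 < δ := lt_min hδ1 (lt_min (half_pos hδ2) (half_pos hsl))
  have hnear : ∀ t ∈ S, t ∈ Icc t' (t' + δ) → BL u R N t ∧
      ∀ x ∈ Metric.closedBall (0 : Xn n) R, |u t x - u t' x| ≤ ε/2 := by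
    intro t ht hti
    have h1 : |t - t'| ≤ δ := by
      rw [abs_le]; constructor <;> linarith [hti.1, hti.2]
    have h2 : |t - t0| < ρ := by
      have := abs_sub_le t t' t0
      linarith
    refine ⟨hBL t ht h2, hequi t (by linarith) (hBL t ht h2)⟩
  refine ⟨δ, hδ0, fun t ht x hx => ?_⟩
  have hxR : x ∈ Metric.closedBall (0 : Xn n) R := Metric.closedBall_subset_closedBall hR'.le hx
  have hcomp : IsCompact (S ∩ Icc t' t) := isCompact_Icc.inter_left hSc
  have hmem := hcomp.sSup_mem ⟨t', htS, le_rfl, ht.1⟩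
  set α := sSup (S ∩ Icc t' t) with hα
  have hαi : α ∈ Icc t' (t' + δ) := ⟨hmem.2.1, hmem.2.2.trans ht.2⟩
  obtain ⟨hb, hd⟩ := hnear α hmem.1 hαi
  have h1 := (abs_le.1 (hd x hxR)).1
  rcases eq_or_lt_of_le hmem.2.2 with h | h
  · rw [← h]; linarith
  · have h2 := hgap α t (hSpos α hmem.1) h (by linarith [ht.2, hmem.2.1]) (fun s hs => ?_) hb.1 hb.2
      x hx
    · linarith
    · refine hGW s (hmem.1.1.trans hs.1.le) fun hsS => ?_
      have : s ≤ α := le_csSup hcomp.bddAbove ⟨hsS, hmem.2.1.trans hs.1.le, hs.2.le⟩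
      linarith [hs.1]

lemma rl_ball {n : ℕ} {q : ℝ} {u : ℝ → Xn n → ℝ} (hu : Sol n q u) (x0 : Xn n) (R t : ℝ)
    (ht : 0 < t) : RL u (Metric.closedBall x0 R) t := by
  refine (rl_all hu (‖x0‖ + R + 1) t ht t le_rfl (‖x0‖ + R) (by linarith)).mono ?_
  intro y hy
  rw [Metric.mem_closedBall, dist_eq_norm] at hy ⊢
  have := norm_add_le (y - x0) x0
  simp only [sub_add_cancel, sub_zero] at *
  linarith

lemma gauss_lower {n : ℕ} {q : ℝ} {u : ℝ → Xn n → ℝ} (hu : Sol n q u) (t0 : ℝ) (ht0 : 0 < t0)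
    (x0 : Xn n) (hpos : 0 < u t0 x0) :
    ∃ s > 0, ∃ a > 0, ∃ c > 0, ∀ x, c * gam a x ≤ u s x := by
  set g : Xn n → ℝ := fun y => min (u t0 y) (cone 1 1 x0 y) with hgdef
  have hg0 : ∀ y, 0 ≤ g y := fun y => le_min (hu.nonneg t0 ht0 y) (cone_nonneg _ _ _ _)
  have hgψ : ∀ y, g y ≤ cone 1 1 x0 y := fun y => min_le_right _ _
  have hgM : ∀ y, |g y| ≤ 1 := fun y => by
    rw [abs_of_nonneg (hg0 y)]
    exact (hgψ y).trans (cone_le zero_le_one one_pos _ _)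
  have hgc : Continuous g := (hu.c2 t0 ht0).continuous.min (cone_cont _ _ _)
  have hgsupp : ∀ y, 1 ≤ ‖y - x0‖ → g y = 0 := fun y hy =>
    le_antisymm ((hgψ y).trans (cone_zero zero_le_one one_pos x0 y hy).le) (hg0 y)
  have hgs := supp_compact _ x0 1 hgsupp
  have hgx : g x0 ≠ 0 := by
    have : 0 < g x0 := lt_min hpos (by unfold cone; simp)
    exact this.ne'
  have hm := mom_nonneg n
  have hheat : ∀ x, heat g 1 x ≤ u (t0 + 1) x := by
    intro x
    refine le_of_forall_pos_le_add fun η hη => ?_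
    set ρ := ‖x - x0‖ + 2 + mom n / η with hρ
    have hρ1 : 1 < ρ := by
      have : 0 ≤ mom n / η := by positivity
      have := norm_nonneg (x - x0)
      linarith
    have h := heat_compare hu x0 ρ t0 (t0+1) ht0 (by linarith)
      (fun t ht => rl_ball hu x0 ρ t (ht0.trans_le ht.1)) g hgc hgs 1 hgM (fun x => min_le_left _ _)
      η hη.le ?_ x ?_
    · simp only [add_sub_cancel_left] at h
      linarith
    · intro t ht y hy
      refine (heat_far g hgc 1 hgM x0 1 ρ hρ1 hgsupp (t - t0) y hy).trans ?_
      have h1 : √(t - t0) ≤ 1 := by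
        exact Real.sqrt_le_iff.2 ⟨zero_le_one, by linarith [ht.2]⟩
      have h2 : 0 < ρ - 1 := by linarith
      have h3 : 1 / (ρ - 1) * √(t - t0) * mom n ≤ 1 / (ρ - 1) * 1 * mom n := by gcongr
      refine h3.trans ?_
      have h4 : mom n / η ≤ ρ - 1 := by
        have := norm_nonneg (x - x0)
        linarith
      rw [mul_one, one_div, inv_mul_le_iff₀ h2]
      rwa [div_le_iff₀ hη] at h4
    · rw [Metric.mem_closedBall, dist_eq_norm]
      have : 0 ≤ mom n / η := by positivity
      linarith
  set J := ∫ y, exp (-‖y‖^2/2) * g y with hJ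
  have hce : Continuous fun y : Xn n => exp (-‖y‖^2/2) := by fun_prop
  have hJi : Integrable fun y => exp (-‖y‖^2/2) * g y :=
    (hce.mul hgc).integrable_of_hasCompactSupport hgs.mul_left
  have hJpos : 0 < J := by
    refine (hce.mul hgc).integral_pos_of_hasCompactSupport_nonneg_nonzero hgs.mul_left
      (fun y => mul_nonneg (exp_pos _).le (hg0 y)) (x := x0) ?_
    exact mul_ne_zero (exp_pos _).ne' hgx
  have hZ := Zc_pos n
  refine ⟨t0+1, by linarith, 1/2, by norm_num, (Zc n)⁻¹ * J / (1/2 : ℝ)^(-(n:ℝ)/2),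
    by positivity, fun x => le_trans ?_ (hheat x)⟩
  rw [heat_kernel g one_pos]
  have e : (Zc n)⁻¹ * J / (1/2 : ℝ)^(-(n:ℝ)/2) * gam (1/2) x =
      (Zc n)⁻¹ * ∫ y, exp (-‖x‖^2/2) * (exp (-‖y‖^2/2) * g y) := by
    rw [integral_const_mul, ← hJ]
    unfold gam
    have : (0:ℝ) < (1/2 : ℝ)^(-(n:ℝ)/2) := by positivity
    have h2 : -‖x‖^2 / (4 * (1/2)) = -‖x‖^2/2 := by ring
    rw [h2]
    field_simp
  rw [e]
  apply mul_le_mul_of_nonneg_left _ (by positivity)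
  apply integral_mono (hJi.const_mul _)
  · have : Continuous fun y => gam 1 (x - y) := (gam_continuous 1).comp (by fun_prop)
    exact (this.mul hgc).integrable_of_hasCompactSupport hgs.mul_left
  · intro y
    simp only
    rw [← mul_assoc]
    apply mul_le_mul_of_nonneg_right _ (hg0 y)
    rw [gam_one, ← exp_add]
    apply exp_le_exp.2
    have h1 := norm_sub_le x y
    have h2 : ‖x - y‖^2 ≤ (‖x‖ + ‖y‖)^2 := by gcongr
    nlinarith [sq_nonneg (‖x‖ - ‖y‖)]

lemma gam_far {n : ℕ} (A T : ℝ) (hA : 0 < A) (hT : 0 ≤ T) (η : ℝ) (hη : 0 < η) :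
    ∃ R0 > 0, ∀ x : Xn n, R0 ≤ ‖x‖ → ∀ τ ∈ Icc 0 T, gam (τ + A) x ≤ η := by
  have h1 : Tendsto (fun r : ℝ => A^(-(n:ℝ)/2) * exp (-(r^2/(4*(T+A))))) atTop (𝓝 0) := by
    have : Tendsto (fun r : ℝ => r^2/(4*(T+A))) atTop atTop :=
      (tendsto_pow_atTop (by norm_num)).atTop_div_const (by positivity)
    have := (tendsto_exp_neg_atTop_nhds_zero.comp this).const_mul (A^(-(n:ℝ)/2))
    simpa using this
  obtain ⟨R0, hR0⟩ := eventually_atTop.1 (h1.eventually (gt_mem_nhds hη))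
  refine ⟨max R0 1, by positivity, fun x hx τ hτ => le_trans ?_ (hR0 ‖x‖ ((le_max_left _ _).trans hx)).le⟩
  unfold gam
  have ht : 0 < τ + A := by linarith [hτ.1]
  apply mul_le_mul _ _ (exp_pos _).le (by positivity)
  · exact rpow_le_rpow_of_nonpos hA (by linarith [hτ.1])
      (by rw [neg_div]; exact neg_nonpos.2 (by positivity))
  · apply exp_le_exp.2
    rw [neg_div]
    apply neg_le_neg
    apply div_le_div_of_nonneg_left (by positivity) (by positivity)
    linarith [hτ.2]

lemma gauss_compare {n : ℕ} {q : ℝ} {u : ℝ → Xn n → ℝ} (hu : Sol n q u) (s : ℝ) (hs : 0 < s)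
    (c1 c2 l A B T : ℝ) (hc1 : 0 ≤ c1) (hc2 : 0 ≤ c2) (hl : 0 ≤ l) (hA : 0 < A) (hB : 0 < B)
    (hT : 0 ≤ T) (h0 : ∀ x, c1 * gam A x + c2 * gam B x ≤ u s x)
    (hq : ∀ τ ∈ Icc 0 T, ∀ x, l * gam (τ + B) x ≤ u (s + τ) x ^ q) :
    ∀ x, c1 * gam (T + A) x + (c2 + l * T) * gam (T + B) x ≤ u (s + T) x := by
  intro x
  refine le_of_forall_pos_le_add fun η hη => ?_
  set C := c1 + c2 + l * T + 1 with hC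
  have hC0 : 0 < C := by positivity
  obtain ⟨R1, hR1p, hR1⟩ := gam_far (n := n) A T hA hT (η / C) (by positivity)
  obtain ⟨R2, hR2p, hR2⟩ := gam_far (n := n) B T hB hT (η / C) (by positivity)
  set R := max (max R1 R2) ‖x‖ with hR
  have cont : ∀ A, 0 < A → ContinuousOn (fun p : ℝ × Xn n => gam (p.1 - s + A) p.2)
      (Icc s (s+T) ×ˢ Metric.closedBall (0 : Xn n) R) := by
    intro A hA
    exact gam_continuousOn.comp (f := fun p : ℝ × Xn n => (p.1 - s + A, p.2))
        (by fun_prop) (fun p hp => ⟨by simp only [mem_Ioi]; linarith [hp.1.1], mem_univ _⟩)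
  have := comparison hu (Metric.closedBall (0 : Xn n) R) (isCompact_closedBall _ _) s (s+T) hs
    (fun t ht => rl_ball hu 0 R t (hs.trans_le ht.1))
    (fun t x => c1 * gam (t - s + A) x + (c2 + l * (t - s)) * gam (t - s + B) x - η)
    ?_ 0 ?_ ?_ ?_ (s+T) ⟨by linarith, le_rfl⟩ x ?_
  · simp only [add_sub_cancel_left] at this
    linarith
  · exact (((cont A hA).const_mul c1 |>.add (ContinuousOn.mul (by fun_prop) (cont B hB)))).sub
      continuousOn_const
  · intro y _
    have := h0 y
    simp only [sub_self, zero_add, mul_zero, add_zero]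
    linarith
  · intro t ht y _ hy
    have hy := closedBall_bd 0 R y (by assumption)
    rw [sub_zero] at hy
    have hti : t - s ∈ Icc 0 T := ⟨by linarith [ht.1], by linarith [ht.2]⟩
    have b1 := hR1 y ((le_max_left _ _).trans ((le_max_left _ _).trans hy)) _ hti
    have b2 := hR2 y ((le_max_right _ _).trans ((le_max_left _ _).trans hy)) _ hti
    have b3 : c1 * gam (t - s + A) y ≤ c1 * (η / C) := by gcongr
    have b4 : (c2 + l * (t - s)) * gam (t - s + B) y ≤ (c2 + l * T) * (η / C) := by
      apply mul_le_mul _ b2 (gam_pos (by linarith [hti.1]) _).le (by positivity)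
      have := mul_le_mul_of_nonneg_left hti.2 hl
      linarith
    have b5 : C * (η / C) = η := by field_simp
    have : 0 < η / C := by positivity
    have b6 : C * (η / C) = c1 * (η / C) + (c2 + l * T) * (η / C) + η / C := by rw [hC]; ring
    linarith
  · intro t ht y _ _
    have hti : t - s ∈ Icc 0 T := ⟨by linarith [ht.1], by linarith [ht.2]⟩
    have pA : 0 < t - s + A := by linarith [hti.1]
    have pB : 0 < t - s + B := by linarith [hti.1]
    have sh : ∀ A, HasDerivAt (fun t => t - s + A) 1 t := fun A =>
      ((hasDerivAt_id t).sub_const s).add_const A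
    have dA := (gam_dt pA y).comp t (sh A)
    have dB := (gam_dt pB y).comp t (sh B)
    have dl : HasDerivAt (fun t => c2 + l * (t - s)) l t := by
      simpa using (((hasDerivAt_id t).sub_const s).const_mul l).const_add c2
    have d := ((dA.const_mul c1).fun_add (dl.fun_mul dB)).sub_const η
    have lp := (((gam_lap pA y).const_mul c1).add
      ((gam_lap pB y).const_mul (c2 + l * (t - s)))).sub_const η
    refine ⟨_, _, d, lp, ?_⟩
    have := hq _ hti y
    rw [add_sub_cancel] at this
    simp only [Function.comp]
    linarith
  · rw [Metric.mem_closedBall, dist_zero_right]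
    exact le_max_right _ _

lemma gam_le_zero {n : ℕ} {t : ℝ} (ht : 0 < t) (x : Xn n) : gam t x ≤ gam t (0 : Xn n) := by
  unfold gam
  apply mul_le_mul_of_nonneg_left _ (by positivity)
  apply exp_le_exp.2
  rw [norm_zero, neg_div, neg_div]
  apply neg_le_neg
  have : 0 ≤ ‖x‖^2 / (4*t) := by positivity
  simpa using this

lemma HasLap.comp_convex {n : ℕ} {v : Xn n → ℝ} {x : Xn n} {Λ : ℝ} (hv : HasLap v x Λ)
    (H H1 : ℝ → ℝ) (H2 : ℝ) (h1 : ∀ᶠ y in 𝓝 (v x), HasDerivAt H (H1 y) y)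
    (h2 : HasDerivAt H1 H2 (v x)) (hH2 : 0 ≤ H2) :
    ∃ D, HasLap (fun y => H (v y)) x D ∧ H1 (v x) * Λ ≤ D := by
  obtain ⟨f1, f2, k1, k2, rfl⟩ := hv
  refine ⟨∑ i, (H2 * f1 i 0 * f1 i 0 + H1 (v x) * f2 i),
    ⟨fun i r => H1 (v (x + r • ee i)) * f1 i r, _, ?_, ?_, rfl⟩, ?_⟩
  · intro i
    have hc : Tendsto (fun r : ℝ => v (x + r • ee i)) (𝓝 0) (𝓝 (v x)) := by
      have := (k1 i).self_of_nhds.continuousAt.tendsto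
      simpa using this
    filter_upwards [k1 i, hc.eventually h1] with r hr hr1
    exact hr1.comp r hr
  · intro i
    have a := (k1 i).self_of_nhds
    have h2' : HasDerivAt H1 H2 (v (x + (0:ℝ) • ee i)) := by simpa using h2
    refine HasDerivAt.congr_deriv ((h2'.comp 0 a).fun_mul (k2 i)) ?_
    simp
  · rw [Finset.mul_sum]
    apply Finset.sum_le_sum
    intro i _
    nlinarith [mul_nonneg hH2 (mul_self_nonneg (f1 i 0))]

/-- Profile for the blow-up subsolution. -/
def prof (k τ y : ℝ) : ℝ := y * (1 - k * τ * y ^ k) ^ (-(1/k))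

lemma prof_d1 {k τ y : ℝ} (hk : 0 < k) (hy : 0 < y) (hD : 0 < 1 - k * τ * y ^ k) :
    HasDerivAt (prof k τ) ((1 - k * τ * y ^ k) ^ (-(1/k) - 1)) y := by
  have e1 : HasDerivAt (fun y => 1 - k * τ * y ^ k) (-(k * τ * (k * y ^ (k-1)))) y := by
    simpa using ((hasDerivAt_rpow_const (p := k) (Or.inl hy.ne')).const_mul (k * τ)).const_sub 1
  have e2 := e1.rpow_const (p := -(1/k)) (Or.inl hD.ne')
  refine HasDerivAt.congr_deriv ((hasDerivAt_id y).fun_mul e2) ?_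
  set D := 1 - k * τ * y ^ k with hDd
  have e3 : D ^ (-(1/k)) = D ^ (-(1/k) - 1) * D := by
    rw [rpow_sub_one hD.ne']; field_simp
  have e4 : y ^ (k - 1) * y = y ^ k := by
    rw [rpow_sub_one hy.ne']; field_simp
  have e5 : D + k * τ * y ^ k = 1 := by rw [hDd]; ring
  have e6 : id y * (-(k * τ * (k * y ^ (k-1))) * -(1/k) * D ^ (-(1/k) - 1))
      = D ^ (-(1/k) - 1) * (k * τ * (y ^ (k-1) * y)) := by
    simp only [id]; field_simp
  rw [e6, e4, e3, one_mul, ← mul_add, e5, mul_one]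

lemma prof_d2 {k τ y : ℝ} (hk : 0 < k) (hτ : 0 ≤ τ) (hy : 0 < y) (hD : 0 < 1 - k * τ * y ^ k) :
    ∃ H2, 0 ≤ H2 ∧ HasDerivAt (fun y => (1 - k * τ * y ^ k) ^ (-(1/k) - 1)) H2 y := by
  have e1 : HasDerivAt (fun y => 1 - k * τ * y ^ k) (-(k * τ * (k * y ^ (k-1)))) y := by
    simpa using ((hasDerivAt_rpow_const (p := k) (Or.inl hy.ne')).const_mul (k * τ)).const_sub 1
  have e2 := e1.rpow_const (p := -(1/k) - 1) (Or.inl hD.ne')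
  refine ⟨_, ?_, e2⟩
  have : -(k * τ * (k * y ^ (k-1))) * (-(1/k) - 1) = (k * τ * (k * y ^ (k-1))) * (1/k + 1) := by ring
  rw [this]
  positivity

lemma prof_dt {k : ℝ} {s t : ℝ} (hk : 0 < k) (v : ℝ → ℝ) (v' : ℝ) (hv : HasDerivAt v v' t)
    (hy : 0 < v t) (hD : 0 < 1 - k * (t - s) * v t ^ k) :
    HasDerivAt (fun t => prof k (t - s) (v t))
      ((1 - k * (t - s) * v t ^ k) ^ (-(1/k) - 1) * (v' + v t ^ (k + 1))) t := by
  have a1 := hv.rpow_const (p := k) (Or.inl hy.ne')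
  have a2 : HasDerivAt (fun t => k * (t - s)) k t := by
    simpa using ((hasDerivAt_id t).sub_const s).const_mul k
  have e1 := (a2.fun_mul a1).const_sub 1
  have e2 := e1.rpow_const (p := -(1/k)) (Or.inl hD.ne')
  refine HasDerivAt.congr_deriv (hv.fun_mul e2) ?_
  set D := 1 - k * (t - s) * v t ^ k with hDd
  have e3 : D ^ (-(1/k)) = D ^ (-(1/k) - 1) * D := by
    rw [rpow_sub_one hD.ne']; field_simp
  have e4 : v t ^ (k - 1) * v t = v t ^ k := by
    rw [rpow_sub_one hy.ne']; field_simp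
  have e7 : v t ^ (k + 1) = v t ^ k * v t := rpow_add_one hy.ne' k
  have e6 : v t * (-(k * v t ^ k + k * (t - s) * (v' * k * v t ^ (k-1))) * -(1/k) * D ^ (-(1/k) - 1))
      = D ^ (-(1/k) - 1) * (v t ^ k * v t + k * (t - s) * v' * (v t ^ (k-1) * v t)) := by
    field_simp
  rw [e6, e4, e3, e7]
  have e5 : D + k * (t - s) * v t ^ k = 1 := by rw [hDd]; ring
  linear_combination D ^ (-(1/k) - 1) * v' * e5

lemma prof_pow {k τ y : ℝ} (hk : 0 < k) (hy : 0 < y) (hD : 0 < 1 - k * τ * y ^ k) :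
    prof k τ y ^ (k+1) = (1 - k * τ * y ^ k) ^ (-(1/k) - 1) * y ^ (k+1) := by
  unfold prof
  rw [mul_rpow hy.le (by positivity), ← rpow_mul hD.le, mul_comm]
  congr 2
  field_simp
  ring

lemma pow_lip {q a b M : ℝ} (hq : 1 < q) (ha : 0 ≤ a) (hab : a < b) (hM : b ≤ M) :
    b ^ q ≤ a ^ q + q * M ^ (q-1) * (b - a) := by
  have hb : 0 < b := ha.trans_lt hab
  have h := one_add_mul_self_le_rpow_one_add (s := a/b - 1) (by
    have : 0 ≤ a / b := by positivity
    linarith) hq.le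
  rw [add_sub_cancel, div_rpow ha hb.le, le_div_iff₀ (by positivity)] at h
  have e : b ^ q = b ^ (q-1) * b := by rw [rpow_sub_one hb.ne']; field_simp
  have h2 : (1 + q * (a/b - 1)) * b^q = b^q - q * b^(q-1) * (b - a) := by
    rw [e]; field_simp; ring
  rw [h2] at h
  have h3 : b ^ (q-1) ≤ M ^ (q-1) := rpow_le_rpow hb.le hM (by linarith)
  have h4 : q * b ^ (q-1) * (b - a) ≤ q * M ^ (q-1) * (b - a) := by
    apply mul_le_mul_of_nonneg_right _ (by linarith)
    apply mul_le_mul_of_nonneg_left h3 (by linarith)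
  linarith

lemma blow_core {n : ℕ} {k : ℝ} {u : ℝ → Xn n → ℝ} (hu : Sol n (k+1) u) (hk : 0 < k) (s : ℝ)
    (hs : 0 < s) (c a η T : ℝ) (hc : 0 < c) (ha : 0 < a) (hη : 0 < η) (hT : 0 ≤ T)
    (h0 : ∀ x, c * gam a x ≤ u s x)
    (hφ : ∀ τ ∈ Icc 0 T, k * τ * (max (c * gam (τ + a) (0 : Xn n) - η) 0) ^ k < 1) :
    (max (c * gam (T + a) (0 : Xn n) - η) 0) ^ k ≤
      u (s + T) 0 ^ k * (1 - k * T * (max (c * gam (T + a) (0 : Xn n) - η) 0) ^ k) := by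
  set V : ℝ → Xn n → ℝ := fun t x => c * gam (t - s + a) x - η with hV
  obtain ⟨R, hRp, hR⟩ := gam_far (n := n) a T ha hT (η / c) (by positivity)
  set K := Metric.closedBall (0 : Xn n) R with hK
  have hKc : IsCompact K := isCompact_closedBall _ _
  have hVc : ContinuousOn (Function.uncurry V) (Icc s (s+T) ×ˢ K) := by
    have : ContinuousOn (fun p : ℝ × Xn n => gam (p.1 - s + a) p.2) (Icc s (s+T) ×ˢ K) :=
      gam_continuousOn.comp (f := fun p : ℝ × Xn n => (p.1 - s + a, p.2))
        (by fun_prop) (fun p hp => ⟨by simp only [mem_Ioi]; linarith [hp.1.1], mem_univ _⟩)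
    exact (this.const_mul c).sub continuousOn_const
  have hti : ∀ t ∈ Icc s (s+T), t - s ∈ Icc 0 T := fun t ht =>
    ⟨by linarith [ht.1], by linarith [ht.2]⟩
  have hD : ∀ t ∈ Icc s (s+T), ∀ x, 0 < 1 - k * (t - s) * (max (V t x) 0) ^ k := by
    intro t ht x
    have h1 := hφ _ (hti t ht)
    have h2 := gam_le_zero (n := n) (t := t - s + a) (by linarith [(hti t ht).1]) x
    have h3 : (max (V t x) 0) ^ k ≤ (max (c * gam (t - s + a) (0 : Xn n) - η) 0) ^ k := by
      apply rpow_le_rpow (le_max_right _ _) _ hk.le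
      apply max_le_max_right
      simp only [hV]
      gcongr
    have h4 := mul_le_mul_of_nonneg_left h3 (mul_nonneg hk.le (hti t ht).1)
    linarith
  set w : ℝ → Xn n → ℝ := fun t x =>
    V t x * (1 - k * (t - s) * (max (V t x) 0) ^ k) ^ (-(1/k)) with hw
  have hwc : ContinuousOn (Function.uncurry w) (Icc s (s+T) ×ˢ K) := by
    have h1 : ContinuousOn (fun p : ℝ × Xn n => (max (V p.1 p.2) 0) ^ k) (Icc s (s+T) ×ˢ K) := by
      apply ContinuousOn.rpow_const
      · exact (hVc.sup continuousOn_const)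
      · intro p hp
        right; exact hk.le
    have h2 : ContinuousOn (fun p : ℝ × Xn n => 1 - k * (p.1 - s) * (max (V p.1 p.2) 0) ^ k)
        (Icc s (s+T) ×ˢ K) := by
      apply continuousOn_const.sub
      exact ContinuousOn.mul (by fun_prop) h1
    refine ContinuousOn.mul hVc (h2.rpow_const ?_)
    intro p hp
    left
    exact (hD p.1 hp.1 p.2).ne'
  obtain ⟨M, hM⟩ := (isCompact_Icc.prod hKc).exists_bound_of_continuousOn hwc
  have hcmp := comparison hu K hKc s (s+T) hs (fun t ht => rl_ball hu 0 R t (hs.trans_le ht.1))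
    w hwc ((k+1) * M ^ (k+1-1)) ?_ ?_ ?_ (s+T) ⟨by linarith, le_rfl⟩ 0
    (Metric.mem_closedBall_self hRp.le)
  · have hu0 := hu.nonneg (s+T) (by linarith) 0
    have hDT := hD (s+T) ⟨by linarith, le_rfl⟩ 0
    simp only [hw, hV, add_sub_cancel_left] at hcmp hDT
    rcases le_or_gt (c * gam (T + a) (0 : Xn n) - η) 0 with h | h
    · rw [max_eq_right h] at hDT ⊢
      rw [zero_rpow hk.ne']
      simp only [mul_zero, sub_zero, mul_one]
      positivity
    · rw [max_eq_left h.le] at hcmp hDT ⊢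
      have h2 := rpow_le_rpow (by positivity) hcmp hk.le
      rw [mul_rpow h.le (by positivity), ← rpow_mul hDT.le] at h2
      have e : -(1/k) * k = -1 := by field_simp
      rw [e, rpow_neg_one, ← div_eq_mul_inv, div_le_iff₀ hDT] at h2
      exact h2
  · intro x _
    have := h0 x
    simp only [hw, hV, sub_self, zero_add, mul_zero, zero_mul, sub_zero, one_rpow, mul_one]
    linarith
  · intro t ht x _ hx
    have hx := closedBall_bd 0 R x hx
    rw [sub_zero] at hx
    have h1 := hR x hx _ (hti t ht)
    have h2 : V t x ≤ 0 := by
      rw [le_div_iff₀ hc] at h1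
      simp only [hV]
      linarith
    exact mul_nonpos_of_nonpos_of_nonneg h2 (rpow_nonneg (hD t ht x).le _)
  · intro t ht x hx huw
    have htI : t ∈ Icc s (s+T) := ⟨ht.1.le, ht.2⟩
    have hτ := hti t htI
    have htp : 0 < t := hs.trans ht.1
    have hxK : x ∈ K := interior_subset hx
    have hu0 := hu.nonneg t htp x
    have hVp : 0 < V t x := by
      by_contra h
      push Not at h
      have := mul_nonpos_of_nonpos_of_nonneg h (rpow_nonneg (hD t htI x).le (-(1/k)))
      simp only [hw] at huw
      linarith
    have hDx := hD t htI x
    rw [max_eq_left hVp.le] at hDx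
    have pA : 0 < t - s + a := by linarith [hτ.1]
    have hVt : HasDerivAt (fun t => V t x)
        (c * (gam (t - s + a) x * (‖x‖^2/(4*(t - s + a)^2) - n/(2*(t - s + a))))) t := by
      have sh : HasDerivAt (fun t => t - s + a) 1 t := ((hasDerivAt_id t).sub_const s).add_const a
      have := (((gam_dt pA x).comp t sh).const_mul c).sub_const η
      rw [mul_one] at this
      exact this
    have hVl : HasLap (V t) x
        (c * (gam (t - s + a) x * (‖x‖^2/(4*(t - s + a)^2) - n/(2*(t - s + a))))) :=
      ((gam_lap pA x).const_mul c).sub_const η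
    set Λ := c * (gam (t - s + a) x * (‖x‖^2/(4*(t - s + a)^2) - n/(2*(t - s + a)))) with hΛ
    have hwt := prof_dt hk (fun t => V t x) Λ hVt hVp hDx (s := s)
    have hev1 : (fun t => prof k (t - s) (V t x)) =ᶠ[𝓝 t] fun t => w t x := by
      filter_upwards [hVt.continuousAt.eventually (lt_mem_nhds hVp)] with r hr
      simp only [hw, prof]
      rw [max_eq_left (le_of_lt hr)]
    have hwt' := hwt.congr_of_eventuallyEq hev1.symm
    obtain ⟨H2, hH2, hd2⟩ := prof_d2 hk hτ.1 hVp hDx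
    have hcy : ContinuousAt (fun y : ℝ => 1 - k * (t - s) * y ^ k) (V t x) := by
      apply continuousAt_const.sub
      exact continuousAt_const.mul (continuousAt_rpow_const _ _ (Or.inr hk.le))
    have hevd : ∀ᶠ y in 𝓝 (V t x), HasDerivAt (prof k (t - s))
        ((1 - k * (t - s) * y ^ k) ^ (-(1/k) - 1)) y := by
      filter_upwards [lt_mem_nhds hVp, hcy.eventually (lt_mem_nhds hDx)] with y hy hy2
      exact prof_d1 hk hy hy2
    obtain ⟨Lw, hL, hLle⟩ := hVl.comp_convex (prof k (t - s)) _ H2 hevd hd2 hH2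
    have hev2 : (fun y => prof k (t - s) (V t y)) =ᶠ[𝓝 x] w t := by
      have hcx : ContinuousAt (V t) x :=
        (((gam_continuous (t - s + a)).const_mul c).sub continuous_const).continuousAt
      filter_upwards [hcx.eventually (lt_mem_nhds hVp)] with r hr
      simp only [hw, prof]
      rw [max_eq_left (le_of_lt hr)]
    refine ⟨_, Lw, hwt', hL.congr hev2, ?_⟩
    have hwM : w t x ≤ M := (le_abs_self _).trans (hM (t, x) ⟨htI, hxK⟩)
    have hlip := pow_lip hu.q1 hu0 huw hwM
    have hpw : w t x ^ (k+1) = (1 - k * (t - s) * V t x ^ k) ^ (-(1/k) - 1) * V t x ^ (k+1) := by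
      have he : w t x = prof k (t - s) (V t x) := hev1.self_of_nhds.symm
      rw [he]
      exact prof_pow hk hVp hDx
    rw [hpw] at hlip
    rw [mul_add]
    linarith

lemma blow_bound {n : ℕ} {k : ℝ} {u : ℝ → Xn n → ℝ} (hu : Sol n (k+1) u) (hk : 0 < k) (s : ℝ)
    (hs : 0 < s) (c a T : ℝ) (hc : 0 < c) (ha : 0 < a) (hT : 0 < T)
    (h0 : ∀ x, c * gam a x ≤ u s x) :
    k * T * (c * gam (T + a) (0 : Xn n)) ^ k ≤ 1 := by
  by_contra hcon
  push Not at hcon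
  obtain ⟨η, hη, hηT⟩ : ∃ η > 0, 1 < k * T * (max (c * gam (T + a) (0 : Xn n) - η) 0) ^ k := by
    have hcont : Continuous fun η : ℝ => k * T * (max (c * gam (T + a) (0 : Xn n) - η) 0) ^ k := by
      apply continuous_const.mul
      exact Continuous.rpow_const (by fun_prop) fun _ => Or.inr hk.le
    have h1 : ∀ᶠ η in 𝓝 (0:ℝ), 1 < k * T * (max (c * gam (T + a) (0 : Xn n) - η) 0) ^ k := by
      apply hcont.continuousAt.eventually (lt_mem_nhds _)
      simp only
      rw [sub_zero, max_eq_left]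
      · exact hcon
      · exact (mul_pos hc (gam_pos (by linarith) _)).le
    have h2 : ∀ᶠ η in 𝓝[>] (0:ℝ), 0 < η := self_mem_nhdsWithin
    obtain ⟨η, a, b⟩ := (h2.and (h1.filter_mono nhdsWithin_le_nhds)).exists
    exact ⟨η, a, b⟩
  set m : ℝ → ℝ := fun τ => (max (c * gam (τ + a) (0 : Xn n) - η) 0) ^ k with hm
  have hmc : ∀ τ, 0 ≤ τ → ContinuousAt m τ := by
    intro τ hτ
    have h1 : ContinuousAt (fun τ => gam (τ + a) (0 : Xn n)) τ := by
      have := (gam_dt (n := n) (t := τ + a) (by linarith) 0).continuousAt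
      exact ContinuousAt.comp (f := fun τ => τ + a) this (by fun_prop)
    have h2 : ContinuousAt (fun τ => max (c * gam (τ + a) (0 : Xn n) - η) 0) τ :=
      ((h1.const_mul c).sub continuousAt_const).sup continuousAt_const
    exact h2.rpow_const (Or.inr hk.le)
  have hφc : ∀ τ, 0 ≤ τ → ContinuousAt (fun τ => k * τ * m τ) τ := fun τ hτ =>
    ContinuousAt.mul (by fun_prop) (hmc τ hτ)
  set S : Set ℝ := Icc 0 T ∩ (fun τ => k * τ * m τ) ⁻¹' Ici 1 with hS
  have hSc : IsClosed S := by
    apply ContinuousOn.preimage_isClosed_of_isClosed _ isClosed_Icc isClosed_Ici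
    exact fun τ hτ => (hφc τ hτ.1).continuousWithinAt
  have hScomp : IsCompact S := isCompact_Icc.of_isClosed_subset hSc inter_subset_left
  have hmem := hScomp.sInf_mem ⟨T, ⟨hT.le, le_rfl⟩, hηT.le⟩
  set T1 := sInf S with hT1
  have hlt : ∀ τ, 0 ≤ τ → τ < T1 → k * τ * m τ < 1 := by
    intro τ h0 h1
    by_contra h
    push Not at h
    have : T1 ≤ τ := csInf_le hScomp.bddBelow ⟨⟨h0, h1.le.trans hmem.1.2⟩, h⟩
    linarith
  have hge : 1 ≤ k * T1 * m T1 := hmem.2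
  have hT1p : 0 < T1 := by
    rcases eq_or_lt_of_le hmem.1.1 with h | h
    · rw [← h] at hge
      simp at hge
      linarith
    · exact h
  have hmp : 0 < m T1 := by
    by_contra h
    push Not at h
    have : k * T1 * m T1 ≤ 0 := mul_nonpos_of_nonneg_of_nonpos (by positivity) h
    linarith
  have hineq : ∀ᶠ τ in 𝓝[<] T1, m τ ≤ u (s + τ) 0 ^ k * (1 - k * τ * m τ) := by
    filter_upwards [Ioo_mem_nhdsLT hT1p] with τ hτ
    exact blow_core hu hk s hs c a η τ hc ha hη hτ.1.le h0
      fun r hr => hlt r hr.1 (hr.2.trans_lt hτ.2)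
  have hl1 : Tendsto m (𝓝[<] T1) (𝓝 (m T1)) := (hmc T1 hT1p.le).tendsto.mono_left nhdsWithin_le_nhds
  have hl2 : Tendsto (fun τ => u (s + τ) 0 ^ k * (1 - k * τ * m τ)) (𝓝[<] T1)
      (𝓝 (u (s + T1) 0 ^ k * (1 - k * T1 * m T1))) := by
    apply Tendsto.mono_left _ nhdsWithin_le_nhds
    have h1 : ContinuousAt (fun τ => u (s + τ) 0) T1 :=
      ContinuousAt.comp (g := fun r => u r 0) (f := fun τ => s + τ)
        (hu.dt (s + T1) (by linarith) 0).continuousAt (by fun_prop)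
    exact (h1.rpow_const (Or.inr hk.le)).mul (continuousAt_const.sub (hφc T1 hT1p.le))
  have := le_of_tendsto_of_tendsto hl1 hl2 hineq
  have h3 : u (s + T1) 0 ^ k * (1 - k * T1 * m T1) ≤ 0 :=
    mul_nonpos_of_nonneg_of_nonpos (rpow_nonneg (hu.nonneg _ (by linarith) _) _) (by linarith)
  linarith

lemma gam_zero {n : ℕ} (t : ℝ) : gam t (0 : Xn n) = t ^ (-(n:ℝ)/2) := by
  simp [gam]

/-- Masses of Gaussians lying below `u` at some time. -/
def Msub {n : ℕ} (u : ℝ → Xn n → ℝ) : Set ℝ :=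
  {c | 0 < c ∧ ∃ s > 0, ∃ a > 0, ∀ x, c * gam a x ≤ u s x}

lemma mass_bound {n : ℕ} {k : ℝ} {u : ℝ → Xn n → ℝ} (hu : Sol n (k+1) u) (hk : 0 < k) (s : ℝ)
    (hs : 0 < s) (c a : ℝ) (hc : 0 < c) (ha : 0 < a) (h0 : ∀ x, c * gam a x ≤ u s x)
    (N : ℝ) (hN : 2 * a ≤ N) : k / 2 * c ^ k * N ^ (1 - n * k / 2) ≤ 1 := by
  have hN0 : 0 < N := by linarith
  have h := blow_bound hu hk s hs c a (N - a) hc ha (by linarith) h0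
  rw [sub_add_cancel, gam_zero, mul_rpow hc.le (by positivity), ← rpow_mul hN0.le] at h
  refine le_trans ?_ h
  have e : N ^ (1 - n * k / 2) = N * N ^ (-(n:ℝ)/2 * k) := by
    have h1 : (1:ℝ) - n * k / 2 = -(n:ℝ)/2 * k + 1 := by ring
    rw [h1, rpow_add_one hN0.ne', mul_comm]
  rw [e]
  have : 0 ≤ c ^ k * N ^ (-(n:ℝ)/2 * k) := by positivity
  have h2 : N / 2 ≤ N - a := by linarith
  calc k / 2 * c ^ k * (N * N ^ (-(n:ℝ)/2 * k)) = k * (N / 2) * (c ^ k * N ^ (-(n:ℝ)/2 * k)) := by ring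
    _ ≤ k * (N - a) * (c ^ k * N ^ (-(n:ℝ)/2 * k)) := by gcongr

lemma heat_mono {n : ℕ} {q : ℝ} {u : ℝ → Xn n → ℝ} (hu : Sol n q u) (s : ℝ) (hs : 0 < s)
    (c1 c2 A B T : ℝ) (hc1 : 0 ≤ c1) (hc2 : 0 ≤ c2) (hA : 0 < A) (hB : 0 < B)
    (hT : 0 ≤ T) (h0 : ∀ x, c1 * gam A x + c2 * gam B x ≤ u s x) :
    ∀ x, c1 * gam (T + A) x + c2 * gam (T + B) x ≤ u (s + T) x := by
  have := gauss_compare hu s hs c1 c2 0 A B T hc1 hc2 le_rfl hA hB hT h0 (by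
    intro τ hτ x
    rw [zero_mul]
    exact rpow_nonneg (hu.nonneg _ (by linarith [hτ.1]) _) _)
  simpa using this

lemma gam_ratio {n : ℕ} {N d : ℝ} (hN : 0 < N) (hd : 0 ≤ d) (x : Xn n) :
    ((N + d)/N) ^ (-(n:ℝ)/2) * gam N x ≤ gam (N + d) x := by
  unfold gam
  rw [← mul_assoc, ← mul_rpow (by positivity) hN.le, div_mul_cancel₀ _ hN.ne']
  apply mul_le_mul_of_nonneg_left _ (by positivity)
  apply exp_le_exp.2
  rw [neg_div, neg_div]
  apply neg_le_neg
  apply div_le_div_of_nonneg_left (by positivity) (by positivity)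
  linarith

lemma gam_pow_ge {n : ℕ} {q a b T τ c : ℝ} (hq : 1 < q) (ha : 0 < a) (hb : 0 < b) (hc : 0 < c)
    (hτ : 0 ≤ τ) (hτT : τ ≤ T) (hab : q * (τ + b) ≤ τ + a) (x : Xn n) :
    c ^ q * b ^ ((n:ℝ)/2) * (T + a) ^ (-(n:ℝ)/2 * q) * gam (τ + b) x ≤ (c * gam (τ + a) x) ^ q := by
  have pa : 0 < τ + a := by linarith
  have pb : 0 < τ + b := by linarith
  have pT : 0 < T + a := by linarith
  unfold gam
  rw [mul_rpow hc.le (by positivity), mul_rpow (by positivity) (exp_pos _).le, ← rpow_mul pa.le,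
    ← exp_mul]
  have h1 : b ^ ((n:ℝ)/2) * (τ + b) ^ (-(n:ℝ)/2) ≤ 1 := by
    rw [neg_div, rpow_neg pb.le, ← div_eq_mul_inv, div_le_one (by positivity)]
    exact rpow_le_rpow hb.le (by linarith) (by positivity)
  have h2 : (T + a) ^ (-(n:ℝ)/2 * q) ≤ (τ + a) ^ (-(n:ℝ)/2 * q) := by
    apply rpow_le_rpow_of_nonpos pa (by linarith)
    rw [neg_div, neg_mul]
    have : 0 ≤ (n:ℝ)/2 * q := by positivity
    linarith
  have h3 : exp (-‖x‖^2/(4*(τ+b))) ≤ exp (-‖x‖^2/(4*(τ+a)) * q) := by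
    apply exp_le_exp.2
    have : -‖x‖^2/(4*(τ+a)) * q = -(‖x‖^2 * q/(4*(τ+a))) := by ring
    rw [this, neg_div]
    apply neg_le_neg
    rw [div_le_div_iff₀ (by positivity) (by positivity)]
    have := mul_le_mul_of_nonneg_left hab (sq_nonneg ‖x‖)
    nlinarith
  calc c ^ q * b ^ ((n:ℝ)/2) * (T + a) ^ (-(n:ℝ)/2 * q) *
        ((τ + b) ^ (-(n:ℝ)/2) * exp (-‖x‖^2/(4*(τ+b))))
      = c ^ q * ((b ^ ((n:ℝ)/2) * (τ + b) ^ (-(n:ℝ)/2)) *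
        ((T + a) ^ (-(n:ℝ)/2 * q) * exp (-‖x‖^2/(4*(τ+b))))) := by ring
    _ ≤ c ^ q * (1 * ((τ + a) ^ (-(n:ℝ)/2 * q) * exp (-‖x‖^2/(4*(τ+a)) * q))) := by gcongr
    _ = _ := by rw [one_mul]

lemma growth {n : ℕ} {k : ℝ} {u : ℝ → Xn n → ℝ} (hu : Sol n (k+1) u) (hk : 0 < k)
    (hcrit : (n:ℝ) * k = 2) : ∃ κ > 0, ∀ c ∈ Msub u, c + κ * c ^ (k+1) ∈ Msub u := by
  set β : ℝ := 1 / (2 * (k+1)) with hβ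
  set θ : ℝ := 1 / (2 * k) with hθ
  have hβ0 : 0 < β := by positivity
  have hθ0 : 0 < θ := by positivity
  have hβ1 : β < 1 := by
    rw [hβ, div_lt_one (by positivity)]; linarith
  set κ : ℝ := β ^ ((n:ℝ)/2) * (θ + 1) ^ (-(n:ℝ)/2 * (k+1)) * θ with hκ
  have hκ0 : 0 < κ := by positivity
  refine ⟨κ/2, by positivity, ?_⟩
  rintro c ⟨hc, s, hs, a, ha, h0⟩
  set b := a * β with hb
  set T := a * θ with hT
  have hb0 : 0 < b := by positivity
  have hT0 : 0 < T := by positivity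
  set l := c ^ (k+1) * b ^ ((n:ℝ)/2) * (T + a) ^ (-(n:ℝ)/2 * (k+1)) with hl
  have hl0 : 0 < l := by positivity
  have hlT : l * T = κ * c ^ (k+1) := by
    have e1 : T + a = a * (θ + 1) := by rw [hT]; ring
    rw [hl, e1, hb, mul_rpow ha.le hβ0.le, mul_rpow ha.le (by positivity), hT, hκ]
    have e2 : a ^ ((n:ℝ)/2) * a ^ (-(n:ℝ)/2 * (k+1)) * a = 1 := by
      rw [← rpow_add ha, ← rpow_add_one ha.ne']
      have : (n:ℝ)/2 + -(n:ℝ)/2 * (k+1) + 1 = 0 := by linarith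
      rw [this, rpow_zero]
    linear_combination c ^ (k+1) * β ^ ((n:ℝ)/2) * (θ + 1) ^ (-(n:ℝ)/2 * (k+1)) * θ * e2
  have h0' : ∀ x, c * gam a x + 0 * gam b x ≤ u s x := fun x => by simpa using h0 x
  have h1 := gauss_compare hu s hs c 0 l a b T hc.le le_rfl hl0.le ha hb0 hT0.le h0' (by
    intro τ hτ x
    have h2 := heat_mono hu s hs c 0 a b τ hc.le le_rfl ha hb0 hτ.1 h0' x
    rw [zero_mul, add_zero] at h2
    have hg := gam_pos (n := n) (t := τ + a) (by linarith [hτ.1]) x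
    refine le_trans ?_ (rpow_le_rpow (by positivity) h2 (by linarith))
    refine gam_pow_ge (by linarith) ha hb0 hc hτ.1 hτ.2 ?_ x
    have e1 : (k+1) * b = a / 2 := by rw [hb, hβ]; field_simp
    have e2 : k * T = a / 2 := by rw [hT, hθ]; field_simp
    have e3 := mul_le_mul_of_nonneg_left hτ.2 hk.le
    linarith)
  rw [zero_add, hlT] at h1
  set d := a - b with hd
  have hd0 : 0 ≤ d := by
    rw [hd, hb]; nlinarith
  have hlim : Tendsto (fun N : ℝ => c * ((N + d)/N) ^ (-(n:ℝ)/2)) atTop (𝓝 c) := by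
    have e1 : Tendsto (fun N : ℝ => (N + d)/N) atTop (𝓝 1) := by
      have : Tendsto (fun N : ℝ => 1 + d / N) atTop (𝓝 (1 + 0)) :=
        tendsto_const_nhds.add (tendsto_const_nhds.div_atTop tendsto_id)
      rw [add_zero] at this
      refine this.congr' ?_
      filter_upwards [eventually_gt_atTop 0] with N hN
      field_simp
    have e2 := (e1.rpow_const (p := -(n:ℝ)/2) (Or.inl one_ne_zero)).const_mul c
    simpa using e2
  have hm : 0 < κ * c ^ (k+1) := by positivity
  obtain ⟨N, hN1, hN2⟩ := ((hlim.eventually (lt_mem_nhds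
    (show c - κ * c ^ (k+1) / 2 < c by linarith))).and (eventually_ge_atTop (T + b))).exists
  have hN0 : 0 < N := by linarith
  refine ⟨by positivity, s + T + (N - (T + b)), by linarith, N, hN0, fun x => ?_⟩
  have h3 := heat_mono hu (s + T) (by linarith) c (κ * c ^ (k+1)) (T + a) (T + b) (N - (T + b)) hc.le
    hm.le (by linarith) (by linarith) (by linarith) h1 x
  have e1 : N - (T + b) + (T + a) = N + d := by rw [hd]; ring
  have e2 : N - (T + b) + (T + b) = N := by ring
  rw [e1, e2] at h3
  have h4 := mul_le_mul_of_nonneg_left (gam_ratio hN0 hd0 x) hc.le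
  have h5 := mul_le_mul_of_nonneg_right hN1.le (gam_pos hN0 x).le
  nlinarith

lemma no_mass {n : ℕ} {k : ℝ} {u : ℝ → Xn n → ℝ} (hu : Sol n (k+1) u) (hk : 0 < k)
    (hle : (n:ℝ) * k ≤ 2) : ¬ (Msub u).Nonempty := by
  intro hne
  rcases eq_or_lt_of_le hle with hcrit | hsub
  · have hbd : BddAbove (Msub u) := by
      refine ⟨(2 / k) ^ (1/k), ?_⟩
      rintro c ⟨hc, s, hs, a, ha, h0⟩
      have h := mass_bound hu hk s hs c a hc ha h0 (2*a) le_rfl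
      rw [hcrit] at h
      norm_num at h
      have h2 : c ^ k ≤ 2 / k := by
        rw [le_div_iff₀ hk]; linarith
      have h3 := rpow_le_rpow (by positivity) h2 (show 0 ≤ 1/k by positivity)
      rwa [← rpow_mul hc.le, mul_one_div_cancel hk.ne', rpow_one] at h3
    obtain ⟨κ, hκ, hg⟩ := growth hu hk hcrit
    obtain ⟨c0, hc0⟩ := hne
    set C := sSup (Msub u) with hC
    have hC0 : 0 < C := hc0.1.trans_le (le_csSup hbd hc0)
    have hpos : 0 < κ * (C/2) ^ (k+1) := by positivity
    obtain ⟨c, hcM, hc⟩ := exists_lt_of_lt_csSup ⟨c0, hc0⟩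
      (show max (C/2) (C - κ * (C/2) ^ (k+1)) < C from max_lt (by linarith) (by linarith))
    have h1 : C/2 < c := (le_max_left _ _).trans_lt hc
    have h2 : C - κ * (C/2) ^ (k+1) < c := (le_max_right _ _).trans_lt hc
    have h3 : (C/2) ^ (k+1) ≤ c ^ (k+1) := rpow_le_rpow (by positivity) h1.le (by linarith)
    have h4 := le_csSup hbd (hg c hcM)
    have h5 := mul_le_mul_of_nonneg_left h3 hκ.le
    linarith
  · obtain ⟨c, hc, s, hs, a, ha, h0⟩ := hne
    have hck : 0 < c ^ k := by positivity
    have hp : 0 < 1 - (n:ℝ) * k / 2 := by linarith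
    have ht := (tendsto_rpow_atTop hp).const_mul_atTop (show 0 < k / 2 * c ^ k by positivity)
    obtain ⟨N, hN1, hN2⟩ := ((ht.eventually_gt_atTop 1).and (eventually_ge_atTop (2*a))).exists
    have := mass_bound hu hk s hs c a hc ha h0 N hN2
    linarith

/-- Fujita's theorem.  For `1 < q ≤ 1 + 2/n` there is no
non-trivial non-negative entire classical solution of `u_t ≥ Δu + u^q`
on `(0,∞) × ℝⁿ`. -/
theorem fujita_theorem
    (n : ℕ) (hn : 1 ≤ n) (q : ℝ) (hq1 : 1 < q) (hq2 : q ≤ 1 + 2 / n)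
    (u : ℝ → Xn n → ℝ)
    (hu_nonneg : ∀ t, 0 < t → ∀ x, 0 ≤ u t x)
    -- `u` is C¹ in `t`
    (hu_t : ∀ x, ContDiffOn ℝ 1 (fun t => u t x) (Set.Ioi (0 : ℝ)))
    -- `u` is C² in `x`
    (hu_x : ∀ t, 0 < t → ContDiff ℝ 2 (fun x => u t x))
    -- the pointwise differential inequality `∂u/∂t ≥ Δu + u^q`
    (hineq : ∀ t, 0 < t → ∀ x : Xn n,
      deriv (fun s => u s x) t ≥ laplacian (u t) x + u t x ^ q) :
    ∀ t, 0 < t → ∀ x, u t x = 0 := by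
  intro t ht x
  by_contra hne
  obtain ⟨k, rfl⟩ : ∃ k, q = k + 1 := ⟨q - 1, by ring⟩
  have hk : 0 < k := by linarith
  have hsol : Sol n (k+1) u :=
    { q1 := hq1
      nonneg := hu_nonneg
      dt := fun t ht x => ((hu_t x).differentiableOn (by norm_num)).differentiableAt (Ioi_mem_nhds ht)
      c2 := hu_x
      ineq := hineq }
  have hpos : 0 < u t x := lt_of_le_of_ne (hu_nonneg t ht x) (Ne.symm hne)
  obtain ⟨s, hs, a, ha, c, hc, h⟩ := gauss_lower hsol t ht x hpos
  have hn0 : (0:ℝ) < n := by exact_mod_cast hn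
  refine no_mass hsol hk ?_ ⟨c, hc, s, hs, a, ha, h⟩
  have h2 : k ≤ 2 / n := by linarith
  rw [le_div_iff₀ hn0] at h2
  linarith
end
end
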